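/- arXiv:1805.09956 — 4 statements merged into one kernel-verified Lean document; each statement's English description precedes it below -/
import Mathlib

section
/- Let G be the ℓ×ℓ grid graph with n = ℓ² vertices, where log₂ n ≥ 2²⁷. Let M be a set of demand pairs all of whose sources lie on the top row R* of G, let d ≥ 1 be an integer, and let Q be a d-canonical family of squares of G none of whose squares intersects R*. Let M̂ ⊆ M be a subset of demand pairs such that (i) there is a set of pairwise node-disjoint paths in G routing all demand pairs of M̂, and (ii) for every (s,t) ∈ M̂ there is a square Q ∈ Q with t ∈ Q. Then there exists a subset M̂' ⊆ M̂ with |M̂'| ≥ |M̂|/(log₂ n)⁶ such that every square Q ∈ Q has the 1-shadow property with respect to M̂'. -/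
/-!
The paths of a routing are disjoint, so planarity restricts how the sources of two squares can
interleave on the top row. If sources `a < b < c < e` belong alternately to the squares `Q` and
`R`, then one of the four paths enters the square it does not belong to: otherwise the paths of `a`
and `c` joined inside `Q`, and those of `b` and `e` joined inside `R`, would be disjoint
(`walks_meet`, proved by counting crossings with a ray modulo 2). A square of side `d` has at most
`4 * d` perimeter vertices, so at most `4 * d` paths enter it (`exists_perimeter`).

These two facts are all the selection needs. With `L = ⌊log₂ ℓ⌋`, restrict to squares whose number
of pairs lies in one dyadic range, and trim each to exactly `8 * h` pairs (`select`); this costs a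
factor of order `L`. Rank the sources from left to right and cut the ranks into blocks of length
`β * d`, where `β = 256 * (L + 1)`. A square with `h` sources in a single block keeps those. Any
other square has `h` sources in each of the three parts cut out by some pair of block boundaries
taken from a short list (`exists_sepPair`), and a fixed pair of boundaries can serve at most
`8 * d / h` squares (`card_common_separators`), because squares with common separators alternate
many times. Hence such squares are at most half of all. Finally only one residue class of ranks
modulo `β` is kept, so that every block, and with it every shadow, contains at most `d` selected
sources (`select_uniform`). The total loss `8192 * (L + 1) ^ 2` is at most `(log₂ n) ^ 6`.
-/

open Finset

abbrev Vtx := ℕ × ℕ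
abbrev DPair := Vtx × Vtx

/-- The grid graph on rows `r₁..r₂` and columns `c₁..c₂` (vertices outside are isolated). -/
def rectGrid (r₁ r₂ c₁ c₂ : ℕ) : SimpleGraph Vtx :=
  SimpleGraph.fromRel (fun u v =>
    r₁ ≤ u.1 ∧ u.1 ≤ r₂ ∧ c₁ ≤ u.2 ∧ u.2 ≤ c₂ ∧
    r₁ ≤ v.1 ∧ v.1 ≤ r₂ ∧ c₁ ≤ v.2 ∧ v.2 ≤ c₂ ∧
    ((u.1 = v.1 ∧ u.2 + 1 = v.2) ∨ (u.2 = v.2 ∧ u.1 + 1 = v.1)))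

/-- The ℓ×ℓ grid graph. -/
def gridG (ℓ : ℕ) : SimpleGraph Vtx := rectGrid 1 ℓ 1 ℓ

/-- The demand pairs of `M` can be simultaneously routed via node-disjoint paths in `G`. -/
def NodeDisjointRoutable {V : Type*} (G : SimpleGraph V) (M : Finset (V × V)) : Prop :=
  ∃ P : ∀ m : {m // m ∈ M}, G.Walk m.val.1 m.val.2,
    (∀ m, (P m).IsPath) ∧
    ∀ m m' : {m // m ∈ M}, m ≠ m' → ∀ x, x ∈ (P m).support → x ∉ (P m').support

def OnTopRow (ℓ : ℕ) (v : Vtx) : Prop := v.1 = 1 ∧ 1 ≤ v.2 ∧ v.2 ≤ ℓ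

def OnBoundary (ℓ : ℕ) (v : Vtx) : Prop :=
  1 ≤ v.1 ∧ v.1 ≤ ℓ ∧ 1 ≤ v.2 ∧ v.2 ≤ ℓ ∧ (v.1 = 1 ∨ v.1 = ℓ ∨ v.2 = 1 ∨ v.2 = ℓ)

def DistinctSources (M : Finset DPair) : Prop := ∀ m ∈ M, ∀ m' ∈ M, m.1 = m'.1 → m = m'
def DistinctDests (M : Finset DPair) : Prop := ∀ m ∈ M, ∀ m' ∈ M, m.2 = m'.2 → m = m'

noncomputable def lg (n : ℕ) : ℝ := Real.logb 2 n

def IsIntervalIn (W : ℕ) (I : Finset ℕ) : Prop :=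
  ∃ a b : ℕ, 1 ≤ a ∧ a ≤ b ∧ b ≤ W ∧ I = Finset.Icc a b

def IntSeparated (d : ℕ) (I J : Finset ℕ) : Prop :=
  ∀ i ∈ I, ∀ j ∈ J, (d : ℤ) < |(i : ℤ) - (j : ℤ)|

def IsCanonicalIntervals (W d : ℕ) (Is : Finset (Finset ℕ)) : Prop :=
  (∀ I ∈ Is, IsIntervalIn W I ∧ I.card = d) ∧
    ∀ I ∈ Is, ∀ J ∈ Is, I ≠ J → IntSeparated d I J

abbrev SquareSpec := Finset ℕ × Finset ℕ

def memSquare (v : Vtx) (Q : SquareSpec) : Prop := v.1 ∈ Q.1 ∧ v.2 ∈ Q.2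

instance (v : Vtx) (Q : SquareSpec) : Decidable (memSquare v Q) := by
  unfold memSquare; infer_instance

def IsCanonicalSquares (W d : ℕ) (Qs : Finset SquareSpec) : Prop :=
  ∃ I₁ I₂ : Finset (Finset ℕ),
    IsCanonicalIntervals W d I₁ ∧ IsCanonicalIntervals W d I₂ ∧ Qs = I₁ ×ˢ I₂

/-- The number of sources of `M` lying on the shadow of the square `Q` with respect to `M`,
i.e. on the shortest sub-path of the top row containing all sources of pairs of `M` whose
destination lies in `Q`. -/
def shadowCount (M : Finset DPair) (Q : SquareSpec) : ℕ :=
  (M.filter (fun m => ∃ m₁ ∈ M, memSquare m₁.2 Q ∧ ∃ m₂ ∈ M, memSquare m₂.2 Q ∧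
      m₁.1.2 ≤ m.1.2 ∧ m.1.2 ≤ m₂.1.2)).card

/-- The square `Q` (of side `d`) has the β-shadow property with respect to `M`. -/
def HasShadowProp (β : ℝ) (d : ℕ) (M : Finset DPair) (Q : SquareSpec) : Prop :=
  (shadowCount M Q : ℝ) ≤ β * d

/-! ### Planarity of the grid -/

lemma gridG_adj {ℓ : ℕ} {x y : Vtx} (h : (gridG ℓ).Adj x y) :
    1 ≤ x.1 ∧ 1 ≤ y.1 ∧
      ((x.1 = y.1 ∧ (x.2 + 1 = y.2 ∨ y.2 + 1 = x.2)) ∨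
        (x.2 = y.2 ∧ (x.1 + 1 = y.1 ∨ y.1 + 1 = x.1))) := by
  simp only [gridG, rectGrid, SimpleGraph.fromRel_adj] at h
  omega

lemma gridG_adj_right {ℓ i j : ℕ} (hi : 1 ≤ i) (hi' : i ≤ ℓ) (hj : 1 ≤ j) (hj' : j + 1 ≤ ℓ) :
    (gridG ℓ).Adj (i, j) (i, j + 1) := by
  simp only [gridG, rectGrid, SimpleGraph.fromRel_adj]
  exact ⟨by simp, Or.inl ⟨hi, hi', hj, by omega, hi, hi', by omega, hj', Or.inl (by simp)⟩⟩

lemma gridG_adj_down {ℓ i j : ℕ} (hi : 1 ≤ i) (hi' : i + 1 ≤ ℓ) (hj : 1 ≤ j) (hj' : j ≤ ℓ) :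
    (gridG ℓ).Adj (i, j) (i + 1, j) := by
  simp only [gridG, rectGrid, SimpleGraph.fromRel_adj]
  exact ⟨by simp, Or.inl ⟨hi, by omega, hj, hj', by omega, hi', hj, hj', Or.inr (by simp)⟩⟩

/-- Whether the step from `x` to `y` passes between columns `j` and `j + 1` strictly below row `i`,
as a number modulo 2. -/
def stepCross (i j : ℕ) (x y : Vtx) : ZMod 2 :=
  if i < x.1 ∧ x.1 = y.1 ∧ ((x.2 = j ∧ y.2 = j + 1) ∨ (y.2 = j ∧ x.2 = j + 1)) then 1 else 0

/-- The parity of the number of times a walk crosses the ray that starts at `(i, j + 1/2)` and goes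
away from the top row. -/
def walkCross {G : SimpleGraph Vtx} (i j : ℕ) : ∀ {u v : Vtx}, G.Walk u v → ZMod 2
  | _, _, .nil => 0
  | u, _, .cons (v := w) _ p => stepCross i j u w + walkCross i j p

lemma walkCross_vertical {ℓ i j : ℕ} {u v : Vtx} (w : (gridG ℓ).Walk u v)
    (h : (i + 1, j) ∉ w.support) : walkCross i j w = walkCross (i + 1) j w := by
  induction w with
  | nil => rfl
  | @cons x y z hxy p ih =>
    simp only [SimpleGraph.Walk.support_cons, List.mem_cons, not_or] at h
    have hy : (i + 1, j) ≠ y := fun e => h.2 (e ▸ p.start_mem_support)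
    simp only [walkCross, ih h.2]
    congr 1
    obtain ⟨x1, x2⟩ := x
    obtain ⟨y1, y2⟩ := y
    have hx := h.1
    simp only [ne_eq, Prod.mk.injEq] at hx hy
    simp only [stepCross]
    split_ifs <;> first | rfl | (exfalso; omega)

/-- The rays at columns `j + 1/2` and `j + 3/2` are crossed with equal parity, up to the end points
of the walk that lie on column `j + 1` below row `i`: the walk can leave that part of the column
only through one of the two rays. -/
lemma walkCross_horizontal {ℓ i j : ℕ} {u v : Vtx} (w : (gridG ℓ).Walk u v)
    (h : (i, j + 1) ∉ w.support) :
    walkCross i j w + walkCross i (j + 1) w =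
      (if u.2 = j + 1 ∧ i < u.1 then 1 else 0) + (if v.2 = j + 1 ∧ i < v.1 then 1 else 0) := by
  induction w with
  | nil => simp [walkCross, CharTwo.add_self_eq_zero]
  | @cons x y z hxy p ih =>
    simp only [SimpleGraph.Walk.support_cons, List.mem_cons, not_or] at h
    have hy : (i, j + 1) ≠ y := fun e => h.2 (e ▸ p.start_mem_support)
    have step : stepCross i j x y + stepCross i (j + 1) x y =
        (if x.2 = j + 1 ∧ i < x.1 then 1 else 0) + (if y.2 = j + 1 ∧ i < y.1 then 1 else 0) := by
      have hadj := gridG_adj hxy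
      obtain ⟨x1, x2⟩ := x
      obtain ⟨y1, y2⟩ := y
      have hx := h.1
      simp only [ne_eq, Prod.mk.injEq] at hx hy hadj
      simp only [stepCross]
      split_ifs <;> first | rfl | (exfalso; omega)
    have ih' := ih h.2
    simp only [walkCross]
    calc _ = (stepCross i j x y + stepCross i (j + 1) x y) +
          (walkCross i j p + walkCross i (j + 1) p) := by ring
      _ = _ := by
        rw [step, ih']
        linear_combination CharTwo.add_self_eq_zero
          (if y.2 = j + 1 ∧ i < y.1 then (1 : ZMod 2) else 0)

lemma walkCross_top {ℓ j : ℕ} {u v : Vtx} (w : (gridG ℓ).Walk u v)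
    (h : (1, j) ∉ w.support) :
    walkCross 1 j w = (if u.2 ≤ j then 1 else 0) + (if v.2 ≤ j then 1 else 0) := by
  induction w with
  | nil => simp [walkCross, CharTwo.add_self_eq_zero]
  | @cons x y z hxy p ih =>
    simp only [SimpleGraph.Walk.support_cons, List.mem_cons, not_or] at h
    have hy : (1, j) ≠ y := fun e => h.2 (e ▸ p.start_mem_support)
    have step : stepCross 1 j x y =
        (if x.2 ≤ j then 1 else 0) + (if y.2 ≤ j then 1 else 0) := by
      have hadj := gridG_adj hxy
      obtain ⟨x1, x2⟩ := x
      obtain ⟨y1, y2⟩ := y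
      have hx := h.1
      simp only [ne_eq, Prod.mk.injEq] at hx hy hadj
      simp only [stepCross]
      split_ifs <;> first | rfl | (exfalso; omega)
    simp only [walkCross, ih h.2, step]
    linear_combination CharTwo.add_self_eq_zero (if y.2 ≤ j then (1 : ZMod 2) else 0)

/-- A walk with both ends in the top row is crossed with the same parity from all vertices of a
walk that is disjoint from it. -/
lemma walkCross_const {ℓ a c : ℕ} (w : (gridG ℓ).Walk (1, a) (1, c)) {u v : Vtx}
    (w' : (gridG ℓ).Walk u v) (h : ∀ x ∈ w'.support, x ∉ w.support) :
    walkCross u.1 u.2 w = walkCross v.1 v.2 w := by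
  induction w' with
  | nil => rfl
  | @cons x y z hxy p ih =>
    have hx := h x (by simp)
    have hy := h y (by simp)
    rw [← ih fun t ht => h t (by simp [ht])]
    have hadj := gridG_adj hxy
    obtain ⟨x1, x2⟩ := x
    obtain ⟨y1, y2⟩ := y
    simp only at hadj ⊢
    have horiz : ∀ i j, 1 ≤ i → (i, j + 1) ∉ w.support →
        walkCross i j w = walkCross i (j + 1) w := by
      intro i j hi hij
      have := walkCross_horizontal w hij
      simp only [show ¬ i < 1 by omega, and_false, if_false, add_zero] at this
      exact CharTwo.add_eq_zero.mp this
    obtain ⟨h1, h2, ⟨h3, h4 | h4⟩ | ⟨h3, h4 | h4⟩⟩ := hadj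
    · subst h3 h4; exact horiz _ _ h1 hy
    · subst h3 h4; exact (horiz _ _ h1 hx).symm
    · subst h3 h4; exact walkCross_vertical w hy
    · subst h3 h4; exact (walkCross_vertical w hx).symm

/-- Two walks whose ends alternate along the top row share a vertex. -/
lemma walks_meet {ℓ a b c e : ℕ} (hab : a < b) (hbc : b < c) (hce : c < e)
    (w : (gridG ℓ).Walk (1, a) (1, c)) (w' : (gridG ℓ).Walk (1, b) (1, e)) :
    ∃ x ∈ w'.support, x ∈ w.support := by
  by_contra hcon
  push Not at hcon
  have h := walkCross_const w w' hcon
  simp only at h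
  rw [walkCross_top w (hcon _ w'.start_mem_support),
    walkCross_top w (hcon _ w'.end_mem_support)] at h
  simp only [show a ≤ b by omega, show ¬ c ≤ b by omega, show a ≤ e by omega,
    show c ≤ e by omega, if_true, if_false] at h
  exact absurd h (by decide)

lemma exists_walk_right {ℓ i j : ℕ} (k : ℕ) (hi : 1 ≤ i) (hi' : i ≤ ℓ) (hj : 1 ≤ j)
    (hj' : j + k ≤ ℓ) : ∃ w : (gridG ℓ).Walk (i, j) (i, j + k),
      ∀ z ∈ w.support, z.1 = i ∧ j ≤ z.2 ∧ z.2 ≤ j + k := by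
  induction k with
  | zero => exact ⟨.nil, by simp⟩
  | succ k ih =>
    obtain ⟨w, hw⟩ := ih (by omega)
    refine ⟨w.concat (gridG_adj_right hi hi' (by omega) (by omega)), fun z hz => ?_⟩
    simp only [SimpleGraph.Walk.support_concat, List.mem_append,
      List.mem_singleton] at hz
    rcases hz with hz | rfl
    · have := hw z hz; omega
    · exact ⟨rfl, by simp only; omega, le_refl _⟩

lemma exists_walk_down {ℓ i j : ℕ} (k : ℕ) (hi : 1 ≤ i) (hi' : i + k ≤ ℓ) (hj : 1 ≤ j)
    (hj' : j ≤ ℓ) : ∃ w : (gridG ℓ).Walk (i, j) (i + k, j),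
      ∀ z ∈ w.support, z.2 = j ∧ i ≤ z.1 ∧ z.1 ≤ i + k := by
  induction k with
  | zero => exact ⟨.nil, by simp⟩
  | succ k ih =>
    obtain ⟨w, hw⟩ := ih (by omega)
    refine ⟨w.concat (gridG_adj_down (by omega) (by omega) hj hj'), fun z hz => ?_⟩
    simp only [SimpleGraph.Walk.support_concat, List.mem_append,
      List.mem_singleton] at hz
    rcases hz with hz | rfl
    · have := hw z hz; omega
    · exact ⟨rfl, by simp only; omega, le_refl _⟩

/-- Squares are connected. -/
lemma exists_walk_in_square {ℓ : ℕ} {Q : SquareSpec} (h1 : IsIntervalIn ℓ Q.1)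
    (h2 : IsIntervalIn ℓ Q.2) {x y : Vtx} (hx : memSquare x Q) (hy : memSquare y Q) :
    ∃ w : (gridG ℓ).Walk x y, ∀ z ∈ w.support, memSquare z Q := by
  obtain ⟨Q1, Q2⟩ := Q
  obtain ⟨x1, x2⟩ := x
  obtain ⟨y1, y2⟩ := y
  obtain ⟨a, b, ha, hab, hb, rfl⟩ := h1
  obtain ⟨c, e, hc, hce, he, rfl⟩ := h2
  simp only [memSquare, Finset.mem_Icc] at hx hy ⊢
  have hv : ∃ w : (gridG ℓ).Walk (x1, x2) (y1, x2),
      ∀ z ∈ w.support, (a ≤ z.1 ∧ z.1 ≤ b) ∧ c ≤ z.2 ∧ z.2 ≤ e := by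
    rcases le_total x1 y1 with h | h
    · obtain ⟨k, rfl⟩ := Nat.exists_eq_add_of_le h
      obtain ⟨w, hw⟩ := exists_walk_down (ℓ := ℓ) (i := x1) (j := x2) k (by omega) (by omega)
        (by omega) (by omega)
      exact ⟨w, fun z hz => by have := hw z hz; omega⟩
    · obtain ⟨k, rfl⟩ := Nat.exists_eq_add_of_le h
      obtain ⟨w, hw⟩ := exists_walk_down (ℓ := ℓ) (i := y1) (j := x2) k (by omega) (by omega)
        (by omega) (by omega)
      exact ⟨w.reverse, fun z hz => by
        have := hw z (by simpa using hz); omega⟩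
  have hr : ∃ w : (gridG ℓ).Walk (y1, x2) (y1, y2),
      ∀ z ∈ w.support, (a ≤ z.1 ∧ z.1 ≤ b) ∧ c ≤ z.2 ∧ z.2 ≤ e := by
    rcases le_total x2 y2 with h | h
    · obtain ⟨k, rfl⟩ := Nat.exists_eq_add_of_le h
      obtain ⟨w, hw⟩ := exists_walk_right (ℓ := ℓ) (i := y1) (j := x2) k (by omega) (by omega)
        (by omega) (by omega)
      exact ⟨w, fun z hz => by have := hw z hz; omega⟩
    · obtain ⟨k, rfl⟩ := Nat.exists_eq_add_of_le h
      obtain ⟨w, hw⟩ := exists_walk_right (ℓ := ℓ) (i := y1) (j := y2) k (by omega) (by omega)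
        (by omega) (by omega)
      exact ⟨w.reverse, fun z hz => by
        have := hw z (by simpa using hz); omega⟩
  obtain ⟨w, hw⟩ := hv
  obtain ⟨w', hw'⟩ := hr
  refine ⟨w.append w', fun z hz => ?_⟩
  rw [SimpleGraph.Walk.mem_support_append_iff] at hz
  exact hz.elim (hw z) (hw' z)

/-- The perimeter of a square of side `d` has at most `4 * d` vertices, and every walk that meets
the square from outside uses one of them. -/
lemma exists_perimeter {ℓ d : ℕ} {Q : SquareSpec} (h1 : IsIntervalIn ℓ Q.1)
    (h2 : IsIntervalIn ℓ Q.2) (hc1 : Q.1.card = d) (hc2 : Q.2.card = d) :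
    ∃ B : Finset Vtx, #B ≤ 4 * d ∧ ∀ {u v : Vtx} (w : (gridG ℓ).Walk u v), ¬ memSquare u Q →
      (∃ x ∈ w.support, memSquare x Q) → ∃ x ∈ w.support, x ∈ B := by
  obtain ⟨Q1, Q2⟩ := Q
  obtain ⟨a, b, ha, hab, hb, rfl⟩ := h1
  obtain ⟨c, e, hc, hce, he, rfl⟩ := h2
  simp only at hc1 hc2
  refine ⟨({a} ×ˢ Finset.Icc c e ∪ {b} ×ˢ Finset.Icc c e) ∪
    (Finset.Icc a b ×ˢ {c} ∪ Finset.Icc a b ×ˢ {e}), ?_, ?_⟩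
  · refine (Finset.card_union_le _ _).trans ?_
    have l1 := Finset.card_union_le ({a} ×ˢ Finset.Icc c e) ({b} ×ˢ Finset.Icc c e)
    have l2 := Finset.card_union_le (Finset.Icc a b ×ˢ {c}) (Finset.Icc a b ×ˢ {e})
    simp only [Finset.card_product, Finset.card_singleton, hc1, hc2] at l1 l2
    omega
  · intro u v w
    induction w with
    | nil =>
      rintro hu ⟨x, hx, hxQ⟩
      simp only [SimpleGraph.Walk.support_nil, List.mem_singleton] at hx
      exact absurd (hx ▸ hxQ) hu
    | @cons x y z hxy p ih =>
      rintro hu ⟨t, ht, htQ⟩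
      by_cases hy : memSquare y (Finset.Icc a b, Finset.Icc c e)
      · refine ⟨y, by simp, ?_⟩
        have hadj := gridG_adj hxy
        simp only [memSquare, Finset.mem_Icc] at hu hy
        simp only [Finset.mem_union, Finset.mem_product, Finset.mem_singleton, Finset.mem_Icc]
        omega
      · have ht' : t ∈ p.support := by
          simp only [SimpleGraph.Walk.support_cons, List.mem_cons] at ht
          exact ht.resolve_left fun e => hu (e ▸ htQ)
        obtain ⟨r, hr, hrB⟩ := ih hy ⟨t, ht', htQ⟩
        exact ⟨r, by simp [hr], hrB⟩

/-! ### Counting squares that are spread out -/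

section Counting

open scoped Classical in
/-- If every square of `F` has at least `h` pairs in each of the three ranges `g < p`,
`p ≤ g < q`, `q ≤ g`, then any two of them interleave robustly: whichever fewer than `h` pairs are
discarded, an alternating quadruple survives. Each two squares therefore account for `h` incidences
between paths and squares, while one square meets at most `4 * d` paths. -/
lemma card_common_separators {α σ : Type*} (M : Finset α) (sq : α → σ) (hits : α → σ → Prop)
    (col g : α → ℕ) (d h p q : ℕ) (F : Finset σ)
    (hcol : ∀ a ∈ M, ∀ b ∈ M, col a = col b → a = b)
    (hg : ∀ a ∈ M, ∀ b ∈ M, g a < g b → col a < col b)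
    (hself : ∀ m ∈ M, hits m (sq m))
    (hcap : ∀ Q, #{m ∈ M | hits m Q} ≤ 4 * d)
    (hcross : ∀ a ∈ M, ∀ b ∈ M, ∀ c ∈ M, ∀ e ∈ M, col a < col b → col b < col c →
      col c < col e → sq a = sq c → sq b = sq e → sq a ≠ sq b →
      hits a (sq b) ∨ hits c (sq b) ∨ hits b (sq a) ∨ hits e (sq a))
    (hX : ∀ Q ∈ F, h ≤ #{m ∈ M | sq m = Q ∧ g m < p})
    (hY : ∀ Q ∈ F, h ≤ #{m ∈ M | sq m = Q ∧ p ≤ g m ∧ g m < q})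
    (hZ : ∀ Q ∈ F, h ≤ #{m ∈ M | sq m = Q ∧ q ≤ g m}) :
    h * #F ≤ 8 * d := by
  set H : σ → σ → ℕ := fun Q Q' => #{m ∈ M | sq m = Q ∧ hits m Q'} with hH
  have avoid : ∀ Q Q' (A : Finset α), (∀ m ∈ A, m ∈ M ∧ sq m = Q) → H Q Q' < #A →
      ∃ m ∈ A, ¬ hits m Q' := by
    intro Q Q' A hA hlt
    by_contra hcon
    push Not at hcon
    refine absurd (Finset.card_le_card ?_) (not_le.mpr hlt)
    intro m hm
    rw [Finset.mem_filter]
    exact ⟨(hA m hm).1, (hA m hm).2, hcon m hm⟩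
  have pair : ∀ Q ∈ F, ∀ Q' ∈ F, h ≤ H Q Q' + H Q' Q := by
    intro Q hQ Q' hQ'
    by_cases hne : Q = Q'
    · subst hne
      have : h ≤ H Q Q := by
        refine (hX Q hQ).trans (Finset.card_le_card ?_)
        intro m hm
        simp only [Finset.mem_filter] at hm ⊢
        exact ⟨hm.1, hm.2.1, hm.2.1 ▸ hself m hm.1⟩
      omega
    by_contra hlt
    have hlt1 : H Q Q' < h := by omega
    have hlt2 : H Q' Q < h := by omega
    obtain ⟨x, hx, hxn⟩ := avoid Q Q' _
      (fun m hm => by rw [Finset.mem_filter] at hm; exact ⟨hm.1, hm.2.1⟩)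
      (hlt1.trans_le (hX Q hQ))
    obtain ⟨y, hy, hyn⟩ := avoid Q Q' _
      (fun m hm => by rw [Finset.mem_filter] at hm; exact ⟨hm.1, hm.2.1⟩)
      (hlt1.trans_le (hY Q hQ))
    obtain ⟨z, hz, hzn⟩ := avoid Q Q' _
      (fun m hm => by rw [Finset.mem_filter] at hm; exact ⟨hm.1, hm.2.1⟩)
      (hlt1.trans_le (hZ Q hQ))
    obtain ⟨x', hx', hxn'⟩ := avoid Q' Q _
      (fun m hm => by rw [Finset.mem_filter] at hm; exact ⟨hm.1, hm.2.1⟩)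
      (hlt2.trans_le (hX Q' hQ'))
    obtain ⟨y', hy', hyn'⟩ := avoid Q' Q _
      (fun m hm => by rw [Finset.mem_filter] at hm; exact ⟨hm.1, hm.2.1⟩)
      (hlt2.trans_le (hY Q' hQ'))
    obtain ⟨z', hz', hzn'⟩ := avoid Q' Q _
      (fun m hm => by rw [Finset.mem_filter] at hm; exact ⟨hm.1, hm.2.1⟩)
      (hlt2.trans_le (hZ Q' hQ'))
    obtain ⟨hx, hxQ, hxp⟩ := Finset.mem_filter.mp hx
    obtain ⟨hx', hxQ', hxp'⟩ := Finset.mem_filter.mp hx'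
    obtain ⟨hy, hyQ, hyp⟩ := Finset.mem_filter.mp hy
    obtain ⟨hy', hyQ', hyp'⟩ := Finset.mem_filter.mp hy'
    obtain ⟨hz, hzQ, hzp⟩ := Finset.mem_filter.mp hz
    obtain ⟨hz', hzQ', hzp'⟩ := Finset.mem_filter.mp hz'
    have nx : col x ≠ col x' := fun e => hne (by rw [← hxQ, ← hxQ', hcol x hx x' hx' e])
    have ny : col y ≠ col y' := fun e => hne (by rw [← hyQ, ← hyQ', hcol y hy y' hy' e])
    have l1 := hg x hx y' hy' (by omega)
    have l2 := hg x' hx' y hy (by omega)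
    have l3 := hg y hy z' hz' (by omega)
    have l4 := hg y' hy' z hz (by omega)
    have key : ∀ a ∈ M, ∀ b ∈ M, ∀ c ∈ M, ∀ e ∈ M, sq a = Q → sq b = Q' → sq c = Q →
        sq e = Q' → ¬ hits a Q' → ¬ hits c Q' → ¬ hits b Q → ¬ hits e Q →
        ¬ (col a < col b ∧ col b < col c ∧ col c < col e) := by
      intro a ha b hb c hc e he h1 h2 h3 h4 n1 n2 n3 n4 ⟨u, v, w⟩
      have := hcross a ha b hb c hc e he u v w (h1.trans h3.symm) (h2.trans h4.symm)
        (by rw [h1, h2]; exact hne)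
      rw [h1, h2] at this
      tauto
    have key' : ∀ a ∈ M, ∀ b ∈ M, ∀ c ∈ M, ∀ e ∈ M, sq a = Q' → sq b = Q → sq c = Q' →
        sq e = Q → ¬ hits a Q → ¬ hits c Q → ¬ hits b Q' → ¬ hits e Q' →
        ¬ (col a < col b ∧ col b < col c ∧ col c < col e) := by
      intro a ha b hb c hc e he h1 h2 h3 h4 n1 n2 n3 n4 ⟨u, v, w⟩
      have := hcross a ha b hb c hc e he u v w (h1.trans h3.symm) (h2.trans h4.symm)
        (by rw [h1, h2]; exact fun e => hne e.symm)
      rw [h1, h2] at this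
      tauto
    -- the two leftmost sources belong to different squares; the near and far ones on the right
    -- complete an alternating quadruple in either order
    rcases lt_or_gt_of_ne nx with hlt' | hlt'
    · exact key x hx x' hx' y hy z' hz' hxQ hxQ' hyQ hzQ' hxn hyn hxn' hzn' ⟨hlt', l2, l3⟩
    · exact key' x' hx' x hx y' hy' z hz hxQ' hxQ hyQ' hzQ hxn' hyn' hxn hzn ⟨hlt', l1, l4⟩
  have cap : ∀ Q', ∑ Q ∈ F, H Q Q' ≤ 4 * d := by
    intro Q'
    refine le_trans ?_ (hcap Q')
    have : ∑ Q ∈ F, H Q Q' = ∑ Q ∈ F, #{m ∈ ({m ∈ M | hits m Q'} : Finset α) | sq m = Q} := by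
      refine Finset.sum_congr rfl fun Q _ => ?_
      simp only [hH, Finset.filter_filter]
      congr 1
      ext m; simp only [Finset.mem_filter]; tauto
    rw [this]
    exact (Finset.sum_card_fiberwise_eq_card_filter _ _ _).trans_le (Finset.card_filter_le _ _)
  have total : (h * #F) * #F ≤ (8 * d) * #F := by
    calc (h * #F) * #F = ∑ Q ∈ F, ∑ Q' ∈ F, h := by
          simp only [Finset.sum_const, smul_eq_mul]; ring
      _ ≤ ∑ Q ∈ F, ∑ Q' ∈ F, (H Q Q' + H Q' Q) :=
          Finset.sum_le_sum fun Q hQ => Finset.sum_le_sum fun Q' hQ' => pair Q hQ Q' hQ'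
      _ = ∑ Q' ∈ F, ∑ Q ∈ F, H Q Q' + ∑ Q ∈ F, ∑ Q' ∈ F, H Q' Q := by
          simp only [Finset.sum_add_distrib]
          rw [Finset.sum_comm]
      _ ≤ ∑ Q' ∈ F, 4 * d + ∑ Q ∈ F, 4 * d := by
          gcongr with Q' _ Q _
          · exact cap Q'
          · exact cap Q
      _ = (8 * d) * #F := by
          simp only [Finset.sum_const, smul_eq_mul]; ring
  rcases Nat.eq_zero_or_pos #F with h0 | h0
  · simp [h0]
  · exact Nat.le_of_mul_le_mul_right total h0

/-- The two separators encoded by `(q, u, s)`: the number `q` together with the multiple of `2 ^ u`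
just below it (at most `q`) if `s` is true, just above it if `s` is false. -/
def sepPair (x : ℕ × ℕ × Bool) : ℕ × ℕ :=
  if x.2.2 then (2 ^ x.2.1 * (x.1 / 2 ^ x.2.1), x.1)
  else (x.1, 2 ^ x.2.1 * (x.1 / 2 ^ x.2.1) + 2 ^ x.2.1)

/-- A cumulative count `c` without jumps of size `h` is cut into three parts of size at least `h`
by one of the `O(m log m)` separator pairs of `sepPair`. One separator is the most 2-divisible
number `P` in the middle range; since `P` is the only multiple of its `2 ^ u` there, it can be
recovered from `u` and any other number of that range. -/
lemma exists_sepPair (c : ℕ → ℕ) (hmono : Monotone c) (m h : ℕ) (h0 : c 0 = 0)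
    (hm : 8 * h ≤ c (m + 1)) (hh : 1 ≤ h) (hjump : ∀ t, c (t + 1) < c t + h) :
    ∃ x : ℕ × ℕ × Bool, 1 ≤ x.1 ∧ x.1 ≤ m ∧ 2 ^ x.2.1 ≤ m ∧ h ≤ c (sepPair x).1 ∧
      c (sepPair x).1 + h ≤ c (sepPair x).2 ∧ c (sepPair x).2 + h ≤ 8 * h := by
  have ex : ∀ i, 1 ≤ i → i ≤ 4 → ∃ t, 1 ≤ t ∧ i * h ≤ c t ∧ c t < i * h + h := by
    intro i hi hi4
    have hE : ∃ t, i * h ≤ c t := ⟨m + 1, le_trans (by nlinarith) hm⟩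
    have hs := Nat.find_spec hE
    have hpos : Nat.find hE ≠ 0 := by
      intro e
      rw [e, h0] at hs
      nlinarith
    obtain ⟨t, ht⟩ := Nat.exists_eq_succ_of_ne_zero hpos
    have hlt : c t < i * h := not_le.mp (Nat.find_min hE (by omega))
    refine ⟨Nat.find hE, by omega, hs, ?_⟩
    have := hjump t
    rw [ht]
    simp only [Nat.succ_eq_add_one]
    omega
  obtain ⟨t1, h11, h12, h13⟩ := ex 1 le_rfl (by norm_num)
  obtain ⟨t4, h41, h42, h43⟩ := ex 4 (by norm_num) le_rfl
  have ht14 : t1 ≤ t4 := by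
    by_contra hlt
    have := hmono (not_le.mp hlt).le
    omega
  have ht4m : t4 ≤ m := by
    by_contra hlt
    have : c (m + 1) ≤ c t4 := hmono (by omega)
    omega
  let T : ℕ → Prop := fun u => ∃ P, t1 ≤ P ∧ P ≤ t4 ∧ 2 ^ u ∣ P
  have hT0 : T 0 := ⟨t1, le_rfl, ht14, by simp⟩
  have hTb : ∀ u, T u → 2 ^ u ≤ t4 := by
    rintro u ⟨P, hP1, hP2, hP3⟩
    exact (Nat.le_of_dvd (by omega) hP3).trans hP2
  classical
  obtain ⟨u, hTu, hmax⟩ : ∃ u, T u ∧ ¬ T (u + 1) := by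
    by_contra hcon
    push Not at hcon
    have hall : ∀ u, T u := fun u => by
      induction u with
      | zero => exact hT0
      | succ k ih => exact hcon k ih
    exact absurd (hTb t4 (hall t4)) (not_le.mpr Nat.lt_two_pow_self)
  have hle := hTb u hTu
  obtain ⟨P, hP1, hP2, k, rfl⟩ := hTu
  -- of two consecutive multiples of `2 ^ u` one is a multiple of `2 ^ (u + 1)`
  have uniq : ∀ k', t1 ≤ 2 ^ u * k' → 2 ^ u * (k' + 1) ≤ t4 → False := by
    intro k' h1 h2
    have h3 : 2 ^ u * k' ≤ 2 ^ u * (k' + 1) := Nat.mul_le_mul_left _ (by omega)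
    rcases Nat.even_or_odd' k' with ⟨r, hr | hr⟩
    · exact hmax ⟨2 ^ u * k', h1, by omega, r, by rw [hr]; ring⟩
    · exact hmax ⟨2 ^ u * (k' + 1), by omega, h2, r + 1, by rw [hr]; ring⟩
  have hpos : 0 < 2 ^ u := by positivity
  have c4 : c (2 ^ u * k) ≤ c t4 := hmono hP2
  have c1 : c t1 ≤ c (2 ^ u * k) := hmono hP1
  by_cases hc : c (2 ^ u * k) < 3 * h
  · have hq : t4 / 2 ^ u = k := by
      have a1 : k ≤ t4 / 2 ^ u := (Nat.le_div_iff_mul_le hpos).2 (by rw [mul_comm]; exact hP2)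
      by_contra hne
      have a2 : 2 ^ u * (k + 1) ≤ t4 :=
        (Nat.mul_le_mul_left _ (by omega : k + 1 ≤ t4 / 2 ^ u)).trans (Nat.mul_div_le _ _)
      exact uniq k hP1 a2
    refine ⟨(t4, u, true), h41, ht4m, hle.trans ht4m, ?_⟩
    simp only [sepPair, hq, if_true]
    omega
  · have hlt : t1 < 2 ^ u * k := by
      by_contra hcon
      have : 2 ^ u * k = t1 := by omega
      rw [this] at hc
      omega
    have hq : 2 ^ u * (t1 / 2 ^ u) + 2 ^ u = 2 ^ u * k := by
      have b1 : 2 ^ u * (t1 / 2 ^ u) ≤ t1 := Nat.mul_div_le _ _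
      have b2 : t1 / 2 ^ u < k := by
        by_contra hcon
        have := Nat.mul_le_mul_left (2 ^ u) (not_lt.mp hcon)
        omega
      have b3 : ¬ t1 / 2 ^ u + 1 < k := by
        intro hcon
        obtain ⟨k', rfl⟩ : ∃ k', k = k' + 1 :=
          Nat.exists_eq_succ_of_ne_zero (Nat.ne_of_gt (Nat.zero_lt_of_lt hcon))
        refine uniq k' ?_ hP2
        have b4 := Nat.lt_mul_div_succ t1 hpos
        have b5 := Nat.mul_le_mul_left (2 ^ u) (Nat.lt_succ_iff.mp hcon)
        exact b4.le.trans b5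
      have b6 : t1 / 2 ^ u + 1 = k := le_antisymm b2 (not_lt.mp b3)
      rw [← b6]; ring
    refine ⟨(t1, u, false), h11, ht14.trans ht4m, hle.trans ht4m, ?_⟩
    simp only [sepPair, hq, Bool.false_eq_true, if_false]
    omega

end Counting

/-! ### Selecting the pairs -/

section Selection

lemma exists_large_fiber {α : Type*} (S : Finset α) (f : α → ℕ) (n : ℕ) (hn : 0 < n)
    (hf : ∀ a ∈ S, f a < n) : ∃ r, #S ≤ n * #{a ∈ S | f a = r} := by
  by_contra hcon
  push Not at hcon
  have h1 : #S = ∑ r ∈ Finset.range n, #{a ∈ S | f a = r} :=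
    Finset.card_eq_sum_card_fiberwise fun a ha => by simpa using hf a ha
  have h2 : ∑ r ∈ Finset.range n, n * #{a ∈ S | f a = r} < ∑ r ∈ Finset.range n, #S :=
    Finset.sum_lt_sum_of_nonempty (by simpa using hn.ne') fun r _ => hcon r
  rw [← Finset.mul_sum, ← h1] at h2
  simp at h2

open scoped Classical in
/-- The selection when every square of `F` has exactly `8 * h` pairs. Sources are ranked from left
to right and the ranks cut into blocks of length `β * d` with `β = 256 * (L + 1)`. A square with
`h` sources in a single block keeps these; the other squares are at most half of all, since each
of the few pairs of separators serves few of them. Keeping one residue class of ranks modulo `β`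
leaves at most `d` sources in every block. -/
lemma select_uniform {α σ : Type*} (M : Finset α) (sq : α → σ) (hits : α → σ → Prop)
    (col : α → ℕ) (d h L : ℕ) (F : Finset σ) (hd : 1 ≤ d) (hh : 1 ≤ h)
    (hcol : ∀ a ∈ M, ∀ b ∈ M, col a = col b → a = b)
    (hself : ∀ m ∈ M, hits m (sq m))
    (hcap : ∀ Q, #{m ∈ M | hits m Q} ≤ 4 * d)
    (hcross : ∀ a ∈ M, ∀ b ∈ M, ∀ c ∈ M, ∀ e ∈ M, col a < col b → col b < col c →
      col c < col e → sq a = sq c → sq b = sq e → sq a ≠ sq b →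
      hits a (sq b) ∨ hits c (sq b) ∨ hits b (sq a) ∨ hits e (sq a))
    (hF : ∀ m ∈ M, sq m ∈ F) (hFc : ∀ Q ∈ F, #{m ∈ M | sq m = Q} = 8 * h)
    (hL : #M < 2 ^ (L + 1)) :
    ∃ M' ⊆ M, h * #F ≤ 512 * (L + 1) * #M' ∧
      ∀ Q, #{m ∈ M' | ∃ m₁ ∈ M', sq m₁ = Q ∧ ∃ m₂ ∈ M', sq m₂ = Q ∧
        col m₁ ≤ col m ∧ col m ≤ col m₂} ≤ d := by
  obtain ⟨β, hβ⟩ : ∃ β, β = 256 * (L + 1) := ⟨_, rfl⟩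
  have hβ0 : 0 < β := by omega
  have hb0 : 0 < β * d := Nat.mul_pos hβ0 hd
  have hMF : #M = 8 * h * #F := by
    rw [Finset.card_eq_sum_card_fiberwise (f := sq) (t := F) (fun m hm => hF m hm),
      Finset.sum_congr rfl hFc]
    simp only [Finset.sum_const, smul_eq_mul]; ring
  let rank : α → ℕ := fun a => #{x ∈ M | col x < col a}
  have rank_mono : ∀ a b, col a ≤ col b → rank a ≤ rank b := fun a b hab =>
    Finset.card_le_card fun x hx => by
      simp only [Finset.mem_filter] at hx ⊢
      exact ⟨hx.1, hx.2.trans_le hab⟩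
  have rank_lt : ∀ a ∈ M, ∀ b, col a < col b → rank a < rank b := fun a ha b hab => by
    refine Finset.card_lt_card ((Finset.ssubset_iff_of_subset ?_).mpr ⟨a, ?_, ?_⟩)
    · intro x hx
      simp only [Finset.mem_filter] at hx ⊢
      exact ⟨hx.1, hx.2.trans hab⟩
    · simp [ha, hab]
    · simp
  have rank_inj : ∀ a ∈ M, ∀ b ∈ M, rank a = rank b → a = b := fun a ha b hb e => by
    refine hcol a ha b hb ?_
    rcases lt_trichotomy (col a) (col b) with hl | hl | hl
    · have := rank_lt a ha b hl; omega
    · exact hl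
    · have := rank_lt b hb a hl; omega
  have rank_le : ∀ a, rank a ≤ #M := fun a => Finset.card_filter_le _ _
  let g : α → ℕ := fun a => rank a / (β * d)
  have g_mono : ∀ a b, col a ≤ col b → g a ≤ g b := fun a b hab =>
    Nat.div_le_div_right (rank_mono a b hab)
  have hg : ∀ a ∈ M, ∀ b ∈ M, g a < g b → col a < col b := fun a _ b _ hlt => by
    by_contra hcon
    have := g_mono b a (not_lt.mp hcon)
    omega
  let good : σ → Prop := fun Q => ∃ v, h ≤ #{m ∈ M | sq m = Q ∧ g m = v}
  obtain ⟨N, hN⟩ : ∃ N, N = #M / (β * d) := ⟨_, rfl⟩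
  have hgN : ∀ a, g a ≤ N := fun a => hN ▸ Nat.div_le_div_right (rank_le a)
  have hNb : N * (β * d) ≤ #M := hN ▸ Nat.div_mul_le_self _ _
  have hNM : N ≤ #M := hN ▸ Nat.div_le_self _ _
  let bad : Finset σ := {Q ∈ F | ¬ good Q}
  -- every bad square is cut by one of the encoded pairs of separators
  have hkey : ∀ Q ∈ bad, ∃ x : ℕ × ℕ × Bool, 1 ≤ x.1 ∧ x.1 ≤ N ∧ 2 ^ x.2.1 ≤ N ∧
      h ≤ #{m ∈ M | sq m = Q ∧ g m < (sepPair x).1} ∧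
      h ≤ #{m ∈ M | sq m = Q ∧ (sepPair x).1 ≤ g m ∧ g m < (sepPair x).2} ∧
      h ≤ #{m ∈ M | sq m = Q ∧ (sepPair x).2 ≤ g m} := by
    intro Q hQ
    obtain ⟨hQF, hQb⟩ := Finset.mem_filter.mp hQ
    have hQb' : ∀ v, #{m ∈ M | sq m = Q ∧ g m = v} < h := fun v => by
      by_contra hcon
      exact hQb ⟨v, not_lt.mp hcon⟩
    obtain ⟨c, hc⟩ : ∃ c : ℕ → ℕ, c = fun t => #{m ∈ M | sq m = Q ∧ g m < t} := ⟨_, rfl⟩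
    have c_mono : Monotone c := fun s t hst => by
      rw [hc]
      refine Finset.card_le_card fun m hm => ?_
      simp only [Finset.mem_filter] at hm ⊢
      exact ⟨hm.1, hm.2.1, hm.2.2.trans_le hst⟩
    have c_zero : c 0 = 0 := by simp [hc]
    have c_top : 8 * h ≤ c (N + 1) := by
      rw [← hFc Q hQF, hc]
      refine Finset.card_le_card fun m hm => ?_
      simp only [Finset.mem_filter] at hm ⊢
      exact ⟨hm.1, hm.2, Nat.lt_succ_of_le (hgN m)⟩
    have c_jump : ∀ t, c (t + 1) < c t + h := fun t => by
      refine lt_of_le_of_lt ?_ (Nat.add_lt_add_left (hQb' t) (c t))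
      rw [hc]
      refine le_trans (Finset.card_le_card fun m hm => ?_) (Finset.card_union_le _ _)
      simp only [Finset.mem_filter, Finset.mem_union] at hm ⊢
      rcases Nat.lt_succ_iff_lt_or_eq.mp hm.2.2 with hl | hl
      · exact Or.inl ⟨hm.1, hm.2.1, hl⟩
      · exact Or.inr ⟨hm.1, hm.2.1, hl⟩
    obtain ⟨x, hx1, hx2, hx3, hx4, hx5, hx6⟩ :=
      exists_sepPair c c_mono N h c_zero c_top hh c_jump
    refine ⟨x, hx1, hx2, hx3, ?_, ?_, ?_⟩
    · rw [hc] at hx4; exact hx4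
    · have : c (sepPair x).2 ≤ c (sepPair x).1 +
          #{m ∈ M | sq m = Q ∧ (sepPair x).1 ≤ g m ∧ g m < (sepPair x).2} := by
        rw [hc]
        refine le_trans (Finset.card_le_card fun m hm => ?_) (Finset.card_union_le _ _)
        simp only [Finset.mem_filter, Finset.mem_union] at hm ⊢
        rcases lt_or_ge (g m) (sepPair x).1 with hl | hl
        · exact Or.inl ⟨hm.1, hm.2.1, hl⟩
        · exact Or.inr ⟨hm.1, hm.2.1, hl, hm.2.2⟩
      omega
    · have : 8 * h ≤ c (sepPair x).2 + #{m ∈ M | sq m = Q ∧ (sepPair x).2 ≤ g m} := by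
        rw [hc, ← hFc Q hQF]
        refine le_trans (Finset.card_le_card fun m hm => ?_) (Finset.card_union_le _ _)
        simp only [Finset.mem_filter, Finset.mem_union] at hm ⊢
        rcases lt_or_ge (g m) (sepPair x).2 with hl | hl
        · exact Or.inl ⟨hm.1, hm.2, hl⟩
        · exact Or.inr ⟨hm.1, hm.2, hl⟩
      omega
  choose! key hkey using hkey
  have hbad : 2 * #bad ≤ #F := by
    let keys : Finset (ℕ × ℕ × Bool) :=
      Finset.Icc 1 N ×ˢ Finset.range (L + 1) ×ˢ Finset.univ
    have hmaps : ∀ Q ∈ bad, key Q ∈ keys := by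
      intro Q hQ
      obtain ⟨h1, h2, h3, -⟩ := hkey Q hQ
      have h4 : (key Q).2.1 < L + 1 :=
        (Nat.pow_lt_pow_iff_right (by norm_num)).mp (h3.trans_lt (hNM.trans_lt hL))
      simp only [keys, Finset.mem_product, Finset.mem_Icc, Finset.mem_range, Finset.mem_univ]
      exact ⟨⟨h1, h2⟩, h4, trivial⟩
    have hfib : ∀ x ∈ keys, h * #{Q ∈ bad | key Q = x} ≤ 8 * d := by
      intro x _
      refine card_common_separators M sq hits col g d h (sepPair x).1 (sepPair x).2 _ hcol hg
        hself hcap hcross ?_ ?_ ?_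
      · intro Q hQ
        obtain ⟨hQ', rfl⟩ := Finset.mem_filter.mp hQ
        exact (hkey Q hQ').2.2.2.1
      · intro Q hQ
        obtain ⟨hQ', rfl⟩ := Finset.mem_filter.mp hQ
        exact (hkey Q hQ').2.2.2.2.1
      · intro Q hQ
        obtain ⟨hQ', rfl⟩ := Finset.mem_filter.mp hQ
        exact (hkey Q hQ').2.2.2.2.2
    have hkc : #keys = N * ((L + 1) * 2) := by simp [keys]
    have e1 : h * #bad ≤ N * ((L + 1) * 2) * (8 * d) := by
      rw [Finset.card_eq_sum_card_fiberwise (f := key) (t := keys) (fun Q hQ => hmaps Q hQ),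
        Finset.mul_sum, ← hkc, ← smul_eq_mul (#keys), ← Finset.sum_const]
      exact Finset.sum_le_sum hfib
    have e2 : (128 * (L + 1) * h) * (2 * #bad) ≤ (128 * (L + 1) * h) * #F := by
      calc (128 * (L + 1) * h) * (2 * #bad) = β * (h * #bad) := by rw [hβ]; ring
        _ ≤ β * (N * ((L + 1) * 2) * (8 * d)) := Nat.mul_le_mul_left _ e1
        _ = (16 * (L + 1)) * (N * (β * d)) := by ring
        _ ≤ (16 * (L + 1)) * #M := Nat.mul_le_mul_left _ hNb
        _ = (128 * (L + 1) * h) * #F := by rw [hMF]; ring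
    exact Nat.le_of_mul_le_mul_left e2 (by positivity)
  let Fg : Finset σ := {Q ∈ F | good Q}
  have hsplit : #Fg + #bad = #F := Finset.card_filter_add_card_filter_not _
  have hv : ∀ Q, ∃ v, good Q → h ≤ #{m ∈ M | sq m = Q ∧ g m = v} := fun Q => by
    by_cases hQ : good Q
    · exact ⟨hQ.choose, fun _ => hQ.choose_spec⟩
    · exact ⟨0, fun hQ' => absurd hQ' hQ⟩
  choose v hv using hv
  let M2 : Finset α := {m ∈ M | sq m ∈ Fg ∧ g m = v (sq m)}
  have hM2 : #Fg * h ≤ #M2 := by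
    rw [Finset.card_eq_sum_card_fiberwise (f := sq) (s := M2) (t := Fg)
      (fun m hm => (Finset.mem_filter.mp hm).2.1), ← smul_eq_mul, ← Finset.sum_const]
    refine Finset.sum_le_sum fun Q hQ => ?_
    refine (hv Q (Finset.mem_filter.mp hQ).2).trans (Finset.card_le_card fun m hm => ?_)
    simp only [M2, Finset.mem_filter] at hm ⊢
    obtain ⟨hm1, rfl, hm2⟩ := hm
    exact ⟨⟨hm1, hQ, hm2⟩, rfl⟩
  obtain ⟨r, hr⟩ := exists_large_fiber M2 (fun m => rank m % β) β hβ0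
    fun m _ => Nat.mod_lt _ hβ0
  refine ⟨{m ∈ M2 | rank m % β = r}, (Finset.filter_subset _ _).trans (Finset.filter_subset _ _),
    ?_, fun Q => ?_⟩
  · have e1 : h * #F ≤ 2 * (#Fg * h) := by nlinarith
    calc h * #F ≤ 2 * (β * #{m ∈ M2 | rank m % β = r}) := by omega
      _ = _ := by rw [hβ]; ring
  · -- a selected pair of the shadow has rank in the block `v Q` and in the residue class `r`
    have hmem : ∀ m ∈ ({m ∈ M2 | rank m % β = r} : Finset α),
        m ∈ M ∧ g m = v (sq m) ∧ rank m % β = r := fun m hm => by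
      simp only [M2, Finset.mem_filter] at hm
      exact ⟨hm.1.1, hm.1.2.2, hm.2⟩
    have hblock : ∀ m ∈ ({m ∈ ({m ∈ M2 | rank m % β = r} : Finset α) |
        ∃ m₁ ∈ ({m ∈ M2 | rank m % β = r} : Finset α), sq m₁ = Q ∧
        ∃ m₂ ∈ ({m ∈ M2 | rank m % β = r} : Finset α), sq m₂ = Q ∧
        col m₁ ≤ col m ∧ col m ≤ col m₂} : Finset α),
        m ∈ M ∧ g m = v Q ∧ rank m % β = r := by
      intro m hm
      obtain ⟨hm, m₁, hm₁, hQ₁, m₂, hm₂, hQ₂, hl₁, hl₂⟩ := Finset.mem_filter.mp hm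
      have k₁ := (hmem m₁ hm₁).2.1
      have k₂ := (hmem m₂ hm₂).2.1
      rw [hQ₁] at k₁
      rw [hQ₂] at k₂
      have b₁ := g_mono _ _ hl₁
      have b₂ := g_mono _ _ hl₂
      exact ⟨(hmem m hm).1, by omega, (hmem m hm).2.2⟩
    calc _ ≤ #(Finset.Ico (v Q * d) (v Q * d + d)) := by
          refine Finset.card_le_card_of_injOn (fun m => rank m / β) ?_ ?_
          · intro m hm
            obtain ⟨-, h2, -⟩ := hblock m hm
            have h3 : rank m / β / d = v Q := by rw [Nat.div_div_eq_div_mul]; exact h2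
            rw [Finset.coe_Ico, Set.mem_Ico]
            have h4 := Nat.div_mul_le_self (rank m / β) d
            have h5 := Nat.lt_div_mul_add (a := rank m / β) (b := d) hd
            rw [h3] at h4 h5
            exact ⟨h4, h5⟩
          · intro m hm m' hm' e
            obtain ⟨h1, -, h2⟩ := hblock m hm
            obtain ⟨h1', -, h2'⟩ := hblock m' hm'
            refine rank_inj m h1 m' h1' ?_
            simp only at e
            rw [← Nat.div_add_mod (rank m) β, ← Nat.div_add_mod (rank m') β, e, h2, h2']
      _ = d := by simp

open scoped Classical in
/-- The selection in general: the squares are first restricted to those whose number of pairs lies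
in a dyadic range `[2 ^ a, 2 ^ (a + 1))`, and each is trimmed to `2 ^ a` pairs. -/
lemma select {α σ : Type*} (M : Finset α) (sq : α → σ) (hits : α → σ → Prop)
    (col : α → ℕ) (d L : ℕ) (hd : 1 ≤ d)
    (hcol : ∀ a ∈ M, ∀ b ∈ M, col a = col b → a = b)
    (hself : ∀ m ∈ M, hits m (sq m))
    (hcap : ∀ Q, #{m ∈ M | hits m Q} ≤ 4 * d)
    (hcross : ∀ a ∈ M, ∀ b ∈ M, ∀ c ∈ M, ∀ e ∈ M, col a < col b → col b < col c →
      col c < col e → sq a = sq c → sq b = sq e → sq a ≠ sq b →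
      hits a (sq b) ∨ hits c (sq b) ∨ hits b (sq a) ∨ hits e (sq a))
    (hL : #M < 2 ^ (L + 1)) :
    ∃ M' ⊆ M, #M ≤ 8192 * (L + 1) ^ 2 * #M' ∧
      ∀ Q, #{m ∈ M' | ∃ m₁ ∈ M', sq m₁ = Q ∧ ∃ m₂ ∈ M', sq m₂ = Q ∧
        col m₁ ≤ col m ∧ col m ≤ col m₂} ≤ d := by
  rcases M.eq_empty_or_nonempty with rfl | ⟨m₀, -⟩
  · exact ⟨∅, subset_rfl, by simp, by simp⟩
  have : Nonempty α := ⟨m₀⟩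
  let k : σ → ℕ := fun Q => #{m ∈ M | sq m = Q}
  obtain ⟨a, ha⟩ := exists_large_fiber M (fun m => Nat.log 2 (k (sq m))) (L + 1) (by omega)
    fun m hm => by
      refine Nat.log_lt_of_lt_pow ?_ ((Finset.card_filter_le _ _).trans_lt hL)
      exact Finset.card_ne_zero_of_mem (Finset.mem_filter.mpr ⟨hm, rfl⟩)
  let M0 : Finset α := {m ∈ M | Nat.log 2 (k (sq m)) = a}
  let F : Finset σ := M0.image sq
  have hk : ∀ Q ∈ F, 2 ^ a ≤ k Q ∧ k Q < 2 ^ (a + 1) := by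
    intro Q hQ
    obtain ⟨m, hm, rfl⟩ := Finset.mem_image.mp hQ
    obtain ⟨hm, hma⟩ := Finset.mem_filter.mp hm
    have hne : k (sq m) ≠ 0 := Finset.card_ne_zero_of_mem (Finset.mem_filter.mpr ⟨hm, rfl⟩)
    exact ⟨hma ▸ Nat.pow_log_le_self 2 hne, hma ▸ Nat.lt_pow_succ_log_self (by norm_num) _⟩
  have hM0 : #M0 ≤ 2 ^ (a + 1) * #F := by
    refine Finset.card_le_mul_card_image _ _ fun Q hQ => ?_
    refine le_trans (Finset.card_le_card fun m hm => ?_) (hk Q hQ).2.le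
    simp only [M0, Finset.mem_filter] at hm ⊢
    exact ⟨hm.1.1, hm.2⟩
  have ha' : #M ≤ (L + 1) * #M0 := ha
  rcases lt_or_ge a 3 with ha3 | ha3
  · -- few pairs per square: one representative each
    have hrep : ∀ Q ∈ F, ∃ m ∈ M, sq m = Q := fun Q hQ => by
      obtain ⟨m, hm, rfl⟩ := Finset.mem_image.mp hQ
      exact ⟨m, (Finset.mem_filter.mp hm).1, rfl⟩
    choose! rep hrepM hrepQ using hrep
    refine ⟨F.image rep, ?_, ?_, fun Q => ?_⟩
    · intro m hm
      obtain ⟨Q, hQ, rfl⟩ := Finset.mem_image.mp hm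
      exact hrepM Q hQ
    · have hc : #(F.image rep) = #F := Finset.card_image_of_injOn fun Q hQ Q' hQ' e => by
        rw [← hrepQ Q hQ, ← hrepQ Q' hQ', e]
      rw [hc]
      have h8 : 2 ^ (a + 1) ≤ 2 ^ 3 := Nat.pow_le_pow_right (by norm_num) (by omega)
      have h9 : #M0 ≤ 8 * #F := hM0.trans (Nat.mul_le_mul_right _ h8)
      have h10 : (L + 1) * #M0 ≤ (L + 1) * (8 * #F) := Nat.mul_le_mul_left _ h9
      have h11 : 0 ≤ (L + 1) * L * #F := by positivity
      nlinarith
    · refine le_trans (Finset.card_le_one.mpr ?_) hd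
      have huniq : ∀ m ∈ ({m ∈ F.image rep | ∃ m₁ ∈ F.image rep, sq m₁ = Q ∧
          ∃ m₂ ∈ F.image rep, sq m₂ = Q ∧ col m₁ ≤ col m ∧ col m ≤ col m₂} : Finset α),
          m = rep Q := by
        intro m hm
        obtain ⟨hm, m₁, hm₁, hQ₁, m₂, hm₂, hQ₂, hl₁, hl₂⟩ := Finset.mem_filter.mp hm
        obtain ⟨R, hR, rfl⟩ := Finset.mem_image.mp hm
        obtain ⟨R₁, hR₁, rfl⟩ := Finset.mem_image.mp hm₁
        obtain ⟨R₂, hR₂, rfl⟩ := Finset.mem_image.mp hm₂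
        rw [hrepQ _ hR₁] at hQ₁
        rw [hrepQ _ hR₂] at hQ₂
        subst hQ₁ hQ₂
        exact hcol _ (hrepM _ hR) _ (hrepM _ hR₁) (le_antisymm hl₂ hl₁)
      intro m hm m' hm'
      rw [huniq m hm, huniq m' hm']
  · obtain ⟨a', rfl⟩ := Nat.exists_eq_add_of_le ha3
    have h8 : 2 ^ (3 + a') = 8 * 2 ^ a' := by rw [pow_add]; norm_num
    have htrim : ∀ Q ∈ F, ∃ S ⊆ ({m ∈ M | sq m = Q} : Finset α), #S = 8 * 2 ^ a' :=
      fun Q hQ => Finset.exists_subset_card_eq (h8 ▸ (hk Q hQ).1)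
    choose! S hS hSc using htrim
    let M1 : Finset α := {m ∈ M | sq m ∈ F ∧ m ∈ S (sq m)}
    have hM1 : M1 ⊆ M := Finset.filter_subset _ _
    obtain ⟨M', hM', hcard, hshadow⟩ := select_uniform M1 sq hits col d (2 ^ a') L F hd
      Nat.one_le_two_pow (fun a ha b hb => hcol a (hM1 ha) b (hM1 hb))
      (fun m hm => hself m (hM1 hm))
      (fun Q => (Finset.card_le_card (Finset.filter_subset_filter _ hM1)).trans (hcap Q))
      (fun a ha b hb c hc e he => hcross a (hM1 ha) b (hM1 hb) c (hM1 hc) e (hM1 he))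
      (fun m hm => (Finset.mem_filter.mp hm).2.1)
      (fun Q hQ => by
        rw [← hSc Q hQ]
        congr 1
        ext m
        simp only [M1, Finset.mem_filter]
        constructor
        · rintro ⟨⟨-, -, hm⟩, rfl⟩
          exact hm
        · intro hm
          obtain ⟨hmM, rfl⟩ := Finset.mem_filter.mp (hS Q hQ hm)
          exact ⟨⟨hmM, hQ, hm⟩, rfl⟩)
      ((Finset.card_le_card hM1).trans_lt hL)
    refine ⟨M', hM'.trans hM1, ?_, hshadow⟩
    calc #M ≤ (L + 1) * #M0 := ha'
      _ ≤ (L + 1) * (2 ^ (3 + a' + 1) * #F) := Nat.mul_le_mul_left _ hM0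
      _ = (L + 1) * 16 * (2 ^ a' * #F) := by rw [pow_succ, h8]; ring
      _ ≤ (L + 1) * 16 * (512 * (L + 1) * #M') := Nat.mul_le_mul_left _ hcard
      _ = 8192 * (L + 1) ^ 2 * #M' := by ring

end Selection

/-! ### The routing and the squares -/

lemma eq_of_common_mem {W d : ℕ} {Is : Finset (Finset ℕ)} (h : IsCanonicalIntervals W d Is)
    {I J : Finset ℕ} (hI : I ∈ Is) (hJ : J ∈ Is) {i : ℕ} (hi : i ∈ I) (hj : i ∈ J) : I = J := by
  by_contra hne
  have := h.2 I hI J hJ hne i hi i hj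
  rw [sub_self, abs_zero] at this
  omega

/-- Two walks `p`, `q` that end in a square, together with a walk inside it, join their starting
points. -/
lemma exists_walk_through {ℓ : ℕ} {Q : SquareSpec} (h1 : IsIntervalIn ℓ Q.1)
    (h2 : IsIntervalIn ℓ Q.2) {s t s' t' : Vtx} (p : (gridG ℓ).Walk s t)
    (q : (gridG ℓ).Walk s' t') (ht : memSquare t Q) (ht' : memSquare t' Q) :
    ∃ w : (gridG ℓ).Walk s s',
      ∀ z ∈ w.support, z ∈ p.support ∨ z ∈ q.support ∨ memSquare z Q := by
  obtain ⟨r, hr⟩ := exists_walk_in_square h1 h2 ht ht'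
  refine ⟨p.append (r.append q.reverse), fun z hz => ?_⟩
  simp only [SimpleGraph.Walk.mem_support_append_iff, SimpleGraph.Walk.support_reverse,
    List.mem_reverse] at hz
  rcases hz with hz | hz | hz
  · exact Or.inl hz
  · exact Or.inr (Or.inr (hr z hz))
  · exact Or.inr (Or.inl hz)

/-- The loss factor of the selection, with `L` the integer part of `log₂ ℓ`, is at most
`(log₂ n) ^ 6`. -/
lemma loss_le {ℓ : ℕ} (hlog : (2 : ℝ) ^ (27 : ℕ) ≤ lg (ℓ * ℓ)) :
    (8192 * ((Nat.log 2 ℓ : ℝ) + 1) ^ 2) ≤ (lg (ℓ * ℓ)) ^ 6 := by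
  have hℓ : ℓ ≠ 0 := by
    rintro rfl
    norm_num [lg] at hlog
  have hℓ' : (0 : ℝ) < ℓ := by positivity
  have h1 : lg (ℓ * ℓ) = 2 * Real.logb 2 ℓ := by
    rw [lg, Nat.cast_mul, Real.logb_mul hℓ'.ne' hℓ'.ne']; ring
  have h2 : (Nat.log 2 ℓ : ℝ) ≤ Real.logb 2 ℓ := by
    rw [Real.le_logb_iff_rpow_le (by norm_num) hℓ', Real.rpow_natCast]
    exact_mod_cast Nat.pow_log_le_self 2 hℓ
  set x := lg (ℓ * ℓ)
  norm_num at hlog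
  have h3 : (Nat.log 2 ℓ : ℝ) + 1 ≤ x := by linarith
  have h4 : ((Nat.log 2 ℓ : ℝ) + 1) ^ 2 ≤ x ^ 2 := by gcongr
  have h5 : (8192 : ℝ) ≤ x ^ 4 := by
    calc (8192 : ℝ) ≤ 8192 ^ 4 := by norm_num
      _ ≤ x ^ 4 := by gcongr; linarith
  calc 8192 * ((Nat.log 2 ℓ : ℝ) + 1) ^ 2 ≤ x ^ 4 * x ^ 2 := by gcongr
    _ = x ^ 6 := by ring

/-- Theorem: the shadow property for one set of squares.
If all sources of `M` lie on the top row of the ℓ×ℓ grid, `Qs` is a `d`-canonical family of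
squares avoiding the top row, and `Mhat ⊆ M` is routable via node-disjoint paths with every
destination lying in a square of `Qs`, then some `Mhat' ⊆ Mhat` with
`|Mhat'| ≥ |Mhat| / (log₂ n)⁶` is such that every square of `Qs` has the 1-shadow property
with respect to `Mhat'`. -/
theorem statement0
    (ℓ n : ℕ) (hn : n = ℓ * ℓ) (hlog : (2 : ℝ) ^ (27 : ℕ) ≤ lg n)
    (M : Finset DPair) (hsrc : ∀ m ∈ M, OnTopRow ℓ m.1)
    (d : ℕ) (hd : 1 ≤ d)
    (Qs : Finset SquareSpec) (hcan : IsCanonicalSquares ℓ d Qs)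
    (hno : ∀ Q ∈ Qs, (1 : ℕ) ∉ Q.1)
    (Mhat : Finset DPair) (hsub : Mhat ⊆ M)
    (hroute : NodeDisjointRoutable (gridG ℓ) Mhat)
    (hdest : ∀ m ∈ Mhat, ∃ Q ∈ Qs, memSquare m.2 Q) :
    ∃ Mhat' ⊆ Mhat, (Mhat.card : ℝ) / (lg n) ^ 6 ≤ (Mhat'.card : ℝ) ∧
      ∀ Q ∈ Qs, HasShadowProp 1 d Mhat' Q := by
  classical
  subst hn
  obtain ⟨P, -, hdisj⟩ := hroute
  obtain ⟨I₁, I₂, hI₁, hI₂, rfl⟩ := hcan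
  choose! sq hsq hmem using hdest
  have hint : ∀ Q ∈ I₁ ×ˢ I₂, (IsIntervalIn ℓ Q.1 ∧ #Q.1 = d) ∧ IsIntervalIn ℓ Q.2 ∧ #Q.2 = d :=
    fun Q hQ => ⟨hI₁.1 _ (Finset.mem_product.mp hQ).1, hI₂.1 _ (Finset.mem_product.mp hQ).2⟩
  have hsame : ∀ Q ∈ I₁ ×ˢ I₂, ∀ R ∈ I₁ ×ˢ I₂, ∀ x, memSquare x Q → memSquare x R → Q = R := by
    intro Q hQ R hR x hxQ hxR
    rw [Finset.mem_product] at hQ hR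
    exact Prod.ext (eq_of_common_mem hI₁ hQ.1 hR.1 hxQ.1 hxR.1)
      (eq_of_common_mem hI₂ hQ.2 hR.2 hxQ.2 hxR.2)
  have htop : ∀ m ∈ Mhat, OnTopRow ℓ m.1 := fun m hm => hsrc m (hsub hm)
  -- the paths of two distinct pairs share no vertex
  have hdisj' : ∀ a (ha : a ∈ Mhat) b (hb : b ∈ Mhat) x, x ∈ (P ⟨a, ha⟩).support →
      x ∈ (P ⟨b, hb⟩).support → a = b := by
    intro a ha b hb x hxa hxb
    by_contra hne
    exact hdisj ⟨a, ha⟩ ⟨b, hb⟩ (fun e => hne (congrArg Subtype.val e)) x hxa hxb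
  have hcol : ∀ a ∈ Mhat, ∀ b ∈ Mhat, a.1.2 = b.1.2 → a = b := by
    intro a ha b hb e
    have e' : a.1 = b.1 := Prod.ext ((htop a ha).1.trans (htop b hb).1.symm) e
    refine hdisj' a ha b hb a.1 (P ⟨a, ha⟩).start_mem_support ?_
    rw [e']
    exact (P ⟨b, hb⟩).start_mem_support
  let hits : DPair → SquareSpec → Prop := fun m Q =>
    Q ∈ I₁ ×ˢ I₂ ∧ ∃ hm : m ∈ Mhat, ∃ x ∈ (P ⟨m, hm⟩).support, memSquare x Q
  have hself : ∀ m ∈ Mhat, hits m (sq m) := fun m hm =>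
    ⟨hsq m hm, hm, m.2, (P ⟨m, hm⟩).end_mem_support, hmem m hm⟩
  have hcap : ∀ Q, #{m ∈ Mhat | hits m Q} ≤ 4 * d := by
    intro Q
    by_cases hQ : Q ∈ I₁ ×ˢ I₂
    · obtain ⟨⟨h1, hc1⟩, h2, hc2⟩ := hint Q hQ
      obtain ⟨B, hBc, hB⟩ := exists_perimeter h1 h2 hc1 hc2
      have hx : ∀ m ∈ ({m ∈ Mhat | hits m Q} : Finset DPair),
          ∃ x ∈ B, ∃ hm : m ∈ Mhat, x ∈ (P ⟨m, hm⟩).support := by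
        intro m hm
        obtain ⟨-, -, hm, hxm⟩ := Finset.mem_filter.mp hm
        obtain ⟨x, hx1, hx2⟩ := hB (P ⟨m, hm⟩)
          (fun hs => hno Q hQ ((htop m hm).1 ▸ hs.1)) hxm
        exact ⟨x, hx2, hm, hx1⟩
      choose! x hxB hxP using hx
      refine le_trans (Finset.card_le_card_of_injOn x hxB ?_) hBc
      intro a ha b hb e
      obtain ⟨ha', hxa⟩ := hxP a ha
      obtain ⟨hb', hxb⟩ := hxP b hb
      exact hdisj' a ha' b hb' _ hxa (e ▸ hxb)
    · rw [Finset.filter_false_of_mem fun m _ hm => hQ hm.1]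
      simp
  have hcross : ∀ a ∈ Mhat, ∀ b ∈ Mhat, ∀ c ∈ Mhat, ∀ e ∈ Mhat, a.1.2 < b.1.2 →
      b.1.2 < c.1.2 → c.1.2 < e.1.2 → sq a = sq c → sq b = sq e → sq a ≠ sq b →
      hits a (sq b) ∨ hits c (sq b) ∨ hits b (sq a) ∨ hits e (sq a) := by
    intro a ha b hb c hc e he hab hbc hce hac hbe hne
    by_contra! hcon
    obtain ⟨n1, n2, n3, n4⟩ := hcon
    obtain ⟨⟨i1, -⟩, i2, -⟩ := hint _ (hsq a ha)
    obtain ⟨⟨j1, -⟩, j2, -⟩ := hint _ (hsq b hb)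
    obtain ⟨w, hw⟩ := exists_walk_through i1 i2 (P ⟨a, ha⟩) (P ⟨c, hc⟩) (hmem a ha)
      (hac ▸ hmem c hc)
    obtain ⟨w', hw'⟩ := exists_walk_through j1 j2 (P ⟨b, hb⟩) (P ⟨e, he⟩) (hmem b hb)
      (hbe ▸ hmem e he)
    have row : ∀ m ∈ Mhat, m.1 = (1, m.1.2) := fun m hm => Prod.ext (htop m hm).1 rfl
    obtain ⟨x, hx', hx⟩ := walks_meet hab hbc hce (w.copy (row a ha) (row c hc))
      (w'.copy (row b hb) (row e he))
    rw [SimpleGraph.Walk.support_copy] at hx hx'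
    have dist : ∀ u (hu : u ∈ Mhat) v (hv : v ∈ Mhat), u.1.2 ≠ v.1.2 →
        x ∈ (P ⟨u, hu⟩).support → x ∉ (P ⟨v, hv⟩).support := fun u hu v hv huv hxu hxv =>
      huv (by rw [hdisj' u hu v hv x hxu hxv])
    rcases hw x hx with h | h | h <;> rcases hw' x hx' with h' | h' | h'
    · exact dist a ha b hb (by omega) h h'
    · exact dist a ha e he (by omega) h h'
    · exact n1 ⟨hsq b hb, ha, x, h, h'⟩
    · exact dist c hc b hb (by omega) h h'
    · exact dist c hc e he (by omega) h h'
    · exact n2 ⟨hsq b hb, hc, x, h, h'⟩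
    · exact n3 ⟨hsq a ha, hb, x, h', h⟩
    · exact n4 ⟨hsq a ha, he, x, h', h⟩
    · exact hne (hsame _ (hsq a ha) _ (hsq b hb) x h h')
  have hcard : #Mhat < 2 ^ (Nat.log 2 ℓ + 1) := by
    refine lt_of_le_of_lt ?_ (Nat.lt_pow_succ_log_self (by norm_num) ℓ)
    calc #Mhat ≤ #(Finset.Icc 1 ℓ) :=
          Finset.card_le_card_of_injOn (fun m => m.1.2)
            (fun m hm => by
              have := htop m hm
              simpa using this.2)
            (fun a ha b hb => hcol a ha b hb)
      _ = ℓ := by simp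
  obtain ⟨M', hM', hM'c, hshadow⟩ := select Mhat sq hits (fun m => m.1.2) d (Nat.log 2 ℓ) hd hcol
    hself (fun Q => by convert hcap Q) hcross hcard
  refine ⟨M', hM', ?_, fun Q hQ => ?_⟩
  · have hpos : (0 : ℝ) < lg (ℓ * ℓ) := lt_of_lt_of_le (by positivity) hlog
    rw [div_le_iff₀ (by positivity)]
    have hc : (#Mhat : ℝ) ≤ 8192 * ((Nat.log 2 ℓ : ℝ) + 1) ^ 2 * #M' := by exact_mod_cast hM'c
    calc (#Mhat : ℝ) ≤ 8192 * ((Nat.log 2 ℓ : ℝ) + 1) ^ 2 * #M' := hc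
      _ ≤ lg (ℓ * ℓ) ^ 6 * #M' := by gcongr; exact loss_le hlog
      _ = _ := mul_comm _ _
  · rw [HasShadowProp, one_mul, Nat.cast_le]
    refine le_trans (Finset.card_le_card fun m hm => ?_) (hshadow Q)
    simp only [Finset.mem_filter] at hm ⊢
    obtain ⟨hm, m₁, h₁, hQ₁, m₂, h₂, hQ₂, hl⟩ := hm
    exact ⟨hm, m₁, h₁, hsame _ (hsq _ (hM' h₁)) _ hQ _ (hmem _ (hM' h₁)) hQ₁,
      m₂, h₂, hsame _ (hsq _ (hM' h₂)) _ hQ _ (hmem _ (hM' h₂)) hQ₂, hl⟩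
end

section
/- Let G be the ℓ×ℓ grid with n = ℓ² vertices, log₂ n ≥ 2²⁷, and let M be a set of demand pairs whose sources all lie on the top row R* of G. Let η = 2^⌈√(log₂ n)⌉, let ρ be a positive integer with ρ ≤ √(log₂ n), let d_h = η^{ρ−h+3} for 1 ≤ h ≤ ρ, and let H̃ = (Q₁,…,Q_ρ) be a hierarchical system of squares of G whose squares are disjoint from R*. Let M̃ ⊆ M be the set of demand pairs belonging to H̃. Let OPT > 0 and suppose some subset of M̃ of size at least OPT/2^{2√(log₂ n)} is routable via node-disjoint paths in G. Then there exists a set M̃* ⊆ M̃ of at least OPT/2^{8√(log₂ n)·log₂ log₂ n} demand pairs such that (i) all demand pairs of M̃* can be simultaneously routed via node-disjoint paths in G, and (ii) for every 1 ≤ h ≤ ρ, every square of Q_h has the (1/η²)-shadow property with respect to M̃*. -/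
/-!
The set of demand pairs is thinned out level by level, at the cost of a factor `O(log n)` per
level, until every square of side `d` at every level has a shadow of size `O(d log n)`; keeping
every `K`-th source with `K = O(η² log n)` then brings all shadows below `d / η²`. Since passing
to a subset only shrinks shadows, the levels do not interfere, and with at most `√(log n)` levels
the total loss stays below the permitted factor (`loss_bound`).

For a single level (`exists_small_shadows`), colour every source by the square containing its
destination. Planarity (`walks_meet`) says that if the sources of two squares `Q`, `Q'`
interleave, then one of the four paths involved visits the other square. At most `4 d` of the
disjoint paths visit a given square, so the colour classes are almost non-crossing. Planarity is
proved by counting, with sign, how often a walk crosses the vertical ray above a vertex; this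
number, corrected by the positions of the walk's endpoints, is locally constant off the walk.

The combinatorial core is `exists_sparse_blocks`. Restrict to classes of about the same size
`8 t`, cut each into eight consecutive blocks, and keep one inner block whose neighbourhood has at
most half the length of the class. If two kept blocks cover the same point, either at least `t`
members of one class are exceptional for the other class, which happens for few pairs, or one
class is nested in the neighbourhood of the other's block and is therefore shorter by a factor of
two. So every point is covered by `O((d / t) log n)` kept blocks, and by averaging half of the
classes have kept blocks spanning only `O(d log n)` points (`exists_sparse_subset`).
-/

open Finset

/-- A hierarchical system of squares `Qs 1, …, Qs ρ`: level `h` is a `d_h`-canonical family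
of squares (with `d_h = η^(ρ-h+3)`), and every level-`h` square is contained in a
level-`(h-1)` square. -/
def IsHierSquares (W η ρ : ℕ) (Qs : ℕ → Finset SquareSpec) : Prop :=
  (∀ h, 1 ≤ h → h ≤ ρ → IsCanonicalSquares W (η ^ (ρ - h + 3)) (Qs h)) ∧
    ∀ h, 1 < h → h ≤ ρ → ∀ Q ∈ Qs h, ∃ Q' ∈ Qs (h - 1), Q.1 ⊆ Q'.1 ∧ Q.2 ⊆ Q'.2

lemma gridG_adj_s1 {ℓ : ℕ} {u v : Vtx} : (gridG ℓ).Adj u v ↔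
    (1 ≤ u.1 ∧ u.1 ≤ ℓ ∧ 1 ≤ u.2 ∧ u.2 ≤ ℓ ∧ 1 ≤ v.1 ∧ v.1 ≤ ℓ ∧ 1 ≤ v.2 ∧ v.2 ≤ ℓ) ∧
      ((u.1 = v.1 ∧ (u.2 + 1 = v.2 ∨ v.2 + 1 = u.2)) ∨
        (u.2 = v.2 ∧ (u.1 + 1 = v.1 ∨ v.1 + 1 = u.1))) := by
  unfold gridG rectGrid
  rw [SimpleGraph.fromRel_adj]
  constructor
  · rintro ⟨-, h | h⟩ <;> omega
  · intro h
    refine ⟨?_, by omega⟩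
    rintro rfl
    omega

/-! ### Planarity of the grid -/

/-- Signed contribution of the step `p → q` to the number of times a walk crosses the upward
vertical ray that starts just to the right of the vertex `u`. -/
def crossStep (p q u : Vtx) : ℤ :=
  if p.1 < u.1 then
    if p.2 = u.2 ∧ q.2 = u.2 + 1 then 1
    else if q.2 = u.2 ∧ p.2 = u.2 + 1 then -1 else 0
  else 0

/-- Signed number of crossings of a walk with the upward ray just to the right of `u`. -/
def crossNum {ℓ : ℕ} : ∀ {x y : Vtx}, (gridG ℓ).Walk x y → Vtx → ℤ
  | _, _, SimpleGraph.Walk.nil, _ => 0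
  | _, _, @SimpleGraph.Walk.cons _ _ p q _ _ r, u => crossStep p q u + crossNum r u

/-- Change of the crossing number caused by an endpoint `p` of the walk when the base point of
the ray moves from `v` to `u`. -/
def endJump (u v p : Vtx) : ℤ :=
  if u.1 = v.1 ∧ p.1 < u.1 then
    (if p.2 ≤ v.2 then 1 else 0) - (if p.2 ≤ u.2 then 1 else 0)
  else 0

set_option maxHeartbeats 1000000 in
lemma crossStep_sub {ℓ : ℕ} {p q u v : Vtx} (hpq : (gridG ℓ).Adj p q) (huv : (gridG ℓ).Adj u v)
    (h1 : u ≠ p) (h2 : u ≠ q) (h3 : v ≠ p) (h4 : v ≠ q) :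
    crossStep p q u - crossStep p q v = endJump u v q - endJump u v p := by
  rw [gridG_adj_s1] at hpq huv
  obtain ⟨p1, p2⟩ := p
  obtain ⟨q1, q2⟩ := q
  obtain ⟨u1, u2⟩ := u
  obtain ⟨v1, v2⟩ := v
  simp only [ne_eq, Prod.mk.injEq] at *
  unfold crossStep endJump
  simp only
  obtain ⟨-, hpq⟩ := hpq
  obtain ⟨-, huv⟩ := huv
  rcases huv with ⟨rfl, rfl | rfl⟩ | ⟨rfl, rfl | rfl⟩ <;>
  rcases hpq with ⟨rfl, rfl | rfl⟩ | ⟨rfl, rfl | rfl⟩ <;>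
  split_ifs <;> omega

lemma crossNum_sub {ℓ : ℕ} {x y u v : Vtx} (P : (gridG ℓ).Walk x y) (huv : (gridG ℓ).Adj u v)
    (hu : u ∉ P.support) (hv : v ∉ P.support) :
    crossNum P u - crossNum P v = endJump u v y - endJump u v x := by
  induction P with
  | nil => simp [crossNum]
  | @cons p q y hpq r ih =>
    simp only [SimpleGraph.Walk.support_cons, List.mem_cons, not_or] at hu hv
    have h2 : u ≠ q := fun h => hu.2 (h ▸ r.start_mem_support)
    have h4 : v ≠ q := fun h => hv.2 (h ▸ r.start_mem_support)
    have h := crossStep_sub hpq huv hu.1 h2 hv.1 h4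
    have h' := ih hu.2 hv.2
    simp only [crossNum]
    linarith

lemma crossNum_top {ℓ : ℕ} {x y : Vtx} (P : (gridG ℓ).Walk x y) (b : ℕ) :
    crossNum P (1, b) = 0 := by
  induction P with
  | nil => simp [crossNum]
  | @cons p q y hpq r ih =>
    have h := (gridG_adj_s1.1 hpq).1.1
    have : crossStep p q (1, b) = 0 := by
      unfold crossStep
      rw [if_neg]
      simp only
      omega
    simp [crossNum, ih, this]

/-- For a walk `P` with both endpoints on the top row, the crossing number corrected by the
positions of the endpoints; it is constant on the components of the complement of `P`. -/
def side {ℓ a₁ a₂ : ℕ} (P : (gridG ℓ).Walk (1, a₁) (1, a₂)) (u : Vtx) : ℤ :=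
  crossNum P u + (if a₂ ≤ u.2 then 1 else 0) - (if a₁ ≤ u.2 then 1 else 0)

lemma side_adj {ℓ a₁ a₂ : ℕ} (P : (gridG ℓ).Walk (1, a₁) (1, a₂)) {u v : Vtx}
    (huv : (gridG ℓ).Adj u v) (hu : u ∉ P.support) (hv : v ∉ P.support) :
    side P u = side P v := by
  have h := crossNum_sub P huv hu hv
  have e1 : u ≠ (1, a₁) := fun h => hu (h ▸ P.start_mem_support)
  have e2 : u ≠ (1, a₂) := fun h => hu (h ▸ P.end_mem_support)
  have e3 : v ≠ (1, a₁) := fun h => hv (h ▸ P.start_mem_support)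
  have e4 : v ≠ (1, a₂) := fun h => hv (h ▸ P.end_mem_support)
  rw [gridG_adj_s1] at huv
  obtain ⟨u1, u2⟩ := u
  obtain ⟨v1, v2⟩ := v
  simp only [ne_eq, Prod.mk.injEq] at *
  unfold endJump at h
  unfold side
  simp only at *
  split_ifs at * <;> omega

lemma side_walk {ℓ a₁ a₂ : ℕ} (P : (gridG ℓ).Walk (1, a₁) (1, a₂)) {u v : Vtx}
    (W : (gridG ℓ).Walk u v) (h : ∀ z ∈ W.support, z ∉ P.support) :
    side P u = side P v := by
  induction W with
  | nil => rfl
  | @cons p q y hpq r ih =>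
    simp only [SimpleGraph.Walk.support_cons, List.mem_cons, forall_eq_or_imp] at h
    rw [side_adj P hpq h.1 (h.2 _ r.start_mem_support), ih h.2]

/-- Two walks joining interleaved pairs of vertices of the top row meet: otherwise `side P` would
take the same value at `b₁` and `b₂`, but it is `-1` at `b₁` and `0` at `b₂`. -/
lemma walks_meet_s1 {ℓ a₁ a₂ b₁ b₂ : ℕ} (h1 : a₁ < b₁) (h2 : b₁ < a₂) (h3 : a₂ < b₂)
    (P : (gridG ℓ).Walk (1, a₁) (1, a₂)) (W : (gridG ℓ).Walk (1, b₁) (1, b₂)) :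
    ∃ z ∈ W.support, z ∈ P.support := by
  by_contra! hcon
  have h := side_walk P W hcon
  unfold side at h
  rw [crossNum_top, crossNum_top] at h
  simp only at h
  split_ifs at h <;> omega

/-! ### Walks and squares -/

lemma row_walk {ℓ r c c' : ℕ} (hr : 1 ≤ r) (hr' : r ≤ ℓ) (hc : 1 ≤ c) (hcc : c ≤ c')
    (hc' : c' ≤ ℓ) : ∃ W : (gridG ℓ).Walk (r, c) (r, c'),
      ∀ z ∈ W.support, z.1 = r ∧ c ≤ z.2 ∧ z.2 ≤ c' := by
  induction c', hcc using Nat.le_induction with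
  | base => exact ⟨SimpleGraph.Walk.nil, by simp⟩
  | succ k hk ih =>
    obtain ⟨W, hW⟩ := ih (by omega)
    have hadj : (gridG ℓ).Adj (r, k) (r, k + 1) := by
      exact gridG_adj_s1.2 ⟨by dsimp only; omega, by dsimp only; omega⟩
    refine ⟨W.concat hadj, fun z hz => ?_⟩
    rw [SimpleGraph.Walk.support_concat, List.mem_append] at hz
    rcases hz with hz | hz
    · have := hW z hz; omega
    · simp only [List.mem_singleton] at hz
      subst hz; dsimp only; omega

lemma col_walk {ℓ r r' c : ℕ} (hc : 1 ≤ c) (hc' : c ≤ ℓ) (hr : 1 ≤ r) (hrr : r ≤ r')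
    (hr' : r' ≤ ℓ) : ∃ W : (gridG ℓ).Walk (r, c) (r', c),
      ∀ z ∈ W.support, z.2 = c ∧ r ≤ z.1 ∧ z.1 ≤ r' := by
  induction r', hrr using Nat.le_induction with
  | base => exact ⟨SimpleGraph.Walk.nil, by simp⟩
  | succ k hk ih =>
    obtain ⟨W, hW⟩ := ih (by omega)
    have hadj : (gridG ℓ).Adj (k, c) (k + 1, c) := by
      exact gridG_adj_s1.2 ⟨by dsimp only; omega, by dsimp only; omega⟩
    refine ⟨W.concat hadj, fun z hz => ?_⟩
    rw [SimpleGraph.Walk.support_concat, List.mem_append] at hz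
    rcases hz with hz | hz
    · have := hW z hz; omega
    · simp only [List.mem_singleton] at hz
      subst hz; dsimp only; omega

lemma square_corner_walk {ℓ : ℕ} {r r' c c' : ℕ} (hr : 1 ≤ r) (hr' : r' ≤ ℓ) (hc : 1 ≤ c)
    (hc' : c' ≤ ℓ) {u : Vtx} (hu : memSquare u (Icc r r', Icc c c')) :
    ∃ W : (gridG ℓ).Walk (r, c) u, ∀ z ∈ W.support, memSquare z (Icc r r', Icc c c') := by
  obtain ⟨u1, u2⟩ := u
  simp only [memSquare, mem_Icc] at hu ⊢
  obtain ⟨W₁, h₁⟩ := row_walk (ℓ := ℓ) (r := r) (c := c) (c' := u2) hr (by omega) hc (by omega)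
    (by omega)
  obtain ⟨W₂, h₂⟩ := col_walk (ℓ := ℓ) (r := r) (r' := u1) (c := u2) (by omega) (by omega) hr
    (by omega) (by omega)
  refine ⟨W₁.append W₂, fun z hz => ?_⟩
  rw [SimpleGraph.Walk.mem_support_append_iff] at hz
  rcases hz with hz | hz
  · have := h₁ z hz; omega
  · have := h₂ z hz; omega

/-- Squares are connected. -/
lemma square_walk {ℓ : ℕ} {Q : SquareSpec} (h1 : IsIntervalIn ℓ Q.1) (h2 : IsIntervalIn ℓ Q.2)
    {u v : Vtx} (hu : memSquare u Q) (hv : memSquare v Q) :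
    ∃ W : (gridG ℓ).Walk u v, ∀ z ∈ W.support, memSquare z Q := by
  obtain ⟨Q1, Q2⟩ := Q
  obtain ⟨r, r', hr, -, hr', rfl⟩ := h1
  obtain ⟨c, c', hc, -, hc', rfl⟩ := h2
  obtain ⟨W₁, h₁⟩ := square_corner_walk hr hr' hc hc' hu
  obtain ⟨W₂, h₂⟩ := square_corner_walk hr hr' hc hc' hv
  refine ⟨W₁.reverse.append W₂, fun z hz => ?_⟩
  rw [SimpleGraph.Walk.mem_support_append_iff, SimpleGraph.Walk.support_reverse,
    List.mem_reverse] at hz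
  exact hz.elim (h₁ z) (h₂ z)

/-- A walk entering a `d × d` square from outside uses a vertex of its boundary `B`, and the
boundary has at most `4 * d` vertices. -/
lemma exists_boundary {ℓ d : ℕ} {Q : SquareSpec} (h1 : IsIntervalIn ℓ Q.1)
    (h2 : IsIntervalIn ℓ Q.2) (hd1 : Q.1.card = d) (hd2 : Q.2.card = d) :
    ∃ B : Finset Vtx, B.card ≤ 4 * d ∧ ∀ {x y : Vtx} (P : (gridG ℓ).Walk x y),
      ¬ memSquare x Q → (∃ z ∈ P.support, memSquare z Q) → ∃ z ∈ P.support, z ∈ B := by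
  obtain ⟨Q1, Q2⟩ := Q
  obtain ⟨r, r', hr, -, hr', rfl⟩ := h1
  obtain ⟨c, c', hc, -, hc', rfl⟩ := h2
  refine ⟨({r, r'} ×ˢ Icc c c') ∪ (Icc r r' ×ˢ {c, c'}), ?_, ?_⟩
  · refine (card_union_le _ _).trans ?_
    rw [card_product, card_product, hd1, hd2]
    have e1 : ({r, r'} : Finset ℕ).card ≤ 2 := card_le_two
    have e2 : ({c, c'} : Finset ℕ).card ≤ 2 := card_le_two
    nlinarith
  · rintro x y P hx ⟨z, hz, hzQ⟩
    obtain ⟨e, he, hfst, hsnd⟩ := (P.takeUntil z hz).exists_boundary_dart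
      {w | ¬ memSquare w (Icc r r', Icc c c')} hx (by simpa using hzQ)
    refine ⟨e.snd, P.support_takeUntil_subset_support hz
      (SimpleGraph.Walk.dart_snd_mem_support_of_mem_darts _ he), ?_⟩
    have hadj := gridG_adj_s1.1 e.adj
    simp only [memSquare, Set.mem_ofPred_eq, not_not, mem_Icc] at hfst hsnd
    simp only [mem_union, mem_product, mem_insert, mem_singleton, mem_Icc]
    omega

/-! ### Almost non-crossing classes of points on a line -/

/-- If every two elements of `S` are related in some direction and all in-degrees are at most
`q`, then `S` has at most `2 * q + 1` elements. -/
lemma card_le_of_semicomplete {κ : Type*} [DecidableEq κ] (S : Finset κ) (r : κ → κ → Prop)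
    [DecidableRel r] (q : ℕ) (hin : ∀ c' ∈ S, #{c ∈ S | r c c'} ≤ q)
    (htot : ∀ c ∈ S, ∀ c' ∈ S, c ≠ c' → r c c' ∨ r c' c) : #S ≤ 2 * q + 1 := by
  have h1 : #{p ∈ S ×ˢ S | r p.1 p.2} ≤ #S * q := by
    rw [card_eq_sum_card_fiberwise (f := Prod.snd) (t := S)
      (fun p hp => by simp only [coe_filter, mem_product, Set.mem_ofPred_eq] at hp; exact hp.1.2)]
    refine sum_le_card_nsmul _ _ _ fun c' hc' => ?_
    refine le_trans ?_ (hin c' hc')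
    refine card_le_card_of_injOn Prod.fst ?_ ?_
    · rintro ⟨a, b⟩ hp
      simp only [coe_filter, mem_filter, mem_product, Set.mem_ofPred_eq] at hp ⊢
      obtain ⟨⟨⟨ha, -⟩, hr⟩, rfl⟩ := hp
      exact ⟨ha, hr⟩
    · rintro ⟨a, b⟩ hp ⟨a', b'⟩ hp' h
      simp only [coe_filter, mem_filter, mem_product, Set.mem_ofPred_eq] at hp hp' h
      rw [h, hp.2, hp'.2]
  have h2 : #{p ∈ S ×ˢ S | r p.2 p.1} ≤ #S * q := by
    refine le_trans (card_le_card_of_injOn Prod.swap ?_ (Prod.swap_injective.injOn)) h1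
    rintro ⟨a, b⟩ hp
    simp only [coe_filter, mem_product, Set.mem_ofPred_eq, Prod.swap] at hp ⊢
    exact ⟨⟨hp.1.2, hp.1.1⟩, hp.2⟩
  have h3 : #S.offDiag ≤ #S * q + #S * q := by
    refine le_trans (card_le_card ?_) ((card_union_le _ _).trans (add_le_add h1 h2))
    rintro ⟨a, b⟩ hp
    simp only [mem_offDiag] at hp
    simp only [mem_union, mem_filter, mem_product]
    rcases htot a hp.1 b hp.2.1 hp.2.2 with h | h
    · exact Or.inl ⟨⟨hp.1, hp.2.1⟩, h⟩
    · exact Or.inr ⟨⟨hp.1, hp.2.1⟩, h⟩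
  rw [offDiag_card] at h3
  by_contra! hcon
  have h4 : #S * (2 * q + 1 + 1) ≤ #S * #S := Nat.mul_le_mul_left _ hcon
  have h5 : #S * (2 * q + 1 + 1) = #S * q + #S * q + #S + #S := by ring
  omega

/-- Two disjoint non-crossing sets that both straddle a point `x`, as witnessed by
`a₁ < x < a₂` and `c₁ < x < c₂`: one of the two sets lies inside the interval of the other set's
witnesses. This is stated for two further members `a₀`, `a₃` and `c₀`, `c₃` of each set, in
applications members near its two ends. -/
lemma nested_of_noncrossing {A C : ℕ → Prop} (hne : ∀ a c, A a → C c → a ≠ c)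
    (h1 : ∀ a c a' c', A a → C c → A a' → C c' → a < c → c < a' → a' < c' → False)
    (h2 : ∀ c a c' a', C c → A a → C c' → A a' → c < a → a < c' → c' < a' → False)
    {x a₀ a₁ a₂ a₃ c₀ c₁ c₂ c₃ : ℕ} (ha₀ : A a₀) (ha₁ : A a₁) (ha₂ : A a₂) (ha₃ : A a₃)
    (hc₀ : C c₀) (hc₁ : C c₁) (hc₂ : C c₂) (hc₃ : C c₃)
    (hax : a₁ < x) (hxa : x < a₂) (hcx : c₁ < x) (hxc : x < c₂) :
    (a₁ < c₀ ∧ c₃ < a₂) ∨ (c₁ < a₀ ∧ a₃ < c₂) := by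
  rcases lt_or_gt_of_ne (hne _ _ ha₁ hc₁) with h | h
  · left
    constructor
    · by_contra! hc
      have := hne _ _ ha₁ hc₀
      exact h2 _ _ _ _ hc₀ ha₁ hc₁ ha₂ (by omega) h (by omega)
    · by_contra! hc
      have := hne _ _ ha₂ hc₃
      exact h1 _ _ _ _ ha₁ hc₁ ha₂ hc₃ h (by omega) (by omega)
  · right
    constructor
    · by_contra! hc
      have := hne _ _ ha₀ hc₁
      exact h1 _ _ _ _ ha₀ hc₁ ha₁ hc₂ (by omega) h (by omega)
    · by_contra! hc
      have := hne _ _ ha₃ hc₂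
      exact h2 _ _ _ _ hc₁ ha₁ hc₂ ha₃ h (by omega) (by omega)

/-- From every class, represented by an increasing sequence `σ c` of `8 * t` points and cut into
eight blocks of length `t`, one block can be chosen such that every point `x` is covered by few
of the chosen blocks. Crossings between two classes `c`, `c'` are allowed only if they involve a
member of one class that lies in the exceptional set `H` of the other.

Call `c`, `c'` in conflict if `t` points of one of them are exceptional for the other. If two
classes that are not in conflict have chosen blocks covering `x`, then one of the two is nested
between the blocks adjacent to the chosen block of the other. The chosen block is one whose
neighbourhood has at most half the length of the class, so the lengths of the two classes differ
by a factor of at least two. Hence classes covering `x` with the same dyadic length are pairwise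
in conflict, and there are few of them since the exceptional sets are small. -/
lemma exists_sparse_blocks {α κ : Type*} [DecidableEq α] [DecidableEq κ] (cs : Finset κ)
    (t D lam : ℕ) (ht : 1 ≤ t) (pos : α → ℕ) (σ : κ → ℕ → α) (H : κ → Finset α) (f : α → κ)
    (hf : ∀ c ∈ cs, ∀ j < 8 * t, f (σ c j) = c)
    (hmono : ∀ c ∈ cs, ∀ i j, i < j → j < 8 * t → pos (σ c i) < pos (σ c j))
    (hpos : ∀ c ∈ cs, ∀ j < 8 * t, pos (σ c j) < 2 ^ lam)
    (hH : ∀ c ∈ cs, #(H c) ≤ D)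
    (hinj : ∀ c ∈ cs, ∀ c' ∈ cs, c ≠ c' → ∀ i < 8 * t, ∀ j < 8 * t, pos (σ c i) ≠ pos (σ c' j))
    (hcross : ∀ c ∈ cs, ∀ c' ∈ cs, c ≠ c' → ∀ i₁ < 8 * t, ∀ j₁ < 8 * t, ∀ i₂ < 8 * t,
      ∀ j₂ < 8 * t, pos (σ c i₁) < pos (σ c' j₁) → pos (σ c' j₁) < pos (σ c i₂) →
      pos (σ c i₂) < pos (σ c' j₂) →
      σ c i₁ ∈ H c' ∨ σ c i₂ ∈ H c' ∨ σ c' j₁ ∈ H c ∨ σ c' j₂ ∈ H c) :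
    ∃ b : κ → ℕ, (∀ c ∈ cs, b c = 2 * t ∨ b c = 5 * t) ∧
      ∀ x, #{c ∈ cs | pos (σ c (b c)) ≤ x ∧ x ≤ pos (σ c (b c + t - 1))} ≤
        lam * (2 * (D / t) + 1) := by
  classical
  have hmono' : ∀ c ∈ cs, ∀ i j, i ≤ j → j < 8 * t → pos (σ c i) ≤ pos (σ c j) := by
    intro c hc i j hij hj
    rcases hij.eq_or_lt with rfl | h
    · exact le_rfl
    · exact (hmono c hc i j h hj).le
  -- the length of a class, and the choice of the block
  set Φ : κ → ℕ := fun c => pos (σ c (7 * t - 1)) - pos (σ c t) with hΦ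
  have hΦpos : ∀ c ∈ cs, 0 < Φ c := by
    intro c hc
    have := hmono c hc t (7 * t - 1) (by omega) (by omega)
    simp only [hΦ]; omega
  have hchoice : ∀ c, ∃ b, c ∈ cs → (b = 2 * t ∨ b = 5 * t) ∧
      2 * (pos (σ c (b + 2 * t - 1)) - pos (σ c (b - t))) ≤ Φ c := by
    intro c
    by_cases hc : c ∈ cs
    · have e1 := hmono' c hc t (4 * t - 1) (by omega) (by omega)
      have e2 := hmono' c hc (4 * t - 1) (4 * t) (by omega) (by omega)
      have e3 := hmono' c hc (4 * t) (7 * t - 1) (by omega) (by omega)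
      by_cases h : 2 * (pos (σ c (4 * t - 1)) - pos (σ c t)) ≤ Φ c
      · refine ⟨2 * t, fun _ => ⟨Or.inl rfl, ?_⟩⟩
        have i1 : 2 * t + 2 * t - 1 = 4 * t - 1 := by omega
        have i2 : 2 * t - t = t := by omega
        rwa [i1, i2]
      · refine ⟨5 * t, fun _ => ⟨Or.inr rfl, ?_⟩⟩
        have i1 : 5 * t + 2 * t - 1 = 7 * t - 1 := by omega
        have i2 : 5 * t - t = 4 * t := by omega
        rw [i1, i2]
        simp only [hΦ] at h ⊢
        omega
    · exact ⟨0, fun h => absurd h hc⟩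
  choose b hb using hchoice
  refine ⟨b, fun c hc => (hb c hc).1, fun x => ?_⟩
  -- `conf c c'`: many points of `c` are exceptional for `c'`
  set conf : κ → κ → Prop := fun c c' => t ≤ #{j ∈ range (8 * t) | σ c j ∈ H c'} with hconf
  have hin : ∀ c' ∈ cs, #{c ∈ cs | conf c c'} ≤ D / t := by
    intro c' hc'
    rw [Nat.le_div_iff_mul_le (by omega)]
    have h1 : #({c ∈ cs | conf c c'}.sigma fun c => {j ∈ range (8 * t) | σ c j ∈ H c'}) ≤
        #(H c') := by
      refine card_le_card_of_injOn (fun p => σ p.1 p.2) ?_ ?_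
      · rintro ⟨c, j⟩ hp
        simp only [coe_sigma, Set.mem_sigma_iff, mem_coe, mem_filter] at hp ⊢
        exact hp.2.2
      · rintro ⟨c, j⟩ hp ⟨c₂, j₂⟩ hp₂ h
        simp only [coe_sigma, Set.mem_sigma_iff, mem_coe, mem_filter, mem_range] at hp hp₂ h
        have hc : c = c₂ := by
          rw [← hf c hp.1.1 j hp.2.1, ← hf c₂ hp₂.1.1 j₂ hp₂.2.1, h]
        subst hc
        have hj : j = j₂ := by
          rcases lt_trichotomy j j₂ with hl | hl | hl
          · have := hmono c hp.1.1 j j₂ hl hp₂.2.1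
            rw [h] at this; omega
          · exact hl
          · have := hmono c hp.1.1 j₂ j hl hp.2.1
            rw [h] at this; omega
        rw [hj]
    rw [card_sigma] at h1
    have h2 : #{c ∈ cs | conf c c'} * t ≤
        ∑ c ∈ cs with conf c c', #{j ∈ range (8 * t) | σ c j ∈ H c'} := by
      rw [← smul_eq_mul]
      exact card_nsmul_le_sum _ _ _ fun c hc => (mem_filter.1 hc).2
    exact h2.trans (h1.trans (hH c' hc'))
  have hpick : ∀ c ∈ cs, ∀ c', ¬ conf c c' → ∀ s, s + t ≤ 8 * t →
      ∃ j, s ≤ j ∧ j < s + t ∧ σ c j ∉ H c' := by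
    intro c hc c' hcc s hs
    by_contra! hcon
    apply hcc
    have : Ico s (s + t) ⊆ {j ∈ range (8 * t) | σ c j ∈ H c'} := by
      intro j hj
      rw [mem_Ico] at hj
      rw [mem_filter, mem_range]
      exact ⟨by omega, hcon j hj.1 hj.2⟩
    have h := card_le_card this
    rw [Nat.card_Ico] at h
    simp only [hconf]
    omega
  set F : Finset κ := {c ∈ cs | pos (σ c (b c)) ≤ x ∧ x ≤ pos (σ c (b c + t - 1))} with hF
  have hmaps : (F : Set κ).MapsTo (fun c => Nat.log 2 (Φ c)) (range lam : Finset ℕ) := by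
    intro c hc
    have hc' : c ∈ cs := (mem_filter.1 hc).1
    simp only [coe_range, Set.mem_Iio]
    apply Nat.log_lt_of_lt_pow (hΦpos c hc').ne'
    have := hpos c hc' (7 * t - 1) (by omega)
    simp only [hΦ]; omega
  rw [card_eq_sum_card_fiberwise hmaps]
  have hgroup : ∀ k ∈ range lam, #{c ∈ F | Nat.log 2 (Φ c) = k} ≤ 2 * (D / t) + 1 := by
    intro k _
    refine card_le_of_semicomplete _ conf _ ?_ ?_
    · intro c' hc'
      have hc'' : c' ∈ cs := (mem_filter.1 (mem_filter.1 hc').1).1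
      refine le_trans (card_le_card ?_) (hin c' hc'')
      intro c hc
      rw [mem_filter] at hc ⊢
      exact ⟨(mem_filter.1 (mem_filter.1 hc.1).1).1, hc.2⟩
    · intro c hc c' hc' hne
      by_contra! hcon
      rw [mem_filter, hF, mem_filter] at hc hc'
      obtain ⟨⟨hc, hx1, hx2⟩, hk⟩ := hc
      obtain ⟨⟨hc', hx1', hx2'⟩, hk'⟩ := hc'
      obtain ⟨hb1, hb2⟩ := hb c hc
      obtain ⟨hb1', hb2'⟩ := hb c' hc'
      obtain ⟨i₀, hi₀, hi₀', mi₀⟩ := hpick c hc c' hcon.1 0 (by omega)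
      obtain ⟨i₁, hi₁, hi₁', mi₁⟩ := hpick c hc c' hcon.1 (b c - t) (by omega)
      obtain ⟨i₂, hi₂, hi₂', mi₂⟩ := hpick c hc c' hcon.1 (b c + t) (by omega)
      obtain ⟨i₃, hi₃, hi₃', mi₃⟩ := hpick c hc c' hcon.1 (7 * t) (by omega)
      obtain ⟨j₀, hj₀, hj₀', mj₀⟩ := hpick c' hc' c hcon.2 0 (by omega)
      obtain ⟨j₁, hj₁, hj₁', mj₁⟩ := hpick c' hc' c hcon.2 (b c' - t) (by omega)
      obtain ⟨j₂, hj₂, hj₂', mj₂⟩ := hpick c' hc' c hcon.2 (b c' + t) (by omega)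
      obtain ⟨j₃, hj₃, hj₃', mj₃⟩ := hpick c' hc' c hcon.2 (7 * t) (by omega)
      have key := nested_of_noncrossing
        (A := fun a => ∃ i < 8 * t, σ c i ∉ H c' ∧ pos (σ c i) = a)
        (C := fun a => ∃ i < 8 * t, σ c' i ∉ H c ∧ pos (σ c' i) = a)
        (by
          rintro _ _ ⟨i, hi, -, rfl⟩ ⟨j, hj, -, rfl⟩
          exact hinj c hc c' hc' hne i hi j hj)
        (by
          rintro _ _ _ _ ⟨i, hi, mi, rfl⟩ ⟨j, hj, mj, rfl⟩ ⟨i', hi', mi', rfl⟩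
            ⟨j', hj', mj', rfl⟩ l1 l2 l3
          rcases hcross c hc c' hc' hne i hi j hj i' hi' j' hj' l1 l2 l3 with h | h | h | h
          exacts [mi h, mi' h, mj h, mj' h])
        (by
          rintro _ _ _ _ ⟨i, hi, mi, rfl⟩ ⟨j, hj, mj, rfl⟩ ⟨i', hi', mi', rfl⟩
            ⟨j', hj', mj', rfl⟩ l1 l2 l3
          rcases hcross c' hc' c hc hne.symm i hi j hj i' hi' j' hj' l1 l2 l3 with h | h | h | h
          exacts [mi h, mi' h, mj h, mj' h])
        ⟨i₀, by omega, mi₀, rfl⟩ ⟨i₁, by omega, mi₁, rfl⟩ ⟨i₂, by omega, mi₂, rfl⟩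
        ⟨i₃, by omega, mi₃, rfl⟩ ⟨j₀, by omega, mj₀, rfl⟩ ⟨j₁, by omega, mj₁, rfl⟩
        ⟨j₂, by omega, mj₂, rfl⟩ ⟨j₃, by omega, mj₃, rfl⟩
        ((hmono c hc i₁ (b c) (by omega) (by omega)).trans_le hx1)
        (hx2.trans_lt (hmono c hc (b c + t - 1) i₂ (by omega) (by omega)))
        ((hmono c' hc' j₁ (b c') (by omega) (by omega)).trans_le hx1')
        (hx2'.trans_lt (hmono c' hc' (b c' + t - 1) j₂ (by omega) (by omega)))
      have hlog : ∀ y z : ℕ, 0 < y → 2 * y ≤ z → Nat.log 2 y ≠ Nat.log 2 z := by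
        intro y z hy hyz h
        have h1 := Nat.log_mono_right (b := 2) hyz
        rw [mul_comm, Nat.log_mul_base (by norm_num) hy.ne'] at h1
        omega
      rcases key with ⟨k1, k2⟩ | ⟨k1, k2⟩
      · refine hlog (Φ c') (Φ c) (hΦpos c' hc') (le_trans ?_ hb2) (hk'.trans hk.symm)
        have l1 := hmono' c hc (b c - t) i₁ (by omega) (by omega)
        have l2 := hmono' c hc i₂ (b c + 2 * t - 1) (by omega) (by omega)
        have l3 := hmono' c' hc' j₀ t (by omega) (by omega)
        have l4 := hmono' c' hc' (7 * t - 1) j₃ (by omega) (by omega)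
        simp only [hΦ]; omega
      · refine hlog (Φ c) (Φ c') (hΦpos c hc) (le_trans ?_ hb2') (hk.trans hk'.symm)
        have l1 := hmono' c' hc' (b c' - t) j₁ (by omega) (by omega)
        have l2 := hmono' c' hc' j₂ (b c' + 2 * t - 1) (by omega) (by omega)
        have l3 := hmono' c hc i₀ t (by omega) (by omega)
        have l4 := hmono' c hc (7 * t - 1) i₃ (by omega) (by omega)
        simp only [hΦ]; omega
  calc ∑ k ∈ range lam, #{c ∈ F | Nat.log 2 (Φ c) = k}
      ≤ #(range lam) • (2 * (D / t) + 1) := sum_le_card_nsmul _ _ _ hgroup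
    _ = lam * (2 * (D / t) + 1) := by rw [card_range, smul_eq_mul]

/-- The number of elements of `S` that precede `m`. -/
def rk {α : Type*} (S : Finset α) (pos : α → ℕ) (m : α) : ℕ := #{m' ∈ S | pos m' < pos m}

lemma rk_lt {α : Type*} {S : Finset α} {pos : α → ℕ} {m m' : α} (hm : m ∈ S)
    (h : pos m < pos m') : rk S pos m < rk S pos m' := by
  apply card_lt_card
  rw [ssubset_iff_of_subset]
  · exact ⟨m, by simp [hm, h], by simp⟩
  · intro z hz
    rw [mem_filter] at hz ⊢
    exact ⟨hz.1, hz.2.trans h⟩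

lemma rk_le {α : Type*} (S : Finset α) {pos : α → ℕ} {m m' : α}
    (h : pos m ≤ pos m') : rk S pos m ≤ rk S pos m' := by
  apply card_le_card
  intro z hz
  rw [mem_filter] at hz ⊢
  exact ⟨hz.1, hz.2.trans_le h⟩

lemma rk_lt_card {α : Type*} {S : Finset α} {pos : α → ℕ} {m : α} (hm : m ∈ S) :
    rk S pos m < #S := by
  apply card_lt_card
  rw [ssubset_iff_of_subset (filter_subset _ _)]
  exact ⟨m, hm, by simp⟩

lemma rk_injOn {α : Type*} {S : Finset α} {pos : α → ℕ} (hinj : Set.InjOn pos S) :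
    Set.InjOn (rk S pos) S := by
  intro m hm m' hm' h
  rcases lt_trichotomy (pos m) (pos m') with hl | hl | hl
  · have := rk_lt hm hl; omega
  · exact hinj hm hm' hl
  · have := rk_lt hm' hl; omega

lemma rk_image {α : Type*} {S : Finset α} {pos : α → ℕ} (hinj : Set.InjOn pos S) :
    S.image (rk S pos) = range #S := by
  apply eq_of_subset_of_card_le
  · intro k hk
    obtain ⟨m, hm, rfl⟩ := mem_image.1 hk
    exact mem_range.2 (rk_lt_card hm)
  · rw [card_range, card_image_of_injOn (rk_injOn hinj)]

lemma exists_enum {α : Type*} [Nonempty α] {S : Finset α} {pos : α → ℕ}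
    (hinj : Set.InjOn pos S) : ∃ σ : ℕ → α, (∀ j < #S, σ j ∈ S) ∧
      ∀ i j, i < j → j < #S → pos (σ i) < pos (σ j) := by
  have h : ∀ j, ∃ m, j < #S → m ∈ S ∧ rk S pos m = j := by
    intro j
    by_cases hj : j < #S
    · rw [← mem_range, ← rk_image hinj, mem_image] at hj
      obtain ⟨m, hm, hj⟩ := hj
      exact ⟨m, fun _ => ⟨hm, hj⟩⟩
    · exact ⟨Classical.arbitrary α, fun h => absurd h hj⟩
  choose σ hσ using h
  refine ⟨σ, fun j hj => (hσ j hj).1, fun i j hij hj => ?_⟩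
  by_contra! hcon
  have := rk_le S hcon
  rw [(hσ j hj).2, (hσ i (hij.trans hj)).2] at this
  omega

/-- Sparsification for one system of classes. Let the points of `M` be coloured by `f`, let
crossings of two colour classes involve an exceptional point, and let each exceptional set have
size at most `D`. Then a `1 / (32 * (lam + 1))` fraction of the points can be kept such that at
most `96 * lam * D` of them lie between two kept points of the same colour `c`, for every `c`.

After restricting to colour classes of one dyadic size, keep in each class one block provided by
`exists_sparse_blocks`; double counting shows that for half of the classes the block spans
few points, and only these classes are kept. -/
lemma exists_sparse_subset {α κ : Type*} [DecidableEq α] [DecidableEq κ] (M : Finset α)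
    (pos : α → ℕ) (hinj : Set.InjOn pos M) (lam D : ℕ) (hlam : 1 ≤ lam) (hD : 1 ≤ D)
    (hpos : ∀ m ∈ M, pos m < 2 ^ lam) (f : α → κ) (H : κ → Finset α)
    (hH : ∀ c ∈ M.image f, #(H c) ≤ D) (hself : ∀ m ∈ M, m ∈ H (f m))
    (hcross : ∀ a ∈ M, ∀ b ∈ M, ∀ a' ∈ M, ∀ b' ∈ M, f a = f a' → f b = f b' → f a ≠ f b →
      pos a < pos b → pos b < pos a' → pos a' < pos b' →
      a ∈ H (f b) ∨ a' ∈ H (f b) ∨ b ∈ H (f a) ∨ b' ∈ H (f a)) :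
    ∃ M' ⊆ M, #M ≤ 32 * (lam + 1) * #M' ∧ ∀ c, ∀ X ⊆ M',
      (∀ m ∈ X, ∃ m₁ ∈ M', ∃ m₂ ∈ M', f m₁ = c ∧ f m₂ = c ∧ pos m₁ ≤ pos m ∧ pos m ≤ pos m₂) →
      #X ≤ 96 * lam * D := by
  classical
  rcases M.eq_empty_or_nonempty with rfl | ⟨m₀, hm₀⟩
  · refine ⟨∅, by simp, by simp, fun c X hX _ => ?_⟩
    rw [subset_empty.1 hX]; simp
  have : Nonempty α := ⟨m₀⟩
  set C : κ → Finset α := fun c => {m ∈ M | f m = c} with hC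
  have hMcard : #M ≤ 2 ^ lam := by
    have h := card_le_card_of_injOn (t := range (2 ^ lam)) pos
      (fun m hm => by simpa using hpos m hm) hinj
    rwa [card_range] at h
  -- choice of the dyadic size
  have hmaps : (M : Set α).MapsTo (fun m => Nat.log 2 #(C (f m))) (range (lam + 1) : Finset ℕ) := by
    intro m hm
    simp only [coe_range, Set.mem_Iio]
    have h1 : #(C (f m)) ≤ 2 ^ lam := (card_le_card (filter_subset _ _)).trans hMcard
    have h2 := Nat.log_mono_right (b := 2) h1
    rw [Nat.log_pow (by norm_num)] at h2
    omega
  obtain ⟨e, he⟩ : ∃ e, #M ≤ (lam + 1) * #{m ∈ M | Nat.log 2 #(C (f m)) = e} := by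
    by_contra! hcon
    have h1 := card_eq_sum_card_fiberwise hmaps
    have h2 : ∑ e ∈ range (lam + 1), (lam + 1) * #{m ∈ M | Nat.log 2 #(C (f m)) = e} <
        ∑ e ∈ range (lam + 1), #M :=
      sum_lt_sum_of_nonempty (by simp) fun e _ => hcon e
    rw [← mul_sum, ← h1, sum_const, card_range, smul_eq_mul] at h2
    exact lt_irrefl _ h2
  set Me : Finset α := {m ∈ M | Nat.log 2 #(C (f m)) = e} with hMe
  set cs : Finset κ := Me.image f with hcs
  have hMeM : Me ⊆ M := filter_subset _ _
  have hcs_log : ∀ c ∈ cs, Nat.log 2 #(C c) = e ∧ #(C c) ≠ 0 := by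
    intro c hc
    obtain ⟨m, hm, rfl⟩ := mem_image.1 hc
    refine ⟨(mem_filter.1 hm).2, ?_⟩
    rw [Finset.card_ne_zero]
    exact ⟨m, mem_filter.2 ⟨hMeM hm, rfl⟩⟩
  have hcs_ge : ∀ c ∈ cs, 2 ^ e ≤ #(C c) := by
    intro c hc
    obtain ⟨h1, h2⟩ := hcs_log c hc
    rw [← h1]
    exact Nat.pow_log_le_self 2 h2
  have hcs_lt : ∀ c ∈ cs, #(C c) < 2 ^ (e + 1) := by
    intro c hc
    obtain ⟨h1, h2⟩ := hcs_log c hc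
    rw [← h1]
    exact Nat.lt_pow_succ_log_self (by norm_num) _
  have hMe_le : #Me ≤ #cs * 2 ^ (e + 1) := by
    rw [card_eq_sum_card_image f Me, ← smul_eq_mul]
    refine sum_le_card_nsmul _ _ _ fun c hc => ?_
    refine le_trans (card_le_card ?_) (hcs_lt c hc).le
    exact filter_subset_filter _ hMeM
  have hCM : ∀ c ∈ cs, ∀ m ∈ C c, m ∈ Me ∧ f m = c := by
    intro c hc m hm
    rw [mem_filter] at hm
    refine ⟨mem_filter.2 ⟨hm.1, ?_⟩, hm.2⟩
    rw [hm.2]; exact (hcs_log c hc).1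
  by_cases he3 : e < 3
  · -- classes of bounded size: keep one point of each
    have hg : ∀ c, ∃ m, c ∈ cs → m ∈ C c := by
      intro c
      by_cases hc : c ∈ cs
      · obtain ⟨m, hm⟩ := Finset.card_ne_zero.1 (hcs_log c hc).2
        exact ⟨m, fun _ => hm⟩
      · exact ⟨m₀, fun h => absurd h hc⟩
    choose g hg using hg
    have hgf : ∀ c ∈ cs, f (g c) = c := fun c hc => (hCM c hc _ (hg c hc)).2
    refine ⟨cs.image g, ?_, ?_, ?_⟩
    · intro m hm
      obtain ⟨c, hc, rfl⟩ := mem_image.1 hm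
      exact hMeM (hCM c hc _ (hg c hc)).1
    · rw [card_image_of_injOn (fun c hc c' hc' h => by rw [← hgf c hc, ← hgf c' hc', h])]
      have h1 : 2 ^ (e + 1) ≤ 2 ^ 3 := Nat.pow_le_pow_right (by norm_num) (by omega)
      calc #M ≤ (lam + 1) * #Me := he
        _ ≤ (lam + 1) * (#cs * 2 ^ 3) := by gcongr; exact hMe_le.trans (by gcongr)
        _ ≤ 32 * (lam + 1) * #cs := by nlinarith [Nat.zero_le ((lam + 1) * #cs)]
    · intro c X hX hXc
      have h1 : #X ≤ 1 := by
        rw [card_le_one]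
        have : ∀ m ∈ X, m = g c := by
          intro m hm
          obtain ⟨m₁, hm₁, m₂, hm₂, h1, h2, h3, h4⟩ := hXc m hm
          obtain ⟨c₁, hc₁, rfl⟩ := mem_image.1 hm₁
          obtain ⟨c₂, hc₂, rfl⟩ := mem_image.1 hm₂
          obtain ⟨c₃, hc₃, rfl⟩ := mem_image.1 (hX hm)
          rw [hgf _ hc₁] at h1
          rw [hgf _ hc₂] at h2
          subst h1
          subst h2
          apply hinj
          · exact hMeM (hCM _ hc₃ _ (hg _ hc₃)).1
          · exact hMeM (hCM _ hc₁ _ (hg _ hc₁)).1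
          · omega
        intro a ha b hb
        rw [this a ha, this b hb]
      have h2 : 1 ≤ lam * D := Nat.one_le_iff_ne_zero.2 (by positivity)
      nlinarith
  · -- large classes
    obtain ⟨k, rfl⟩ : ∃ k, e = k + 3 := ⟨e - 3, by omega⟩
    set t : ℕ := 2 ^ k with ht
    have ht1 : 1 ≤ t := Nat.one_le_two_pow
    have e8 : 2 ^ (k + 3) = 8 * t := by rw [ht]; ring
    have e16 : 2 ^ (k + 3 + 1) = 16 * t := by rw [ht]; ring
    rw [e8] at hcs_ge
    rw [e16] at hMe_le
    have hσ : ∀ c, ∃ σ : ℕ → α, (∀ j < #(C c), σ j ∈ C c) ∧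
        ∀ i j, i < j → j < #(C c) → pos (σ i) < pos (σ j) :=
      fun c => exists_enum (hinj.mono (fun m hm => (mem_filter.1 hm).1))
    choose σ hσ1 hσ2 using hσ
    have hσC : ∀ c ∈ cs, ∀ j < 8 * t, σ c j ∈ C c :=
      fun c hc j hj => hσ1 c j (hj.trans_le (hcs_ge c hc))
    have hσf : ∀ c ∈ cs, ∀ j < 8 * t, f (σ c j) = c :=
      fun c hc j hj => (hCM c hc _ (hσC c hc j hj)).2
    have hσMe : ∀ c ∈ cs, ∀ j < 8 * t, σ c j ∈ Me :=
      fun c hc j hj => (hCM c hc _ (hσC c hc j hj)).1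
    have hσmono : ∀ c ∈ cs, ∀ i j, i < j → j < 8 * t → pos (σ c i) < pos (σ c j) :=
      fun c hc i j hij hj => hσ2 c i j hij (hj.trans_le (hcs_ge c hc))
    have hHcs : ∀ c ∈ cs, #(H c) ≤ D := fun c hc => hH c (image_subset_image hMeM hc)
    obtain ⟨b, hb, hdepth⟩ := exists_sparse_blocks cs t D lam ht1 pos σ H f hσf hσmono
      (fun c hc j hj => hpos _ (hMeM (hσMe c hc j hj))) hHcs
      (by
        intro c hc c' hc' hne i hi j hj h
        have := hinj (hMeM (hσMe c hc i hi)) (hMeM (hσMe c' hc' j hj)) h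
        apply hne
        rw [← hσf c hc i hi, ← hσf c' hc' j hj, this])
      (by
        intro c hc c' hc' hne i₁ hi₁ j₁ hj₁ i₂ hi₂ j₂ hj₂ l1 l2 l3
        have h := hcross _ (hMeM (hσMe c hc i₁ hi₁)) _ (hMeM (hσMe c' hc' j₁ hj₁))
          _ (hMeM (hσMe c hc i₂ hi₂)) _ (hMeM (hσMe c' hc' j₂ hj₂))
        rw [hσf c hc i₁ hi₁, hσf c hc i₂ hi₂, hσf c' hc' j₁ hj₁, hσf c' hc' j₂ hj₂] at h
        exact h rfl rfl hne l1 l2 l3)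
    have hb8 : ∀ c ∈ cs, b c + t ≤ 8 * t := by
      intro c hc
      rcases hb c hc with h | h <;> omega
    -- `Lc c`: the points of `Me` spanned by the chosen block of `c`
    set Lc : κ → Finset α := fun c =>
      {m ∈ Me | pos (σ c (b c)) ≤ pos m ∧ pos m ≤ pos (σ c (b c + t - 1))} with hLc
    have hcsne : cs.Nonempty := by
      rw [hcs, image_nonempty, ← card_pos]
      by_contra! h0
      have h1 : 0 < #M := card_pos.2 ⟨m₀, hm₀⟩
      rw [Nat.le_zero.1 h0] at he
      omega
    have htD : t ≤ D := by
      obtain ⟨c, hc⟩ := hcsne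
      have h1 : C c ⊆ H c := by
        intro m hm
        have := hself m (mem_filter.1 hm).1
        rwa [(mem_filter.1 hm).2] at this
      have h2 := (card_le_card h1).trans (hHcs c hc)
      have h3 := hcs_ge c hc
      omega
    have hsum : ∑ c ∈ cs, #(Lc c) ≤ #cs * (48 * lam * D) := by
      have h1 : ∑ c ∈ cs, #(Lc c) = ∑ m ∈ Me,
          #{c ∈ cs | pos (σ c (b c)) ≤ pos m ∧ pos m ≤ pos (σ c (b c + t - 1))} := by
        simp only [hLc, card_filter]
        exact sum_comm
      rw [h1]
      have h3 : t * (2 * (D / t) + 1) ≤ 3 * D := by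
        have := Nat.mul_div_le D t
        nlinarith
      calc _ ≤ #Me • (lam * (2 * (D / t) + 1)) :=
            sum_le_card_nsmul _ _ _ fun m _ => hdepth (pos m)
        _ ≤ (#cs * (16 * t)) * (lam * (2 * (D / t) + 1)) := by
            rw [smul_eq_mul]; gcongr
        _ = #cs * (16 * lam) * (t * (2 * (D / t) + 1)) := by ring
        _ ≤ #cs * (16 * lam) * (3 * D) := by gcongr
        _ = #cs * (48 * lam * D) := by ring
    set G : Finset κ := {c ∈ cs | #(Lc c) ≤ 96 * lam * D} with hG
    have hGcard : #cs ≤ 2 * #G := by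
      have h1 : #{c ∈ cs | ¬ #(Lc c) ≤ 96 * lam * D} * (96 * lam * D) ≤ ∑ c ∈ cs, #(Lc c) := by
        refine le_trans ?_ (sum_le_sum_of_subset (filter_subset (fun c => ¬ #(Lc c) ≤ 96 * lam * D) cs))
        rw [← smul_eq_mul]
        refine card_nsmul_le_sum _ _ _ fun c hc => ?_
        have := (mem_filter.1 hc).2
        omega
      have h2 := card_filter_add_card_filter_not (s := cs) (fun c => #(Lc c) ≤ 96 * lam * D)
      have h3 : 0 < 48 * lam * D := by positivity
      have h4 : (2 * #{c ∈ cs | ¬ #(Lc c) ≤ 96 * lam * D}) * (48 * lam * D) ≤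
          #cs * (48 * lam * D) := by
        refine le_trans (le_of_eq ?_) (h1.trans hsum)
        ring
      have h5 := Nat.le_of_mul_le_mul_right h4 h3
      rw [hG]
      omega
    have hGcs : G ⊆ cs := filter_subset _ _
    set blk : κ → Finset α := fun c => (Ico (b c) (b c + t)).image (σ c) with hblk
    have hblk_mem : ∀ c ∈ cs, ∀ m ∈ blk c, m ∈ Me ∧ f m = c ∧ m ∈ Lc c := by
      intro c hc m hm
      obtain ⟨j, hj, rfl⟩ := mem_image.1 hm
      rw [mem_Ico] at hj
      have h8 := hb8 c hc
      have hj8 : j < 8 * t := by omega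
      refine ⟨hσMe c hc j hj8, hσf c hc j hj8, mem_filter.2 ⟨hσMe c hc j hj8, ?_, ?_⟩⟩
      · rcases hj.1.eq_or_lt with h | h
        · rw [h]
        · exact (hσmono c hc _ _ h hj8).le
      · rcases (show j ≤ b c + t - 1 by omega).eq_or_lt with h | h
        · rw [h]
        · exact (hσmono c hc _ _ h (by omega)).le
    have hblk_card : ∀ c ∈ cs, #(blk c) = t := by
      intro c hc
      rw [hblk, card_image_of_injOn, Nat.card_Ico]
      · omega
      · intro i hi j hj h
        rw [coe_Ico, Set.mem_Ico] at hi hj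
        have h8 := hb8 c hc
        rcases lt_trichotomy i j with hl | hl | hl
        · have := hσmono c hc i j hl (by omega)
          rw [h] at this; omega
        · exact hl
        · have := hσmono c hc j i hl (by omega)
          rw [h] at this; omega
    refine ⟨G.biUnion blk, ?_, ?_, ?_⟩
    · intro m hm
      obtain ⟨c, hc, hm⟩ := mem_biUnion.1 hm
      exact hMeM (hblk_mem c (hGcs hc) m hm).1
    · rw [card_biUnion]
      · rw [sum_congr rfl (fun c hc => hblk_card c (hGcs hc)), sum_const, smul_eq_mul]
        calc #M ≤ (lam + 1) * #Me := he
          _ ≤ (lam + 1) * ((2 * #G) * (16 * t)) := by gcongr; exact hMe_le.trans (by gcongr)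
          _ = 32 * (lam + 1) * (#G * t) := by ring
      · intro c hc c' hc' hne
        rw [Function.onFun, disjoint_left]
        intro m hm hm'
        apply hne
        rw [← (hblk_mem c (hGcs hc) m hm).2.1, (hblk_mem c' (hGcs hc') m hm').2.1]
    · intro c X hX hXc
      rcases X.eq_empty_or_nonempty with rfl | ⟨m', hm'⟩
      · simp
      have hmem : ∀ m ∈ G.biUnion blk, f m = c → c ∈ G ∧ m ∈ Lc c := by
        intro m hm hfm
        obtain ⟨c', hc', hm⟩ := mem_biUnion.1 hm
        have := hblk_mem c' (hGcs hc') m hm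
        rw [this.2.1] at hfm
        subst hfm
        exact ⟨hc', this.2.2⟩
      have hcG : c ∈ G := by
        obtain ⟨m₁, hm₁, -, -, h1, -⟩ := hXc m' hm'
        exact (hmem m₁ hm₁ h1).1
      refine le_trans (card_le_card ?_) (mem_filter.1 hcG).2
      intro m hm
      obtain ⟨m₁, hm₁, m₂, hm₂, h1, h2, h3, h4⟩ := hXc m hm
      have hL1 := (mem_filter.1 (hmem m₁ hm₁ h1).2).2
      have hL2 := (mem_filter.1 (hmem m₂ hm₂ h2).2).2
      obtain ⟨c', hc', hmc⟩ := mem_biUnion.1 (hX hm)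
      exact mem_filter.2 ⟨(hblk_mem c' (hGcs hc') m hmc).1, hL1.1.trans h3, h4.trans hL2.2⟩

/-- Keeping every `K`-th point divides the number of points of every interval by `K`, up to
rounding. -/
lemma exists_sample {α : Type*} [DecidableEq α] (M : Finset α) (pos : α → ℕ)
    (hinj : Set.InjOn pos M) (K : ℕ) (hK : 1 ≤ K) :
    ∃ M' ⊆ M, #M ≤ K * #M' ∧ ∀ m₁ ∈ M', ∀ m₂ ∈ M',
      K * #{m ∈ M' | pos m₁ ≤ pos m ∧ pos m ≤ pos m₂} ≤
        #{m ∈ M | pos m₁ ≤ pos m ∧ pos m ≤ pos m₂} + K := by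
  refine ⟨{m ∈ M | K ∣ rk M pos m}, filter_subset _ _, ?_, ?_⟩
  · have h : #(range #M) ≤ #({m ∈ M | K ∣ rk M pos m}.image (rk M pos) ×ˢ range K) := by
      refine card_le_card_of_injOn (fun i => (i / K * K, i % K)) ?_ ?_
      · intro i hi
        simp only [coe_range, Set.mem_Iio] at hi
        have h1 : i / K * K < #M := (Nat.div_mul_le_self i K).trans_lt hi
        rw [← mem_range, ← rk_image hinj, mem_image] at h1
        obtain ⟨m, hm, hmi⟩ := h1
        simp only [mem_coe, mem_product, mem_range]
        refine ⟨mem_image.2 ⟨m, mem_filter.2 ⟨hm, ?_⟩, hmi⟩, Nat.mod_lt _ (by omega)⟩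
        rw [hmi]; exact Dvd.intro_left _ rfl
      · intro i _ j _ h
        simp only [Prod.mk.injEq] at h
        rw [← Nat.div_add_mod' i K, ← Nat.div_add_mod' j K, h.1, h.2]
    rw [card_range, card_product, card_range] at h
    calc #M ≤ _ := h
      _ ≤ #{m ∈ M | K ∣ rk M pos m} * K := by gcongr; exact card_image_le
      _ = _ := mul_comm _ _
  · intro m₁ hm₁ m₂ hm₂
    rw [mem_filter] at hm₁ hm₂
    obtain ⟨hm₁, q₁, hq₁⟩ := hm₁
    obtain ⟨hm₂, q₂, hq₂⟩ := hm₂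
    rcases lt_or_ge (pos m₂) (pos m₁) with hlt | hle
    · rw [filter_false_of_mem (fun m _ h => by omega)]
      simp
    have h1 : #{m ∈ {m ∈ M | K ∣ rk M pos m} | pos m₁ ≤ pos m ∧ pos m ≤ pos m₂} ≤
        #(Icc q₁ q₂) := by
      refine card_le_card_of_injOn (fun m => rk M pos m / K) ?_ ?_
      · intro m hm
        simp only [coe_filter, mem_filter, Set.mem_ofPred_eq] at hm
        obtain ⟨⟨hm, q, hq⟩, hl, hr⟩ := hm
        simp only [mem_coe, mem_Icc, hq, Nat.mul_div_cancel_left q (show 0 < K by omega)]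
        have e1 := rk_le M hl
        have e2 := rk_le M hr
        rw [hq₁, hq] at e1
        rw [hq₂, hq] at e2
        exact ⟨Nat.le_of_mul_le_mul_left e1 (by omega), Nat.le_of_mul_le_mul_left e2 (by omega)⟩
      · intro m hm m' hm' h
        simp only [coe_filter, mem_filter, Set.mem_ofPred_eq] at hm hm' h
        obtain ⟨⟨hm, hd⟩, -⟩ := hm
        obtain ⟨⟨hm', hd'⟩, -⟩ := hm'
        apply rk_injOn hinj hm hm'
        rw [← Nat.div_mul_cancel hd, ← Nat.div_mul_cancel hd', h]
    have h2 : rk M pos m₂ - rk M pos m₁ ≤ #{m ∈ M | pos m₁ ≤ pos m ∧ pos m ≤ pos m₂} := by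
      have : ({m ∈ M | pos m < pos m₂}) ⊆
          {m ∈ M | pos m < pos m₁} ∪ {m ∈ M | pos m₁ ≤ pos m ∧ pos m ≤ pos m₂} := by
        intro m hm
        simp only [mem_union, mem_filter] at hm ⊢
        rcases lt_or_ge (pos m) (pos m₁) with h | h
        · exact Or.inl ⟨hm.1, h⟩
        · exact Or.inr ⟨hm.1, h, hm.2.le⟩
      have h3 := (card_le_card this).trans (card_union_le _ _)
      unfold rk
      omega
    rw [Nat.card_Icc] at h1
    have h4 := rk_le M hle
    rw [hq₁, hq₂] at h2 h4
    have h5 : q₁ ≤ q₂ := Nat.le_of_mul_le_mul_left h4 (by omega)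
    calc K * _ ≤ K * (q₂ + 1 - q₁) := by gcongr
      _ = (K * q₂ - K * q₁) + K := by
        obtain ⟨r, rfl⟩ := Nat.exists_eq_add_of_le h5
        rw [mul_add, Nat.add_sub_cancel_left, show q₁ + r + 1 - q₁ = r + 1 by omega]
        ring
      _ ≤ _ := by gcongr

/-! ### One level of the hierarchy -/

lemma NodeDisjointRoutable.mono {V : Type*} {G : SimpleGraph V} {M M' : Finset (V × V)}
    (h : NodeDisjointRoutable G M) (hM : M' ⊆ M) : NodeDisjointRoutable G M' := by
  obtain ⟨P, hP, hd⟩ := h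
  refine ⟨fun m => P ⟨m.1, hM m.2⟩, fun m => hP _, fun m m' hne => hd _ _ ?_⟩
  intro h
  apply hne
  exact Subtype.ext (congrArg (fun x => x.1) h)

lemma sources_injOn {ℓ : ℕ} {M : Finset DPair} (hsrc : ∀ m ∈ M, OnTopRow ℓ m.1)
    (hM : NodeDisjointRoutable (gridG ℓ) M) : Set.InjOn (fun m : DPair => m.1.2) M := by
  obtain ⟨P, -, hd⟩ := hM
  intro m hm m' hm' h
  by_contra hne
  have h1 : m.1 = m'.1 := Prod.ext ((hsrc m hm).1.trans (hsrc m' hm').1.symm) h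
  refine hd ⟨m, hm⟩ ⟨m', hm'⟩ (by simpa [Subtype.ext_iff] using hne) m.1
    (SimpleGraph.Walk.start_mem_support _) ?_
  rw [h1]
  exact SimpleGraph.Walk.start_mem_support _

lemma square_unique {ℓ d : ℕ} {Qs : Finset SquareSpec} (hQ : IsCanonicalSquares ℓ d Qs)
    {Q Q' : SquareSpec} (h : Q ∈ Qs) (h' : Q' ∈ Qs) {z : Vtx} (hz : memSquare z Q)
    (hz' : memSquare z Q') : Q = Q' := by
  obtain ⟨I₁, I₂, h1, h2, rfl⟩ := hQ
  rw [mem_product] at h h'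
  have key : ∀ {I : Finset (Finset ℕ)}, IsCanonicalIntervals ℓ d I → ∀ J ∈ I, ∀ J' ∈ I,
      ∀ i ∈ J, i ∈ J' → J = J' := by
    intro I hI J hJ J' hJ' i hi hi'
    by_contra hne
    have := hI.2 J hJ J' hJ' hne i hi i hi'
    simp only [sub_self, abs_zero] at this
    omega
  exact Prod.ext (key h1 _ h.1 _ h'.1 _ hz.1 hz'.1) (key h2 _ h.2 _ h'.2 _ hz.2 hz'.2)

lemma square_sides {ℓ d : ℕ} {Qs : Finset SquareSpec} (hQ : IsCanonicalSquares ℓ d Qs)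
    {Q : SquareSpec} (h : Q ∈ Qs) :
    IsIntervalIn ℓ Q.1 ∧ IsIntervalIn ℓ Q.2 ∧ #Q.1 = d ∧ #Q.2 = d := by
  obtain ⟨I₁, I₂, h1, h2, rfl⟩ := hQ
  rw [mem_product] at h
  exact ⟨(h1.1 _ h.1).1, (h2.1 _ h.2).1, (h1.1 _ h.1).2, (h2.1 _ h.2).2⟩

/-- One canonical family of squares: a `1 / O(lam)` fraction of a routable set of demand pairs
has shadows of size `O(lam * d)`. The points of `exists_sparse_subset` are the sources, coloured by
the square of the destination; the exceptional set of a square consists of the pairs whose path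
visits the square, at most `4 * d` of them since each uses up a boundary vertex. If colours `Q`
and `Q'` cross, the two paths ending in `Q` together with `Q` meet the two paths ending in `Q'`
together with `Q'`, so one of the four paths visits the square of the other colour. -/
lemma exists_small_shadows {ℓ lam d : ℕ} (hℓ : ℓ < 2 ^ lam) (hlam : 1 ≤ lam) (hd : 1 ≤ d)
    {M : Finset DPair} (hsrc : ∀ m ∈ M, OnTopRow ℓ m.1)
    (hM : NodeDisjointRoutable (gridG ℓ) M) {Qs : Finset SquareSpec}
    (hQ : IsCanonicalSquares ℓ d Qs) (hdisj : ∀ Q ∈ Qs, (1 : ℕ) ∉ Q.1)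
    (hdest : ∀ m ∈ M, ∃ Q ∈ Qs, memSquare m.2 Q) :
    ∃ M' ⊆ M, #M ≤ 32 * (lam + 1) * #M' ∧
      ∀ Q ∈ Qs, shadowCount M' Q ≤ 96 * lam * (4 * d) := by
  classical
  have hinj := sources_injOn hsrc hM
  obtain ⟨P, -, hPd⟩ := hM
  have hPd' : ∀ m m' : {m // m ∈ M}, ∀ z, z ∈ (P m).support → z ∈ (P m').support → m = m' := by
    intro m m' z hz hz'
    by_contra hne
    exact hPd m m' hne z hz hz'
  have hf : ∀ m : DPair, ∃ Q, m ∈ M → Q ∈ Qs ∧ memSquare m.2 Q := by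
    intro m
    by_cases hm : m ∈ M
    · obtain ⟨Q, h1, h2⟩ := hdest m hm
      exact ⟨Q, fun _ => ⟨h1, h2⟩⟩
    · exact ⟨(∅, ∅), fun h => absurd h hm⟩
  choose f hf using hf
  set H : SquareSpec → Finset DPair := fun Q =>
    {m ∈ M | ∃ hm : m ∈ M, ∃ z ∈ (P ⟨m, hm⟩).support, memSquare z Q} with hHdef
  have hmemH : ∀ (m : {m // m ∈ M}) (Q : SquareSpec), ∀ z ∈ (P m).support, memSquare z Q →
      m.1 ∈ H Q :=
    fun m Q z hz hzQ => mem_filter.2 ⟨m.2, m.2, z, hz, hzQ⟩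
  obtain ⟨M', hM', hcard, hX⟩ := exists_sparse_subset M (fun m => m.1.2) hinj lam (4 * d) hlam
    (by omega) (fun m hm => (hsrc m hm).2.2.trans_lt hℓ) f H
    (by
      intro Q hQm
      obtain ⟨m₀, hm₀, rfl⟩ := mem_image.1 hQm
      obtain ⟨s1, s2, s3, s4⟩ := square_sides hQ (hf m₀ hm₀).1
      obtain ⟨B, hB, hBd⟩ := exists_boundary s1 s2 s3 s4
      have hg : ∀ m : DPair, ∃ z, m ∈ H (f m₀) → z ∈ B ∧
          ∃ hm : m ∈ M, z ∈ (P ⟨m, hm⟩).support := by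
        intro m
        by_cases hm : m ∈ H (f m₀)
        · obtain ⟨-, hmM, hz⟩ := mem_filter.1 hm
          obtain ⟨z, hz1, hz2⟩ := hBd (P ⟨m, hmM⟩) (by
            intro hmem
            have h1 := hmem.1
            rw [(hsrc m hmM).1] at h1
            exact hdisj _ (hf m₀ hm₀).1 h1) hz
          exact ⟨z, fun _ => ⟨hz2, hmM, hz1⟩⟩
        · exact ⟨(0, 0), fun h => absurd h hm⟩
      choose g hg using hg
      refine le_trans (card_le_card_of_injOn g (fun m hm => (hg m hm).1) ?_) hB
      intro m hm m' hm' h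
      obtain ⟨-, h1, h2⟩ := hg m hm
      obtain ⟨-, h1', h2'⟩ := hg m' hm'
      rw [← h] at h2'
      exact congrArg Subtype.val (hPd' ⟨m, h1⟩ ⟨m', h1'⟩ _ h2 h2'))
    (fun m hm => hmemH ⟨m, hm⟩ _ _ (SimpleGraph.Walk.end_mem_support _) (hf m hm).2)
    (by
      intro a ha b hb a' ha' b' hb' haa hbb hab l1 l2 l3
      -- a walk from one source to another through the common square
      have hwalk : ∀ m (hm : m ∈ M) m' (hm' : m' ∈ M), f m = f m' →
          ∃ W : (gridG ℓ).Walk (1, m.1.2) (1, m'.1.2), ∀ z ∈ W.support,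
            z ∈ (P ⟨m, hm⟩).support ∨ z ∈ (P ⟨m', hm'⟩).support ∨ memSquare z (f m) := by
        intro m hm m' hm' hmm
        have e : m.1 = (1, m.1.2) := Prod.ext (hsrc m hm).1 rfl
        have e' : m'.1 = (1, m'.1.2) := Prod.ext (hsrc m' hm').1 rfl
        rw [← e, ← e']
        obtain ⟨s1, s2, -, -⟩ := square_sides hQ (hf m hm).1
        obtain ⟨W, hW⟩ := square_walk (u := m.2) (v := m'.2) s1 s2 (hf m hm).2
          (hmm ▸ (hf m' hm').2)
        refine ⟨((P ⟨m, hm⟩).append W).append (P ⟨m', hm'⟩).reverse, fun z hz => ?_⟩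
        rw [SimpleGraph.Walk.mem_support_append_iff, SimpleGraph.Walk.mem_support_append_iff,
          SimpleGraph.Walk.support_reverse, List.mem_reverse] at hz
        rcases hz with (hz | hz) | hz
        · exact Or.inl hz
        · exact Or.inr (Or.inr (hW z hz))
        · exact Or.inr (Or.inl hz)
      obtain ⟨W, hW⟩ := hwalk a ha a' ha' haa
      obtain ⟨W', hW'⟩ := hwalk b hb b' hb' hbb
      obtain ⟨z, hz', hz⟩ := walks_meet_s1 l1 l2 l3 W W'
      have hdiff : ∀ m (hm : m ∈ M) m' (hm' : m' ∈ M), f m ≠ f m' →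
          z ∈ (P ⟨m, hm⟩).support → z ∈ (P ⟨m', hm'⟩).support → False := by
        intro m hm m' hm' hne h1 h2
        exact hne (congrArg (fun x => f x.1) (hPd' ⟨m, hm⟩ ⟨m', hm'⟩ z h1 h2))
      rcases hW z hz with h | h | h <;> rcases hW' z hz' with h' | h' | h'
      · exact (hdiff a ha b hb hab h h').elim
      · exact (hdiff a ha b' hb' (hbb ▸ hab) h h').elim
      · exact Or.inl (hmemH ⟨a, ha⟩ _ z h h')
      · exact (hdiff a' ha' b hb (haa ▸ hab) h h').elim
      · exact (hdiff a' ha' b' hb' (hbb ▸ haa ▸ hab) h h').elim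
      · exact Or.inr (Or.inl (hmemH ⟨a', ha'⟩ _ z h h'))
      · exact Or.inr (Or.inr (Or.inl (hmemH ⟨b, hb⟩ _ z h' h)))
      · exact Or.inr (Or.inr (Or.inr (hmemH ⟨b', hb'⟩ _ z h' h)))
      · exact (hab (square_unique hQ (hf a ha).1 (hf b hb).1 h h')).elim)
  refine ⟨M', hM', hcard, fun Q hQm => ?_⟩
  refine hX Q _ (filter_subset _ _) fun m hm => ?_
  obtain ⟨-, m₁, hm₁, hq₁, m₂, hm₂, hq₂, h1, h2⟩ := mem_filter.1 hm
  refine ⟨m₁, hm₁, m₂, hm₂, ?_, ?_, h1, h2⟩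
  · exact square_unique hQ (hf m₁ (hM' hm₁)).1 hQm (hf m₁ (hM' hm₁)).2 hq₁
  · exact square_unique hQ (hf m₂ (hM' hm₂)).1 hQm (hf m₂ (hM' hm₂)).2 hq₂

/-! ### All levels, and the final sampling -/

lemma shadowCount_mono {M M' : Finset DPair} (h : M' ⊆ M) (Q : SquareSpec) :
    shadowCount M' Q ≤ shadowCount M Q := by
  apply card_le_card
  intro m hm
  rw [mem_filter] at hm ⊢
  obtain ⟨hm, m₁, h1, h2, m₂, h3, h4⟩ := hm
  exact ⟨h hm, m₁, h h1, h2, m₂, h h3, h4⟩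

lemma mem_level {ℓ η ρ : ℕ} {Qs : ℕ → Finset SquareSpec} (hH : IsHierSquares ℓ η ρ Qs) {z : Vtx}
    (hz : ∃ Q ∈ Qs ρ, memSquare z Q) {h : ℕ} (h1 : 1 ≤ h) (h2 : h ≤ ρ) :
    ∃ Q ∈ Qs h, memSquare z Q := by
  induction h2 using Nat.decreasingInduction with
  | self => exact hz
  | of_succ k hk ih =>
    obtain ⟨Q, hQ, hzQ⟩ := ih (by omega)
    obtain ⟨Q', hQ', hs1, hs2⟩ := hH.2 (k + 1) (by omega) hk Q hQ
    exact ⟨Q', by simpa using hQ', hs1 hzQ.1, hs2 hzQ.2⟩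

lemma exists_all_levels {ℓ lam η ρ : ℕ} (hℓ : ℓ < 2 ^ lam) (hlam : 1 ≤ lam) (hη : 1 ≤ η)
    {M : Finset DPair} (hsrc : ∀ m ∈ M, OnTopRow ℓ m.1)
    (hM : NodeDisjointRoutable (gridG ℓ) M) {Qs : ℕ → Finset SquareSpec}
    (hH : IsHierSquares ℓ η ρ Qs)
    (hdisj : ∀ h, 1 ≤ h → h ≤ ρ → ∀ Q ∈ Qs h, (1 : ℕ) ∉ Q.1)
    (hdest : ∀ m ∈ M, ∃ Q ∈ Qs ρ, memSquare m.2 Q) (k : ℕ) (hk : k ≤ ρ) :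
    ∃ M' ⊆ M, #M ≤ (32 * (lam + 1)) ^ k * #M' ∧ ∀ h, 1 ≤ h → h ≤ k →
      ∀ Q ∈ Qs h, shadowCount M' Q ≤ 96 * lam * (4 * η ^ (ρ - h + 3)) := by
  induction k with
  | zero => exact ⟨M, Subset.rfl, by simp, fun h h1 h2 => by omega⟩
  | succ k ih =>
    obtain ⟨M₁, hM₁, hc₁, hs₁⟩ := ih (by omega)
    obtain ⟨M₂, hM₂, hc₂, hs₂⟩ := exists_small_shadows hℓ hlam (Nat.one_le_pow _ _ hη)
      (fun m hm => hsrc m (hM₁ hm)) (hM.mono hM₁) (hH.1 (k + 1) (by omega) hk)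
      (hdisj (k + 1) (by omega) hk)
      (fun m hm => mem_level hH (hdest m (hM₁ hm)) (by omega) hk)
    refine ⟨M₂, hM₂.trans hM₁, ?_, fun h h1 h2 Q hQ => ?_⟩
    · calc #M ≤ (32 * (lam + 1)) ^ k * #M₁ := hc₁
        _ ≤ (32 * (lam + 1)) ^ k * (32 * (lam + 1) * #M₂) := by gcongr
        _ = (32 * (lam + 1)) ^ (k + 1) * #M₂ := by ring
    · rcases h2.eq_or_lt with rfl | hlt
      · exact hs₂ Q hQ
      · exact (shadowCount_mono hM₂ Q).trans (hs₁ h h1 (by omega) Q hQ)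

/-- Sampling every `768 * lam * η ^ 2`-th source turns shadows of size `384 * lam * d` into
shadows of size `d / η ^ 2`, rounding included because `d ≥ 2 * η ^ 2`. -/
lemma exists_sampled {M : Finset DPair} (hinj : Set.InjOn (fun m : DPair => m.1.2) M)
    {lam η : ℕ} (hlam : 1 ≤ lam) (hη : 1 ≤ η) :
    ∃ M' ⊆ M, #M ≤ 768 * lam * η ^ 2 * #M' ∧ ∀ Q d, 2 * η ^ 2 ≤ d →
      shadowCount M Q ≤ 96 * lam * (4 * d) → η ^ 2 * shadowCount M' Q ≤ d := by
  have hK : 1 ≤ 768 * lam * η ^ 2 := Nat.one_le_iff_ne_zero.2 (by positivity)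
  obtain ⟨M', hM', hc, hs⟩ := exists_sample M (fun m : DPair => m.1.2) hinj _ hK
  refine ⟨M', hM', hc, fun Q d hd hQ => ?_⟩
  rcases ({m ∈ M' | memSquare m.2 Q}).eq_empty_or_nonempty with h0 | hne
  · have : shadowCount M' Q = 0 := by
      unfold shadowCount
      rw [card_eq_zero, filter_eq_empty_iff]
      rintro m - ⟨m₁, h1, h2, -⟩
      have : m₁ ∈ ({m ∈ M' | memSquare m.2 Q}) := mem_filter.2 ⟨h1, h2⟩
      rw [h0] at this
      simp at this
    rw [this]; simp
  · obtain ⟨m₁, hm₁, hmin⟩ := exists_min_image _ (fun m : DPair => m.1.2) hne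
    obtain ⟨m₂, hm₂, hmax⟩ := exists_max_image _ (fun m : DPair => m.1.2) hne
    rw [mem_filter] at hm₁ hm₂
    have h1 : shadowCount M' Q ≤ #{m ∈ M' | m₁.1.2 ≤ m.1.2 ∧ m.1.2 ≤ m₂.1.2} := by
      apply card_le_card
      intro m hm
      obtain ⟨hm, a, ha, haQ, b, hb, hbQ, hab⟩ := mem_filter.1 hm
      exact mem_filter.2 ⟨hm, (hmin a (mem_filter.2 ⟨ha, haQ⟩)).trans hab.1,
        hab.2.trans (hmax b (mem_filter.2 ⟨hb, hbQ⟩))⟩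
    have h2 : #{m ∈ M | m₁.1.2 ≤ m.1.2 ∧ m.1.2 ≤ m₂.1.2} ≤ shadowCount M Q := by
      apply card_le_card
      intro m hm
      obtain ⟨hm, hab⟩ := mem_filter.1 hm
      exact mem_filter.2 ⟨hm, m₁, hM' hm₁.1, hm₁.2, m₂, hM' hm₂.1, hm₂.2, hab⟩
    have h3 := hs m₁ hm₁.1 m₂ hm₂.1
    have h4 : (768 * lam) * (η ^ 2 * shadowCount M' Q) ≤ (768 * lam) * d := by
      calc (768 * lam) * (η ^ 2 * shadowCount M' Q)
          = 768 * lam * η ^ 2 * shadowCount M' Q := by ring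
        _ ≤ 768 * lam * η ^ 2 * #{m ∈ M' | m₁.1.2 ≤ m.1.2 ∧ m.1.2 ≤ m₂.1.2} := by gcongr
        _ ≤ _ := h3
        _ ≤ 96 * lam * (4 * d) + 768 * lam * η ^ 2 := by gcongr; exact h2.trans hQ
        _ = 384 * lam * d + 384 * lam * (2 * η ^ 2) := by ring
        _ ≤ 384 * lam * d + 384 * lam * d := by gcongr
        _ = (768 * lam) * d := by ring
    exact Nat.le_of_mul_le_mul_left h4 (by omega)

/-- The total loss, `32 * (lam + 1)` for each of the `ρ` levels and `768 * lam * η ^ 2` for the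
sampling, is within the allowed factor. -/
lemma loss_bound {X : ℝ} {lam η ρ : ℕ} (hX : (2 : ℝ) ^ (27 : ℕ) ≤ X) (hlam : (lam : ℝ) ≤ X / 2 + 1)
    (hη : η = 2 ^ ⌈Real.sqrt X⌉₊) (hρ : (ρ : ℝ) ≤ Real.sqrt X) :
    2 ^ (2 * Real.sqrt X) * ((32 * (lam + 1) : ℝ) ^ ρ * (768 * lam * (η : ℝ) ^ 2)) ≤
      (2 : ℝ) ^ (8 * Real.sqrt X * Real.logb 2 X) := by
  have hX' : (134217728 : ℝ) ≤ X := by norm_num at hX; linarith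
  have hX0 : 0 < X := by linarith
  set x := Real.sqrt X with hx
  set L := Real.logb 2 X with hL
  have hx1 : 1 ≤ x := by
    rw [hx, Real.one_le_sqrt]; linarith
  have hL27 : 27 ≤ L := by
    rw [hL, Real.le_logb_iff_rpow_le (by norm_num) hX0]
    have := hX
    exact_mod_cast this
  have hXL : (2 : ℝ) ^ L = X := Real.rpow_logb (by norm_num) (by norm_num) hX0
  have hXL2 : (2 : ℝ) ^ (2 * L) = X ^ 2 := by
    rw [mul_comm, Real.rpow_mul (by norm_num), hXL]; norm_num
  have h1 : (32 * (lam + 1) : ℝ) ^ ρ ≤ 2 ^ (2 * L * x) := by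
    calc (32 * (lam + 1) : ℝ) ^ ρ ≤ ((2 : ℝ) ^ (2 * L)) ^ ρ := by
          gcongr
          rw [hXL2]; nlinarith
      _ = 2 ^ (2 * L * ρ) := by rw [← Real.rpow_natCast, ← Real.rpow_mul (by norm_num)]
      _ ≤ 2 ^ (2 * L * x) := by
          apply Real.rpow_le_rpow_of_exponent_le (by norm_num)
          gcongr
  have h2 : (η : ℝ) ^ 2 ≤ 2 ^ (2 * x + 2) := by
    rw [hη]
    push_cast
    rw [← Real.rpow_natCast 2 ⌈x⌉₊, ← Real.rpow_natCast _ 2, ← Real.rpow_mul (by norm_num)]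
    apply Real.rpow_le_rpow_of_exponent_le (by norm_num)
    have := Nat.ceil_lt_add_one (show 0 ≤ x by linarith)
    push_cast
    linarith
  have h3 : (768 * lam : ℝ) ≤ 2 ^ (2 * L) := by
    rw [hXL2]; nlinarith
  calc 2 ^ (2 * x) * ((32 * (lam + 1) : ℝ) ^ ρ * (768 * lam * (η : ℝ) ^ 2))
      ≤ 2 ^ (2 * x) * (2 ^ (2 * L * x) * (2 ^ (2 * L) * 2 ^ (2 * x + 2))) := by gcongr
    _ = 2 ^ (2 * x + (2 * L * x + (2 * L + (2 * x + 2)))) := by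
        rw [Real.rpow_add (by norm_num) (2 * x) (2 * L * x + (2 * L + (2 * x + 2))),
          Real.rpow_add (by norm_num) (2 * L * x) (2 * L + (2 * x + 2)),
          Real.rpow_add (by norm_num) (2 * L) (2 * x + 2)]
    _ ≤ 2 ^ (8 * x * L) := by
        apply Real.rpow_le_rpow_of_exponent_le (by norm_num)
        nlinarith [mul_nonneg (sub_nonneg.2 hx1) (sub_nonneg.2 hL27)]

/-- Corollary: shadow property of all squares of a hierarchical system. -/
theorem statement1
    (ℓ n : ℕ) (hn : n = ℓ * ℓ) (hlog : (2 : ℝ) ^ (27 : ℕ) ≤ lg n)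
    (η ρ : ℕ) (hη : η = 2 ^ ⌈Real.sqrt (lg n)⌉₊)
    (hρ : 1 ≤ ρ) (hρ' : (ρ : ℝ) ≤ Real.sqrt (lg n))
    (M : Finset DPair) (hsrc : ∀ m ∈ M, OnTopRow ℓ m.1)
    (Qs : ℕ → Finset SquareSpec) (hH : IsHierSquares ℓ η ρ Qs)
    (hdisj : ∀ h, 1 ≤ h → h ≤ ρ → ∀ Q ∈ Qs h, (1 : ℕ) ∉ Q.1)
    (Mtil : Finset DPair)
    (hMtil : ∀ m, m ∈ Mtil ↔ m ∈ M ∧ ∃ Q ∈ Qs ρ, memSquare m.2 Q)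
    (OPT : ℕ) (hOPT : 0 < OPT)
    (hsol : ∃ M₀ ⊆ Mtil, (OPT : ℝ) / 2 ^ (2 * Real.sqrt (lg n)) ≤ (M₀.card : ℝ) ∧
      NodeDisjointRoutable (gridG ℓ) M₀) :
    ∃ Ms ⊆ Mtil,
      (OPT : ℝ) / 2 ^ (8 * Real.sqrt (lg n) * Real.logb 2 (lg n)) ≤ (Ms.card : ℝ) ∧
      NodeDisjointRoutable (gridG ℓ) Ms ∧
      ∀ h, 1 ≤ h → h ≤ ρ → ∀ Q ∈ Qs h,
        HasShadowProp (1 / (η : ℝ) ^ 2) (η ^ (ρ - h + 3)) Ms Q := by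
  obtain ⟨M₀, hM₀, hcard₀, hrout⟩ := hsol
  have hsrc₀ : ∀ m ∈ M₀, OnTopRow ℓ m.1 := fun m hm => hsrc m ((hMtil m).1 (hM₀ hm)).1
  have hdest₀ : ∀ m ∈ M₀, ∃ Q ∈ Qs ρ, memSquare m.2 Q :=
    fun m hm => ((hMtil m).1 (hM₀ hm)).2
  have hX : (134217728 : ℝ) ≤ lg n := by norm_num at hlog; linarith
  have hℓ0 : ℓ ≠ 0 := by
    rintro rfl
    rw [hn] at hX
    norm_num [lg] at hX
  have hη2 : 2 ≤ η := by
    rw [hη]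
    have h1 : 0 < ⌈Real.sqrt (lg n)⌉₊ := Nat.ceil_pos.2 (Real.sqrt_pos.2 (by linarith))
    exact Nat.le_self_pow h1.ne' 2
  set lam := Nat.log 2 ℓ + 1 with hlamdef
  have hlam1 : 1 ≤ lam := by omega
  have hℓlam : ℓ < 2 ^ lam := Nat.lt_pow_succ_log_self (by norm_num) ℓ
  have hlamX : (lam : ℝ) ≤ lg n / 2 + 1 := by
    have h1 : lg n = 2 * Real.logb 2 ℓ := by
      rw [lg, hn]
      push_cast
      have : (ℓ : ℝ) ≠ 0 := by exact_mod_cast hℓ0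
      rw [Real.logb_mul this this]; ring
    have h2 := Real.natLog_le_logb ℓ 2
    rw [h1, hlamdef]
    push_cast at h2 ⊢
    linarith
  obtain ⟨M₁, hM₁, hc₁, hs₁⟩ := exists_all_levels hℓlam hlam1 (by omega) hsrc₀ hrout hH hdisj
    hdest₀ ρ le_rfl
  have hinj := sources_injOn (fun m hm => hsrc₀ m (hM₁ hm)) (hrout.mono hM₁)
  obtain ⟨M₂, hM₂, hc₂, hs₂⟩ := exists_sampled hinj hlam1 (show 1 ≤ η by omega)
  refine ⟨M₂, (hM₂.trans hM₁).trans hM₀, ?_, hrout.mono (hM₂.trans hM₁), ?_⟩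
  · have h1 : (#M₀ : ℝ) ≤ (32 * (lam + 1) : ℝ) ^ ρ * (768 * lam * (η : ℝ) ^ 2) * #M₂ := by
      have : #M₀ ≤ (32 * (lam + 1)) ^ ρ * (768 * lam * η ^ 2) * #M₂ := by
        rw [mul_assoc]
        exact hc₁.trans (Nat.mul_le_mul_left _ hc₂)
      exact_mod_cast this
    have h2 := loss_bound hlog hlamX hη hρ'
    rw [div_le_iff₀ (by positivity)] at hcard₀ ⊢
    calc (OPT : ℝ) ≤ #M₀ * 2 ^ (2 * Real.sqrt (lg n)) := hcard₀
      _ ≤ (32 * (lam + 1) : ℝ) ^ ρ * (768 * lam * (η : ℝ) ^ 2) * #M₂ *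
          2 ^ (2 * Real.sqrt (lg n)) := by gcongr
      _ = #M₂ * (2 ^ (2 * Real.sqrt (lg n)) *
          ((32 * (lam + 1) : ℝ) ^ ρ * (768 * lam * (η : ℝ) ^ 2))) := by ring
      _ ≤ #M₂ * 2 ^ (8 * Real.sqrt (lg n) * Real.logb 2 (lg n)) := by gcongr
  · intro h hh1 hh2 Q hQ
    have hd : 2 * η ^ 2 ≤ η ^ (ρ - h + 3) := by
      calc 2 * η ^ 2 ≤ η * η ^ 2 := by gcongr
        _ = η ^ 3 := by ring
        _ ≤ η ^ (ρ - h + 3) := Nat.pow_le_pow_right (by omega) (by omega)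
    have key := hs₂ Q _ hd (hs₁ h hh1 hh2 Q hQ)
    unfold HasShadowProp
    have hη0 : (0 : ℝ) < (η : ℝ) ^ 2 := by positivity
    rw [one_div, ← div_eq_inv_mul, le_div_iff₀ hη0, mul_comm]
    exact_mod_cast key
end

section
/- Let G be the ℓ×ℓ grid with n = ℓ² vertices, log₂ n ≥ 2²⁷, η = 2^⌈√(log₂ n)⌉, ρ a positive integer with ρ ≤ √(log₂ n), and d_h = η^{ρ−h+3}. Let H̃ = (Q₁,…,Q_ρ) be a hierarchical system of squares of G disjoint from the top row R*, where R* is restricted to its first ℓ' vertices for some multiple ℓ' of d₁ = η^{ρ+2}. Let OPT > 0 with d₁ ≤ OPT/2^{11√(log₂ n)·log₂ log₂ n}. Suppose M̃* is a set of demand pairs with distinct sources, all lying on R*, whose destinations all belong to H̃, such that all demand pairs of M̃* can be simultaneously routed via node-disjoint paths in G, every square of H̃ has the (1/η²)-shadow property with respect to M̃*, and |M̃*| ≥ OPT/2^{8√(log₂ n)·log₂ log₂ n}. Then there exist a sequence L = (ℓ₁,…,ℓ_ρ) of integers with ℓ₁ > ℓ₂ > … > ℓ_ρ, each an integral power of η,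 and a subset M̃** ⊆ M̃* such that |M̃**| ≥ OPT/2^{10√(log₂ n)·log₂ log₂ n} and M̃** is compatible with L. -/
/-!
Only the columns of the sources matter. Shift them to start at `0`, so that the interval of
length `η ^ k` containing `x` is the fibre of `x ↦ x / η ^ k`; the intervals of all these lengths
form an `η`-ary tree of depth `K = ⌈√(log₂ n)⌉`, because `ℓ ≤ η ^ K`.

The sequence `L` is built from the shortest length `ℓ_ρ` upwards. At each level whole intervals of
the previous level are kept or dropped, so that the levels already treated stay compatible. For one
level with parameter `D = d_h`, call an interval heavy if it has more than `D / 4` points, tiny if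
it has fewer than `D / (16 η)`, and good otherwise. The intervals of the previous level have at most
`D / (4 η)` points, so the next longer ones are not heavy, while the whole row is heavy. In passing
from length `η ^ k` to `η ^ (k+1)`:

* the tiny children of an interval hold together at most `D / 16` points (`sixteen_mul_tiny_le`);
* hence a heavy interval without heavy children has at least `3 D / 16` points in good children, so
  the number of heavy intervals grows by at most `16 / (3 D)` times the number of points in good
  intervals (`heavyIdx_step`);
* the number of points in heavy intervals grows by at most the points in good intervals plus
  `D / 16` for each heavy interval of the new length (`heavyPts_step`).

If every length had at most `g` points in good intervals, then after `j` steps at most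
`j (j + 1) g` points would be in heavy intervals. As all points are at the end, some length has at
least a `1 / K ^ 2` fraction of the points in good intervals (`exists_good_scale`); these are kept.
After all `ρ` levels (`exists_scales`) the loss is at most
`K ^ (2 ρ) ≤ (log₂ n) ^ (2 √(log₂ n)) = 2 ^ (2 √(log₂ n) log₂ log₂ n)`.
-/

open Finset

/-- `I` is an interval of the level-`h` decomposition of the first `W` vertices of the top
row into consecutive intervals of exactly `lh` vertices each (the last possibly shorter). -/
def IsLevelInterval (W lh : ℕ) (I : Finset ℕ) : Prop :=
  ∃ k : ℕ, k * lh < W ∧ I = Finset.Icc (k * lh + 1) (min ((k + 1) * lh) W)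

/-- The set `M` of demand pairs is compatible with the sequence `L = (ℓ₁,…,ℓ_ρ)`:
for every level `h` and every level-`h` interval `I` of the `L`-hierarchical decomposition
of (the first `W` vertices of) the top row, either `I` contains no source of `M`, or
`d_h/(16η) ≤ |I ∩ S(M)| ≤ d_h/4`. -/
def CompatibleWith (W ρ η : ℕ) (L : ℕ → ℕ) (M : Finset DPair) : Prop :=
  ∀ h, 1 ≤ h → h ≤ ρ → ∀ I, IsLevelInterval W (L h) I →
    (∀ m ∈ M, m.1.2 ∉ I) ∨
    ((η : ℝ) ^ (ρ - h + 3) / (16 * η) ≤ ((M.filter (fun m => m.1.2 ∈ I)).card : ℝ) ∧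
      ((M.filter (fun m => m.1.2 ∈ I)).card : ℝ) ≤ (η : ℝ) ^ (ρ - h + 3) / 4)

/-! ### Counting points in the intervals of one length -/

/-- Number of points of `M` (at positions `f`) in the `i`-th interval of length `η ^ k`. -/
def blockCount {α : Type*} (f : α → ℕ) (η : ℕ) (M : Finset α) (k i : ℕ) : ℕ :=
  (M.filter (fun x => f x / η ^ k = i)).card

/-- The `i`-th interval of length `η ^ k` has more than `D / 4` points. -/
def Heavy {α : Type*} (f : α → ℕ) (η D : ℕ) (M : Finset α) (k i : ℕ) : Prop :=
  D < 4 * blockCount f η M k i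

/-- The `i`-th interval of length `η ^ k` has fewer than `D / (16 η)` points. -/
def Tiny {α : Type*} (f : α → ℕ) (η D : ℕ) (M : Finset α) (k i : ℕ) : Prop :=
  16 * η * blockCount f η M k i < D

open Classical in
/-- Indices of the heavy intervals of length `η ^ k`. -/
noncomputable def heavyIdx {α : Type*} (f : α → ℕ) (η D : ℕ) (M : Finset α) (k : ℕ) : Finset ℕ :=
  (M.image (fun x => f x / η ^ k)).filter (Heavy f η D M k)

open Classical in
/-- Points in heavy intervals of length `η ^ k`. -/
noncomputable def heavyPts {α : Type*} (f : α → ℕ) (η D : ℕ) (M : Finset α) (k : ℕ) : Finset α :=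
  M.filter (fun x => Heavy f η D M k (f x / η ^ k))

open Classical in
/-- Points in intervals of length `η ^ k` that are neither heavy nor tiny. -/
noncomputable def goodPts {α : Type*} (f : α → ℕ) (η D : ℕ) (M : Finset α) (k : ℕ) : Finset α :=
  M.filter (fun x => ¬ Heavy f η D M k (f x / η ^ k) ∧ ¬ Tiny f η D M k (f x / η ^ k))

section OneLevel

variable {α : Type*} (f : α → ℕ) (η D : ℕ) (M : Finset α)

lemma div_pow_succ_eq (a k : ℕ) : a / η ^ (k + 1) = a / η ^ k / η := by
  rw [pow_succ, Nat.div_div_eq_div_mul]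

lemma mem_heavyIdx {k i : ℕ} : i ∈ heavyIdx f η D M k ↔ Heavy f η D M k i := by
  unfold heavyIdx
  simp only [Finset.mem_filter, Finset.mem_image, and_iff_right_iff_imp]
  intro h
  have hpos : 0 < (M.filter (fun x => f x / η ^ k = i)).card := by
    unfold Heavy blockCount at h; omega
  obtain ⟨x, hx⟩ := Finset.card_pos.1 hpos
  exact ⟨x, (Finset.mem_filter.1 hx).1, (Finset.mem_filter.1 hx).2⟩

open Classical in
lemma sixteen_mul_tiny_le (hη : 0 < η) (k P : ℕ) :
    16 * (M.filter (fun x => f x / η ^ (k + 1) = P ∧ Tiny f η D M k (f x / η ^ k))).card ≤ D := by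
  set T := M.filter (fun x => f x / η ^ (k + 1) = P ∧ Tiny f η D M k (f x / η ^ k)) with hT
  have hmaps : ∀ x ∈ T, f x / η ^ k ∈ Finset.Ico (η * P) (η * P + η) := by
    intro x hx
    have h := (Finset.mem_filter.1 hx).2.1
    rw [div_pow_succ_eq] at h
    have h1 := Nat.div_add_mod (f x / η ^ k) η
    have h2 := Nat.mod_lt (f x / η ^ k) hη
    rw [h] at h1
    rw [Finset.mem_Ico]; omega
  have hsum := Finset.card_eq_sum_card_fiberwise (f := fun x => f x / η ^ k) hmaps
  have hle : 16 * η * T.card ≤ η * D := by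
    rw [hsum, Finset.mul_sum]
    calc _ ≤ ∑ _i ∈ Finset.Ico (η * P) (η * P + η), D := by
          apply Finset.sum_le_sum
          intro i _
          by_cases hne : (T.filter (fun x => f x / η ^ k = i)).Nonempty
          · obtain ⟨x, hx⟩ := hne
            obtain ⟨hxT, hxi⟩ := Finset.mem_filter.1 hx
            have ht := (Finset.mem_filter.1 hxT).2.2
            rw [hxi] at ht
            refine le_trans (Nat.mul_le_mul_left _ ?_) ht.le
            exact Finset.card_le_card
              (Finset.filter_subset_filter _ (Finset.filter_subset _ _))
          · rw [Finset.not_nonempty_iff_eq_empty.1 hne]; simp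
      _ = η * D := by simp
  exact Nat.le_of_mul_le_mul_left (by linarith [hle] : η * (16 * T.card) ≤ η * D) hη

open Classical in
lemma heavyPts_step (hη : 0 < η) (k : ℕ) :
    16 * (heavyPts f η D M (k + 1)).card ≤
      16 * (heavyPts f η D M k).card + 16 * (goodPts f η D M k).card
        + D * (heavyIdx f η D M (k + 1)).card := by
  set T := M.filter (fun x => Heavy f η D M (k + 1) (f x / η ^ (k + 1)) ∧
    Tiny f η D M k (f x / η ^ k)) with hT
  have hsub : heavyPts f η D M (k + 1) ⊆ heavyPts f η D M k ∪ goodPts f η D M k ∪ T := by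
    intro x hx
    simp only [heavyPts, goodPts, hT, Finset.mem_union, Finset.mem_filter] at hx ⊢
    tauto
  have hc := (Finset.card_le_card hsub).trans (Finset.card_union_le _ _)
  have hc2 := Finset.card_union_le (heavyPts f η D M k) (goodPts f η D M k)
  have hmaps : ∀ x ∈ T, f x / η ^ (k + 1) ∈ heavyIdx f η D M (k + 1) := fun x hx =>
    (mem_heavyIdx f η D M).2 (Finset.mem_filter.1 hx).2.1
  have hTc : 16 * T.card ≤ D * (heavyIdx f η D M (k + 1)).card := by
    rw [Finset.card_eq_sum_card_fiberwise (f := fun x => f x / η ^ (k + 1)) hmaps, Finset.mul_sum,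
      mul_comm D, ← smul_eq_mul (a := Finset.card _)]
    refine Finset.sum_le_card_nsmul _ _ _ fun P _ => ?_
    refine le_trans (Nat.mul_le_mul_left _ (Finset.card_le_card ?_))
      (sixteen_mul_tiny_le f η D M hη k P)
    intro x hx
    simp only [hT, Finset.mem_filter] at hx ⊢
    tauto
  omega

open Classical in
lemma heavyIdx_step (hη : 0 < η) (k : ℕ) :
    3 * D * (heavyIdx f η D M (k + 1)).card ≤
      3 * D * (heavyIdx f η D M k).card + 16 * (goodPts f η D M k).card := by
  -- `New`: heavy intervals none of whose children is heavy
  set New := (heavyIdx f η D M (k + 1)).filter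
    (fun P => ∀ i, i / η = P → ¬ Heavy f η D M k i) with hNew
  have hsub : heavyIdx f η D M (k + 1) ⊆ (heavyIdx f η D M k).image (· / η) ∪ New := by
    intro P hP
    by_cases h : ∀ i, i / η = P → ¬ Heavy f η D M k i
    · exact Finset.mem_union_right _ (Finset.mem_filter.2 ⟨hP, h⟩)
    · push Not at h
      obtain ⟨i, hi, hh⟩ := h
      exact Finset.mem_union_left _
        (Finset.mem_image.2 ⟨i, (mem_heavyIdx f η D M).2 hh, hi⟩)
  have hc := ((Finset.card_le_card hsub).trans (Finset.card_union_le _ _)).trans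
    (Nat.add_le_add_right Finset.card_image_le _)
  have hnew : 3 * D * New.card ≤ 16 * (goodPts f η D M k).card := by
    have hone : ∀ P ∈ New, 3 * D ≤
        16 * ((goodPts f η D M k).filter (fun x => f x / η ^ (k + 1) = P)).card := by
      intro P hP
      obtain ⟨hPh, hPn⟩ := Finset.mem_filter.1 hP
      have hPh' := (mem_heavyIdx f η D M).1 hPh
      have ht := sixteen_mul_tiny_le f η D M hη k P
      have hs : M.filter (fun x => f x / η ^ (k + 1) = P) ⊆
          ((goodPts f η D M k).filter (fun x => f x / η ^ (k + 1) = P)) ∪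
          M.filter (fun x => f x / η ^ (k + 1) = P ∧ Tiny f η D M k (f x / η ^ k)) := by
        intro x hx
        simp only [goodPts, Finset.mem_union, Finset.mem_filter] at hx ⊢
        have := hPn (f x / η ^ k) (by rw [← div_pow_succ_eq]; exact hx.2)
        tauto
      have := (Finset.card_le_card hs).trans (Finset.card_union_le _ _)
      unfold Heavy blockCount at hPh'
      omega
    have h1 : New.card * (3 * D) ≤ ∑ P ∈ New,
        16 * ((goodPts f η D M k).filter (fun x => f x / η ^ (k + 1) = P)).card := by
      rw [← smul_eq_mul]
      exact Finset.card_nsmul_le_sum _ _ _ hone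
    rw [← Finset.mul_sum] at h1
    have h2 : ∑ P ∈ New, ((goodPts f η D M k).filter (fun x => f x / η ^ (k + 1) = P)).card
        ≤ (goodPts f η D M k).card := by
      rw [Finset.sum_card_fiberwise_eq_card_filter]
      exact Finset.card_filter_le _ _
    calc 3 * D * New.card = New.card * (3 * D) := mul_comm _ _
      _ ≤ _ := h1
      _ ≤ _ := Nat.mul_le_mul_left _ h2
  calc 3 * D * (heavyIdx f η D M (k + 1)).card
      ≤ 3 * D * ((heavyIdx f η D M k).card + New.card) := Nat.mul_le_mul_left _ hc
    _ ≤ _ := by rw [mul_add]; exact Nat.add_le_add_left hnew _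

/-- If no interval of length `η ^ k₁` is heavy and each length has at most `g` points in good
intervals, then `j` lengths further at most `j (j + 1) g` points are in heavy intervals. -/
lemma heavyPts_bound (hη : 0 < η) (k₁ : ℕ) (hk₁ : ∀ i, ¬ Heavy f η D M k₁ i) (g : ℝ)
    (hg : ∀ k, k₁ ≤ k → ((goodPts f η D M k).card : ℝ) ≤ g) (j : ℕ) :
    3 * (D : ℝ) * (heavyIdx f η D M (k₁ + j)).card ≤ 16 * j * g ∧
      ((heavyPts f η D M (k₁ + j)).card : ℝ) ≤ j * (j + 1) * g := by
  have hg0 : 0 ≤ g := le_trans (Nat.cast_nonneg _) (hg k₁ le_rfl)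
  induction j with
  | zero =>
    have h1 : heavyIdx f η D M k₁ = ∅ := by
      ext i; simp [mem_heavyIdx, hk₁]
    have h2 : heavyPts f η D M k₁ = ∅ := by
      ext i; simp [heavyPts, hk₁]
    simp [h1, h2]
  | succ j ih =>
    obtain ⟨ih1, ih2⟩ := ih
    have s1 : 3 * (D : ℝ) * (heavyIdx f η D M (k₁ + j + 1)).card ≤
      3 * D * (heavyIdx f η D M (k₁ + j)).card + 16 * (goodPts f η D M (k₁ + j)).card := by
      exact_mod_cast heavyIdx_step f η D M hη (k₁ + j)
    have s2 : 16 * ((heavyPts f η D M (k₁ + j + 1)).card : ℝ) ≤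
      16 * (heavyPts f η D M (k₁ + j)).card + 16 * (goodPts f η D M (k₁ + j)).card
        + D * (heavyIdx f η D M (k₁ + j + 1)).card := by
      exact_mod_cast heavyPts_step f η D M hη (k₁ + j)
    have hgj := hg (k₁ + j) (by omega)
    have hjg : 0 ≤ (j : ℝ) * g := by positivity
    rw [← add_assoc]
    push_cast
    constructor <;> nlinarith

/-! ### Choosing the length for one level -/

/-- One level of the construction: if the intervals of length `η ^ k₀` have at most `D / (4 η)`
points each, then for some longer length the points in good intervals make up at least a
`1 / K ^ 2` fraction of `M`. The last clause records that these are whole intervals, hence each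
shorter interval is kept or dropped entirely. -/
lemma exists_good_scale (hη : 0 < η) (K k₀ : ℕ) (hK : 1 ≤ K) (hf : ∀ x ∈ M, f x < η ^ K)
    (hblock : ∀ i, 4 * η * blockCount f η M k₀ i ≤ D) (hN : D < 4 * M.card) :
    ∃ k, k₀ < k ∧ ∃ M' ⊆ M, M.card ≤ K ^ 2 * M'.card ∧
      (∀ i, blockCount f η M' k i = 0 ∨
        (D ≤ 16 * η * blockCount f η M' k i ∧ 4 * blockCount f η M' k i ≤ D)) ∧
      ∀ k' ≤ k, ∀ i, blockCount f η M' k' i = 0 ∨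
        blockCount f η M' k' i = blockCount f η M k' i := by
  classical
  have hk₁ : ∀ i, ¬ Heavy f η D M (k₀ + 1) i := by
    intro i
    have hsum : blockCount f η M (k₀ + 1) i ≤
        ∑ j ∈ Finset.Ico (η * i) (η * i + η), blockCount f η M k₀ j := by
      unfold blockCount
      rw [Finset.sum_card_fiberwise_eq_card_filter]
      apply Finset.card_le_card
      intro x hx
      obtain ⟨hxM, hxi⟩ := Finset.mem_filter.1 hx
      refine Finset.mem_filter.2 ⟨hxM, ?_⟩
      rw [div_pow_succ_eq] at hxi
      have h1 := Nat.div_add_mod (f x / η ^ k₀) η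
      have h2 := Nat.mod_lt (f x / η ^ k₀) hη
      rw [hxi] at h1
      rw [Finset.mem_Ico]; omega
    have h2 : 4 * η * ∑ j ∈ Finset.Ico (η * i) (η * i + η), blockCount f η M k₀ j ≤ η * D := by
      rw [Finset.mul_sum]
      calc _ ≤ ∑ _j ∈ Finset.Ico (η * i) (η * i + η), D :=
            Finset.sum_le_sum fun j _ => hblock j
        _ = η * D := by simp
    have h3 : η * (4 * blockCount f η M (k₀ + 1) i) ≤ η * D := by
      calc η * (4 * blockCount f η M (k₀ + 1) i) = 4 * η * blockCount f η M (k₀ + 1) i := by ring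
        _ ≤ _ := (Nat.mul_le_mul_left _ hsum).trans h2
    have := Nat.le_of_mul_le_mul_left h3 hη
    unfold Heavy; omega
  have hall : ∀ k, K ≤ k → heavyPts f η D M k = M := by
    intro k hk
    have h0 : ∀ x ∈ M, f x / η ^ k = 0 := fun x hx =>
      Nat.div_eq_of_lt ((hf x hx).trans_le (Nat.pow_le_pow_right hη hk))
    apply Finset.filter_true_of_mem
    intro x hx
    unfold Heavy blockCount
    rw [h0 x hx, Finset.filter_true_of_mem h0]
    exact hN
  have hMpos : 0 < M.card := by omega
  obtain ⟨k, hk, hgood⟩ : ∃ k, k₀ < k ∧ M.card ≤ K ^ 2 * (goodPts f η D M k).card := by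
    by_contra hcon
    push Not at hcon
    have hKpos : (0 : ℝ) < (K : ℝ) ^ 2 := by positivity
    have hb := heavyPts_bound f η D M hη (k₀ + 1) hk₁ ((M.card : ℝ) / K ^ 2) (by
      intro k hk
      rw [le_div_iff₀ hKpos]
      have := (hcon k (by omega)).le
      rw [mul_comm]
      exact_mod_cast this) (K - 1)
    have h2 := hb.2
    rw [hall _ (by omega), Nat.cast_sub hK] at h2
    have hM' : (0 : ℝ) < M.card := by exact_mod_cast hMpos
    have hK' : (1 : ℝ) ≤ K := by exact_mod_cast hK
    rw [mul_div_assoc', le_div_iff₀ hKpos] at h2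
    push_cast at h2
    nlinarith [mul_pos hM' (by linarith : (0 : ℝ) < K)]
  have hcount : ∀ k' ≤ k, ∀ i, blockCount f η (goodPts f η D M k) k' i = 0 ∨
      blockCount f η (goodPts f η D M k) k' i = blockCount f η M k' i := by
    intro k' hk' i
    have hdiv : ∀ a, f a / η ^ k = f a / η ^ k' / η ^ (k - k') := by
      intro a
      rw [Nat.div_div_eq_div_mul, ← pow_add]
      congr 2; omega
    by_cases hgi : ¬ Heavy f η D M k (i / η ^ (k - k')) ∧ ¬ Tiny f η D M k (i / η ^ (k - k'))
    · right
      unfold blockCount goodPts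
      rw [Finset.filter_filter]
      congr 1
      apply Finset.filter_congr
      intro x _
      constructor
      · exact fun h => h.2
      · intro h
        refine ⟨?_, h⟩
        rw [hdiv x, h]; exact hgi
    · left
      unfold blockCount goodPts
      rw [Finset.filter_filter, Finset.card_eq_zero, Finset.filter_eq_empty_iff]
      rintro x _ ⟨h1, h2⟩
      rw [hdiv x, h2] at h1
      exact hgi h1
  refine ⟨k, hk, goodPts f η D M k, Finset.filter_subset _ _, hgood, ?_, hcount⟩
  intro i
  by_cases h0 : blockCount f η (goodPts f η D M k) k i = 0
  · exact Or.inl h0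
  · right
    have heq := (hcount k le_rfl i).resolve_left h0
    obtain ⟨x, hx⟩ := Finset.card_pos.1 (Nat.pos_of_ne_zero h0)
    obtain ⟨hxg, hxi⟩ := Finset.mem_filter.1 hx
    have hg := (Finset.mem_filter.1 hxg).2
    rw [hxi] at hg
    rw [heq]
    unfold Heavy Tiny at hg
    omega

/-! ### All levels -/

/-- The bottom `j` levels of the construction. Levels are numbered from the bottom: level `t` here
has `d = η ^ (t + 2)` and length `η ^ e t`; `e 0` stands for the single points. The last clause is what
the next level needs from the topmost one. -/
lemma exists_scales (hη : 2 ≤ η) (K ρ : ℕ) (hK : 1 ≤ K) (hf : ∀ x ∈ M, f x < η ^ K)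
    (hinj : Set.InjOn f M) (hN : η ^ (ρ + 2) * (K ^ 2) ^ ρ ≤ M.card) (j : ℕ) (hj : j ≤ ρ) :
    ∃ e : ℕ → ℕ, (∀ t < j, e t < e (t + 1)) ∧ ∃ M' ⊆ M, M.card ≤ (K ^ 2) ^ j * M'.card ∧
      (∀ t, 1 ≤ t → t ≤ j → ∀ i, blockCount f η M' (e t) i = 0 ∨
        (η ^ (t + 2) ≤ 16 * η * blockCount f η M' (e t) i ∧
          4 * blockCount f η M' (e t) i ≤ η ^ (t + 2))) ∧
      ∀ i, 4 * blockCount f η M' (e j) i ≤ η ^ (j + 2) := by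
  induction j with
  | zero =>
    refine ⟨fun _ => 0, by simp, M, subset_rfl, by simp, by intro t h1 h2; omega, ?_⟩
    intro i
    have h1 : blockCount f η M 0 i ≤ 1 := by
      unfold blockCount
      rw [Finset.card_le_one]
      intro a ha b hb
      simp only [pow_zero, Nat.div_one, Finset.mem_filter] at ha hb
      exact hinj ha.1 hb.1 (ha.2.trans hb.2.symm)
    have : 2 ^ 2 ≤ η ^ 2 := Nat.pow_le_pow_left hη 2
    simp only [zero_add]
    omega
  | succ j ih =>
    obtain ⟨e, he, M₁, hM₁, hcard, hcomp, hlast⟩ := ih (by omega)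
    have hη0 : 0 < η := by omega
    have hbig : η ^ (ρ + 2) ≤ M₁.card := by
      have h1 : η ^ (ρ + 2) * (K ^ 2) ^ j ≤ η ^ (ρ + 2) * (K ^ 2) ^ ρ :=
        Nat.mul_le_mul_left _ (Nat.pow_le_pow_right (by positivity) (by omega))
      have h2 : (K ^ 2) ^ j * η ^ (ρ + 2) ≤ (K ^ 2) ^ j * M₁.card := by
        rw [mul_comm]; exact (h1.trans hN).trans hcard
      exact Nat.le_of_mul_le_mul_left h2 (by positivity)
    have hlt : η ^ (j + 1 + 2) < 4 * M₁.card := by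
      have h1 : η ^ (j + 1 + 2) ≤ η ^ (ρ + 2) := Nat.pow_le_pow_right hη0 (by omega)
      have h2 : 0 < η ^ (ρ + 2) := by positivity
      omega
    obtain ⟨k, hk, M₂, hM₂, hcard₂, hgood, hkeep⟩ :=
      exists_good_scale f η (η ^ (j + 1 + 2)) M₁ hη0 K (e j) hK (fun x hx => hf x (hM₁ hx))
        (by
          intro i
          calc 4 * η * blockCount f η M₁ (e j) i = η * (4 * blockCount f η M₁ (e j) i) := by ring
            _ ≤ η * η ^ (j + 2) := Nat.mul_le_mul_left _ (hlast i)
            _ = _ := by ring) hlt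
    have hmono : ∀ t ≤ j, e t ≤ e j := by
      intro t ht
      induction ht using Nat.decreasingInduction with
      | self => exact le_rfl
      | of_succ m hm ihm => exact (he m hm).le.trans ihm
    refine ⟨fun t => if t ≤ j then e t else k, ?_, M₂, hM₂.trans hM₁, ?_, ?_, ?_⟩
    · intro t ht
      rcases Nat.lt_or_ge t j with h | h
      · simp [h.le, Nat.succ_le_of_lt h, he t h]
      · obtain rfl : t = j := by omega
        simp [hk]
    · calc M.card ≤ (K ^ 2) ^ j * M₁.card := hcard
        _ ≤ (K ^ 2) ^ j * (K ^ 2 * M₂.card) := Nat.mul_le_mul_left _ hcard₂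
        _ = _ := by ring
    · intro t ht1 ht2 i
      by_cases h : t ≤ j
      · simp only [h, if_true]
        rcases hkeep (e t) ((hmono t h).trans hk.le) i with h0 | h0
        · exact Or.inl h0
        · rw [h0]; exact hcomp t ht1 h i
      · obtain rfl : t = j + 1 := by omega
        simpa using hgood i
    · intro i
      have : ¬ (j + 1 ≤ j) := by omega
      simp only [this, if_false]
      rcases hgood i with h0 | h0
      · rw [h0]; simp
      · exact h0.2

end OneLevel

/-! ### The top row -/

/-- Theorem: partition of the top row. -/
theorem statement2
    (ℓ n : ℕ) (hn : n = ℓ * ℓ) (hlog : (2 : ℝ) ^ (27 : ℕ) ≤ lg n)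
    (η ρ : ℕ) (hη : η = 2 ^ ⌈Real.sqrt (lg n)⌉₊)
    (hρ : 1 ≤ ρ) (hρ' : (ρ : ℝ) ≤ Real.sqrt (lg n))
    (Qs : ℕ → Finset SquareSpec) (hH : IsHierSquares ℓ η ρ Qs)
    (hdisj : ∀ h, 1 ≤ h → h ≤ ρ → ∀ Q ∈ Qs h, (1 : ℕ) ∉ Q.1)
    (ℓ' : ℕ) (hℓ'pos : 0 < ℓ') (hdvd : η ^ (ρ + 2) ∣ ℓ') (hℓ' : ℓ' ≤ ℓ)
    (OPT : ℕ) (hOPT : 0 < OPT)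
    (hOPTd : ((η : ℝ) ^ (ρ + 2)) ≤
      (OPT : ℝ) / 2 ^ (11 * Real.sqrt (lg n) * Real.logb 2 (lg n)))
    (Ms : Finset DPair)
    (hds : DistinctSources Ms)
    (hsrc : ∀ m ∈ Ms, OnTopRow ℓ m.1 ∧ m.1.2 ≤ ℓ')
    (hdest : ∀ m ∈ Ms, ∃ Q ∈ Qs ρ, memSquare m.2 Q)
    (hroute : NodeDisjointRoutable (gridG ℓ) Ms)
    (hshadow : ∀ h, 1 ≤ h → h ≤ ρ → ∀ Q ∈ Qs h,
      HasShadowProp (1 / (η : ℝ) ^ 2) (η ^ (ρ - h + 3)) Ms Q)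
    (hcard : (OPT : ℝ) / 2 ^ (8 * Real.sqrt (lg n) * Real.logb 2 (lg n)) ≤ (Ms.card : ℝ)) :
    ∃ L : ℕ → ℕ,
      (∀ h, 1 ≤ h → h ≤ ρ → ∃ k : ℕ, L h = η ^ k) ∧
      (∀ h h', 1 ≤ h → h < h' → h' ≤ ρ → L h' < L h) ∧
      ∃ Mss ⊆ Ms,
        (OPT : ℝ) / 2 ^ (10 * Real.sqrt (lg n) * Real.logb 2 (lg n)) ≤ (Mss.card : ℝ) ∧
        CompatibleWith ℓ' ρ η L Mss := by
  set s := Real.sqrt (lg n) with hs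
  set A := Real.logb 2 (lg n) with hA
  have hlg0 : (0 : ℝ) < lg n := lt_of_lt_of_le (by norm_num) hlog
  have hss : s * s = lg n := Real.mul_self_sqrt hlg0.le
  have hs2 : (2 : ℝ) ≤ s := Real.le_sqrt_of_sq_le (le_trans (by norm_num) hlog)
  have hA0 : 0 ≤ A := Real.logb_nonneg (by norm_num) (le_trans (by norm_num) hlog)
  have h2A : (2 : ℝ) ^ A = lg n := Real.rpow_logb (by norm_num) (by norm_num) hlg0
  have hη2 : 2 ≤ η := by
    rw [hη]
    have : ⌈s⌉₊ ≠ 0 := (Nat.ceil_pos.2 (by linarith)).ne'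
    exact Nat.le_self_pow this 2
  set K := ⌈s⌉₊ with hK
  have hsK : s ≤ K := Nat.le_ceil s
  have hKs : (K : ℝ) ≤ s + 1 := (Nat.ceil_lt_add_one (by linarith)).le
  have hK1 : 1 ≤ K := Nat.ceil_pos.2 (by linarith)
  have hKlg : (K : ℝ) ≤ lg n := by nlinarith
  -- the total loss over all levels
  have hloss : (((K : ℝ) ^ 2) ^ ρ) ≤ 2 ^ (2 * s * A) := by
    calc ((K : ℝ) ^ 2) ^ ρ ≤ ((lg n) ^ 2) ^ ρ := by gcongr
      _ = 2 ^ (A * (2 * ρ)) := by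
          rw [Real.rpow_mul (by norm_num), h2A, ← pow_mul, ← Real.rpow_natCast]
          push_cast; rfl
      _ ≤ 2 ^ (2 * s * A) := by
          apply Real.rpow_le_rpow_of_exponent_le (by norm_num)
          nlinarith
  have hsA : 0 ≤ s * A := by positivity
  have hN : η ^ (ρ + 2) * (K ^ 2) ^ ρ ≤ Ms.card := by
    have : (η : ℝ) ^ (ρ + 2) * ((K : ℝ) ^ 2) ^ ρ ≤ Ms.card := by
      calc (η : ℝ) ^ (ρ + 2) * ((K : ℝ) ^ 2) ^ ρ
          ≤ (OPT : ℝ) / 2 ^ (11 * s * A) * 2 ^ (2 * s * A) := by gcongr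
        _ = (OPT : ℝ) / 2 ^ (9 * s * A) := by
            rw [show 11 * s * A = 9 * s * A + 2 * s * A by ring, Real.rpow_add (by norm_num)]
            field_simp
        _ ≤ (OPT : ℝ) / 2 ^ (8 * s * A) := by
            gcongr
            · norm_num
            · norm_num
        _ ≤ _ := hcard
    exact_mod_cast this
  have hℓK : ℓ ≤ η ^ K := by
    have hnpos : (0 : ℝ) < n := by
      rcases Nat.eq_zero_or_pos n with h | h
      · rw [h] at hlg0; simp [lg] at hlg0
      · exact_mod_cast h
    have hn2 : (n : ℝ) = 2 ^ (lg n) := (Real.rpow_logb (by norm_num) (by norm_num) hnpos).symm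
    have h1 : (n : ℝ) ≤ (η : ℝ) ^ K := by
      rw [hn2, hη]
      push_cast
      rw [← pow_mul, ← Real.rpow_natCast]
      apply Real.rpow_le_rpow_of_exponent_le (by norm_num)
      push_cast
      nlinarith
    have h2 : n ≤ η ^ K := by exact_mod_cast h1
    exact le_trans (hn ▸ Nat.le_mul_self ℓ) h2
  obtain ⟨e, he, M', hM', hM'card, hcomp, -⟩ :=
    exists_scales (fun m : DPair => m.1.2 - 1) η Ms hη2 K ρ hK1
      (by
        intro m hm
        have := (hsrc m hm).1.2
        show m.1.2 - 1 < _
        omega)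
      (by
        intro a ha b hb hab
        have h1 := (hsrc a ha).1
        have h2 := (hsrc b hb).1
        refine hds a ha b hb (Prod.ext (h1.1.trans h2.1.symm) ?_)
        have h3 := h1.2.1
        have h4 := h2.2.1
        have hab' : a.1.2 - 1 = b.1.2 - 1 := hab
        omega) hN ρ le_rfl
  have hemono : ∀ t t', t < t' → t' ≤ ρ → e t < e t' := by
    intro t t' htt'
    induction htt' with
    | refl => exact fun h => he t h
    | step h ih => exact fun h' => (ih (by omega)).trans (he _ (by omega))
  refine ⟨fun h => η ^ e (ρ - h + 1), fun h _ _ => ⟨_, rfl⟩, ?_, M', hM', ?_, ?_⟩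
  · intro h h' h1 h2 h3
    exact Nat.pow_lt_pow_right (by omega) (hemono _ _ (by omega) (by omega))
  · have hc : (Ms.card : ℝ) ≤ ((K : ℝ) ^ 2) ^ ρ * M'.card := by exact_mod_cast hM'card
    have hc2 : (OPT : ℝ) / 2 ^ (8 * s * A) ≤ 2 ^ (2 * s * A) * M'.card :=
      (hcard.trans hc).trans (by gcongr)
    rw [show 10 * s * A = 8 * s * A + 2 * s * A by ring, Real.rpow_add (by norm_num), ← div_div,
      div_le_iff₀ (by positivity)]
    rwa [mul_comm _ (M'.card : ℝ)] at hc2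
  · rintro h h1 h2 I ⟨k, hk, rfl⟩
    have hexp : ρ - h + 1 + 2 = ρ - h + 3 := by omega
    have hpos : 0 < η ^ e (ρ - h + 1) := by positivity
    -- columns start at `1`, positions at `0`
    have hmem : ∀ m ∈ M', (m.1.2 ∈ Finset.Icc (k * η ^ e (ρ - h + 1) + 1)
        (min ((k + 1) * η ^ e (ρ - h + 1)) ℓ') ↔ (m.1.2 - 1) / η ^ e (ρ - h + 1) = k) := by
      intro m hm
      have hm1 := (hsrc m (hM' hm)).1.2.1
      have hm2 := (hsrc m (hM' hm)).2
      rw [Finset.mem_Icc, le_min_iff, Nat.div_eq_iff hpos, add_mul]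
      omega
    have hfil : (M'.filter (fun m => m.1.2 ∈ Finset.Icc (k * η ^ e (ρ - h + 1) + 1)
        (min ((k + 1) * η ^ e (ρ - h + 1)) ℓ'))).card =
        blockCount (fun m : DPair => m.1.2 - 1) η M' (e (ρ - h + 1)) k := by
      unfold blockCount
      rw [Finset.filter_congr hmem]
    rw [hfil]
    rcases hcomp (ρ - h + 1) (by omega) (by omega) k with h0 | ⟨hlo, hhi⟩
    · left
      intro m hm hmI
      rw [← hfil, Finset.card_eq_zero, Finset.filter_eq_empty_iff] at h0
      exact h0 hm hmI
    · right
      rw [hexp] at hlo hhi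
      have hη0 : (0 : ℝ) < η := by exact_mod_cast (by omega : 0 < η)
      constructor
      · rw [div_le_iff₀ (by positivity), mul_comm]
        exact_mod_cast hlo
      · rw [le_div_iff₀ (by norm_num), mul_comm]
        exact_mod_cast hhi
end

section
/- Let G be the ℓ×ℓ grid with top row R*, let η > 16 and d ≥ 1 be integers, let J be a partition of R* into consecutive intervals, and let M be a set of demand pairs with distinct sources, all lying on R*, such that every interval I ∈ J that contains at least one source of M satisfies |I ∩ S(M)| ≥ d/(16η). Let Q be a square sub-grid of G of side d that has the (1/η²)-shadow property with respect to M. Then the sources of all demand pairs of M whose destinations lie in Q are contained in the union of at most two intervals of J. -/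
/-!
Let `p` and `q` be the pairs with destination in `Q` whose sources are leftmost and rightmost,
and let `I₁`, `I₂` be the intervals of `J` containing those two sources. If some pair with
destination in `Q` had its source in a third interval `I`, then `I`, being an interval that meets
the shadow of `Q` but contains neither endpoint, would lie entirely inside the shadow. The shadow
would thus contain at least `d / (16 * η)` sources, which exceeds `d / η ^ 2` because `η > 16`.
-/

open Finset

/-- Observation: squares spanning few intervals.
If `J` is a partition of the top row into consecutive intervals, each interval of `J`
containing a source of `M` contains at least `d/(16η)` sources, and a side-`d` square `Q`
has the `(1/η²)`-shadow property with respect to `M`, then the sources of all demand pairs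
of `M` whose destinations lie in `Q` are contained in at most two intervals of `J`. -/
theorem statement3
    (ℓ η d : ℕ) (hη : 16 < η) (hd : 1 ≤ d)
    (J : Finset (Finset ℕ))
    (hJint : ∀ I ∈ J, ∃ a b : ℕ, 1 ≤ a ∧ a ≤ b ∧ b ≤ ℓ ∧ I = Finset.Icc a b)
    (hJpart : ∀ x : ℕ, 1 ≤ x → x ≤ ℓ → ∃! I, I ∈ J ∧ x ∈ I)
    (M : Finset DPair) (hsrc : ∀ m ∈ M, OnTopRow ℓ m.1)
    (hds : DistinctSources M)
    (hfill : ∀ I ∈ J, (∃ m ∈ M, m.1.2 ∈ I) →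
      (d : ℝ) / (16 * η) ≤ ((M.filter (fun m => m.1.2 ∈ I)).card : ℝ))
    (Q : SquareSpec)
    (hQr : ∃ a b : ℕ, 1 ≤ a ∧ a ≤ b ∧ b ≤ ℓ ∧ Q.1 = Finset.Icc a b)
    (hQc : ∃ a b : ℕ, 1 ≤ a ∧ a ≤ b ∧ b ≤ ℓ ∧ Q.2 = Finset.Icc a b)
    (hQd : Q.1.card = d ∧ Q.2.card = d)
    (hshadow : HasShadowProp (1 / (η : ℝ) ^ 2) d M Q) :
    ∃ I₁ ∈ J, ∃ I₂ ∈ J, ∀ m ∈ M, memSquare m.2 Q → m.1.2 ∈ I₁ ∪ I₂ := by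
  have hη' : (16 : ℝ) < η := by exact_mod_cast hη
  have hd' : (1 : ℝ) ≤ d := by exact_mod_cast hd
  by_cases hT : (M.filter (fun m => memSquare m.2 Q)).Nonempty
  · -- `p` and `q` are the endpoints of the shadow of `Q`.
    obtain ⟨p, hp, hpmin⟩ := Finset.exists_min_image _ (fun m : DPair => m.1.2) hT
    obtain ⟨q, hq, hqmax⟩ := Finset.exists_max_image _ (fun m : DPair => m.1.2) hT
    rw [Finset.mem_filter] at hp hq
    obtain ⟨I₁, ⟨hI₁, hpI₁⟩, hu₁⟩ := hJpart p.1.2 (hsrc p hp.1).2.1 (hsrc p hp.1).2.2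
    obtain ⟨I₂, ⟨hI₂, hqI₂⟩, hu₂⟩ := hJpart q.1.2 (hsrc q hq.1).2.1 (hsrc q hq.1).2.2
    refine ⟨I₁, hI₁, I₂, hI₂, fun m hm hmQ => ?_⟩
    by_contra hmem
    rw [Finset.mem_union, not_or] at hmem
    obtain ⟨I, ⟨hI, hmI⟩, -⟩ := hJpart m.1.2 (hsrc m hm).2.1 (hsrc m hm).2.2
    have hpm : p.1.2 ≤ m.1.2 := hpmin m (Finset.mem_filter.2 ⟨hm, hmQ⟩)
    have hmq : m.1.2 ≤ q.1.2 := hqmax m (Finset.mem_filter.2 ⟨hm, hmQ⟩)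
    have hpI : p.1.2 ∉ I := fun h => hmem.1 (hu₁ I ⟨hI, h⟩ ▸ hmI)
    have hqI : q.1.2 ∉ I := fun h => hmem.2 (hu₂ I ⟨hI, h⟩ ▸ hmI)
    have hcard : (M.filter (fun m => m.1.2 ∈ I)).card ≤ shadowCount M Q := by
      refine Finset.card_le_card fun n hn => ?_
      rw [Finset.mem_filter] at hn ⊢
      obtain ⟨a, b, -, -, -, rfl⟩ := hJint I hI
      rw [Finset.mem_Icc] at hpI hqI hmI hn
      exact ⟨hn.1, p, hp.1, hp.2, q, hq.1, hq.2, by omega, by omega⟩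
    have hcard' : ((M.filter (fun m => m.1.2 ∈ I)).card : ℝ) ≤ shadowCount M Q := by
      exact_mod_cast hcard
    have hle : (d : ℝ) / (16 * η) ≤ 1 / (η : ℝ) ^ 2 * d :=
      (hfill I hI ⟨m, hm, hmI⟩).trans (hcard'.trans hshadow)
    have hlt : 1 / (η : ℝ) ^ 2 * d < (d : ℝ) / (16 * η) := by
      rw [one_div_mul_eq_div]
      apply div_lt_div_of_pos_left <;> nlinarith
    exact absurd hle hlt.not_ge
  · -- No destination lies in `Q`: any interval works, and one exists since the top row is nonempty.
    obtain ⟨a, b, ha, hab, hb, -⟩ := hQr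
    obtain ⟨I, ⟨hI, -⟩, -⟩ := hJpart a ha (hab.trans hb)
    exact ⟨I, hI, I, hI, fun m hm hmQ => absurd ⟨m, Finset.mem_filter.2 ⟨hm, hmQ⟩⟩ hT⟩
end
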